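/- Let n ≥ 3, s₁, s₂ ∈ (0,1), a₁, a₂ ≥ 0, and let Ω ⊂ ℝⁿ be a bounded C² domain that is strictly star-shaped. Let α, β, p, q > 1 and λ₁, λ₂, δ ∈ ℝ, and set 2* = 2n/(n−2). Suppose u, v ∈ C²(Ω) ∩ C(ℝⁿ) solve the system −Δu + a₁(−Δ)^{s₁}u = λ₁|u|^{p−2}u + δα|u|^{α−2}u|v|^{β} in Ω, −Δv + a₂(−Δ)^{s₂}v = λ₂|v|^{q−2}v + δβ|u|^{α}|v|^{β−2}v in Ω, with u = 0 and v = 0 in Ωᶜ. Assume δ[(α+β) − 2*] ≥ 0, λ₁(p − 2*) ≥ 0, and λ₂(q − 2*) ≥ 0. If moreover λ₁(p − 2*) > 0 and λ₂(q − 2*) > 0, then u ≡ 0 and v ≡ 0 in ℝⁿ. Furthermore, under the non-strict inequalities, neither u nor v can be strictly positive in Ω. -/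

import Mathlib

open MeasureTheory Real Set Metric Bornology Filter
open scoped RealInnerProductSpace ENNReal NNReal Pointwise

noncomputable section

abbrev En (n : ℕ) : Type := EuclideanSpace ℝ (Fin n)

/-- The normalizing constant `c_{n,s}`. -/
def cK (n : ℕ) (s : ℝ) : ℝ :=
  s * (2 : ℝ) ^ (2 * s) * Real.Gamma (((n : ℝ) + 2 * s) / 2) /
    (Real.pi ^ ((n : ℝ) / 2) * Real.Gamma (1 - s))

/-- The fractional Laplacian `(-Δ)ˢ u (x)`. -/
def fracLap (n : ℕ) (s : ℝ) (u : En n → ℝ) (x : En n) : ℝ :=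
  (cK n s / 2) * ∫ y : En n, (2 * u x - u (x + y) - u (x - y)) / ‖y‖ ^ ((n : ℝ) + 2 * s)

/-- `(-Δ)^{s/2} u (x)`, defined via the non-symmetrized integral. -/
def fracHalf (n : ℕ) (s : ℝ) (u : En n → ℝ) (x : En n) : ℝ :=
  cK n (s / 2) * ∫ z : En n, (u x - u (x + z)) / ‖z‖ ^ ((n : ℝ) + s)

/-- The squared Gagliardo-type seminorm `[u]_s²`. -/
def seminormSsq (n : ℕ) (s : ℝ) (u : En n → ℝ) : ℝ :=
  (cK n s / 2) * ∫ p : En n × En n, (u p.1 - u p.2) ^ 2 / ‖p.1 - p.2‖ ^ ((n : ℝ) + 2 * s)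

/-- The squared seminorm `[u]₁² = ∫_Ω |∇u|²`. -/
def seminorm1sq (n : ℕ) (Ω : Set (En n)) (u : En n → ℝ) : ℝ :=
  ∫ x in Ω, ‖gradient u x‖ ^ 2

/-- The Laplacian as the trace of the Hessian. -/
def lap (n : ℕ) (u : En n → ℝ) (x : En n) : ℝ :=
  ∑ i : Fin n, fderiv ℝ (fun y => fderiv ℝ u y (EuclideanSpace.single i 1)) x
    (EuclideanSpace.single i 1)

/-- The Hessian `D²u(x)` as a continuous bilinear-type map; `‖hess n u x‖` is its operator
norm. -/
def hess (n : ℕ) (u : En n → ℝ) (x : En n) : En n →L[ℝ] En n →L[ℝ] ℝ :=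
  fderiv ℝ (fderiv ℝ u) x

/-- A bounded C² domain `Ω ⊆ ℝⁿ`: a bounded open connected set whose boundary is a C²
hypersurface, described by a global C² defining function with nonvanishing gradient
on the boundary. -/
structure C2Domain (n : ℕ) where
  carrier : Set (En n)
  phi : En n → ℝ
  phi_smooth : ContDiff ℝ 2 phi
  carrier_eq : carrier = {x | phi x < 0}
  grad_ne : ∀ x ∈ frontier carrier, gradient phi x ≠ 0
  bounded : IsBounded carrier
  connected : IsConnected carrier

/-- The outward unit normal `ν` on `∂Ω`. -/
def C2Domain.nu {n : ℕ} (D : C2Domain n) (x : En n) : En n :=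
  ‖gradient D.phi x‖⁻¹ • gradient D.phi x

/-- The normal derivative `∂u/∂ν` at a boundary point (the derivative from inside). -/
def normalDeriv {n : ℕ} (D : C2Domain n) (u : En n → ℝ) (x : En n) : ℝ :=
  fderivWithin ℝ u (closure D.carrier) x (D.nu x)

/-- `Ω` is strictly star-shaped with respect to `z₀`. -/
def C2Domain.StrictlyStarShapedAt {n : ℕ} (D : C2Domain n) (z₀ : En n) : Prop :=
  z₀ ∈ D.carrier ∧ ∀ x ∈ frontier D.carrier, 0 < ⟪x - z₀, D.nu x⟫

/-- `Ω` is strictly star-shaped. -/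
def C2Domain.StrictlyStarShaped {n : ℕ} (D : C2Domain n) : Prop :=
  ∃ z₀, D.StrictlyStarShapedAt z₀

/-- The Pohozaev boundary term `∫_{∂Ω} (∂u/∂ν)² (x·ν(x)) dS`, with `dS` the
`(n-1)`-dimensional Hausdorff measure on `∂Ω`. -/
def pohozaevBoundary {n : ℕ} (D : C2Domain n) (u : En n → ℝ) : ℝ :=
  ∫ x in frontier D.carrier, (normalDeriv D u x) ^ 2 * ⟪x, D.nu x⟫ ∂ μH[(n : ℝ) - 1]

/-- Condition (★). -/
def StarCond (n : ℕ) (s : ℝ) (Ω : Set (En n)) (u : En n → ℝ) : Prop :=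
  ∃ C > 0, ∃ γ ∈ Set.Ioo (0:ℝ) 1, ∀ x ∈ Ω,
    ‖hess n u x‖ ≤ C * infDist x (frontier Ω) ^ (γ - 1) ∧
    |u x| ≤ C * infDist x (frontier Ω) ∧
    |fracLap n s u x| ≤ C * (1 + (if s < 1/2 then 1 else 0)
      + (if s = 1/2 then |Real.log (infDist x (frontier Ω))| else 0)
      + (if 1/2 < s then infDist x (frontier Ω) ^ (1 - 2*s) else 0))

/-!
Nothing is known about `u` at `∂Ω` beyond continuity, so the Pohozaev argument is run with
difference quotients. The equation is tested against soft truncations of `u`, and against the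
dilates `u (l ·)`, `l > 1`, whose supports star-shapedness puts compactly inside `Ω`. Comparing
the two bounds a layer energy of `u` near `∂Ω`, plus `1 - l ^ (2s - 2)` times the fractional energy,
by a multiple of `∫ f u - l ^ ((n - 2) / 2) ∫ f u (l ·)`. Summing over the system, dividing by
`l - 1` and letting `l → 1⁺` gives Pohozaev's inequality
`0 ≤ n ∫ F(u, v) - (n - 2) / 2 ∫ DF(u, v)(u, v)` for the potential `F` of the nonlinearity.

The sign conditions make each term on the right nonpositive, hence zero; in the strict case this is
`u = v = 0`. Otherwise the fractional energies vanish and the layer energies are `o(l - 1)`, which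
says weakly that the normal derivative of the solution is zero on `∂Ω`. Extended by zero, the
solution then satisfies a Carleman inequality with weight `exp (τ xᵢ)` across `∂Ω`, and since its
Laplacian is controlled by the solution itself, `τ → ∞` forces it to vanish.
-/

open scoped Topology

section TranslationForm

variable {E : Type*}

/-- The symmetric second difference `2u(x) - u(x+y) - u(x-y)`, the numerator in the integrand of
the fractional Laplacian. -/
def secondDiff [AddCommGroup E] (u : E → ℝ) (x y : E) : ℝ := 2 * u x - u (x + y) - u (x - y)

/-- The bilinear form `∫ (u(x+y) - u(x)) (w(x+y) - w(x)) dx` at a fixed translation `y`: both the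
discrete Dirichlet form and the Gagliardo form are averages of it over `y`. -/
def translationForm [AddCommGroup E] [MeasureSpace E] (u w : E → ℝ) (y : E) : ℝ :=
  ∫ x, (u (x + y) - u x) * (w (x + y) - w x)

lemma translationForm_self_nonneg [AddCommGroup E] [MeasureSpace E] (u : E → ℝ) (y : E) :
    0 ≤ translationForm u u y :=
  integral_nonneg fun _ => mul_self_nonneg _

lemma integral_linearComb_three {X : Type*} [MeasurableSpace X] {μ : Measure X} {f g h : X → ℝ}
    (hf : Integrable f μ) (hg : Integrable g μ) (hh : Integrable h μ) (a b c : ℝ) :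
    ∫ x, (a * f x + b * g x + c * h x) ∂μ
      = a * (∫ x, f x ∂μ) + b * (∫ x, g x ∂μ) + c * ∫ x, h x ∂μ := by
  have hfg : Integrable (fun x => a * f x + b * g x) μ := (hf.const_mul a).add (hg.const_mul b)
  rw [integral_add hfg (hh.const_mul c), integral_add (hf.const_mul a) (hg.const_mul b)]
  simp only [integral_const_mul]

lemma integrable_mul_of_hasCompactSupport [TopologicalSpace E] [MeasurableSpace E]
    [OpensMeasurableSpace E] {μ : Measure E} [IsFiniteMeasureOnCompacts μ] {u w : E → ℝ}
    (hu : Continuous u) (hw : Continuous w) (cw : HasCompactSupport w) :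
    Integrable (fun x => u x * w x) μ :=
  (hu.mul hw).integrable_of_hasCompactSupport cw.mul_left

lemma hasCompactSupport_comp_add_right [TopologicalSpace E] [AddGroup E] [ContinuousAdd E]
    {u : E → ℝ} (cu : HasCompactSupport u) (y : E) : HasCompactSupport fun x => u (x + y) :=
  cu.comp_homeomorph (Homeomorph.addRight y)

section AddGroup

variable [NormedAddCommGroup E] [MeasureSpace E] [BorelSpace E]
  [IsFiniteMeasureOnCompacts (volume : Measure E)] {u w : E → ℝ}

lemma integrable_translationForm (hu : Continuous u) (hw : Continuous w)
    (cw : HasCompactSupport w) (y : E) :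
    Integrable fun x => (u (x + y) - u x) * (w (x + y) - w x) :=
  integrable_mul_of_hasCompactSupport (u := fun x => u (x + y) - u x)
    (w := fun x => w (x + y) - w x) (by fun_prop) (by fun_prop)
    ((hasCompactSupport_comp_add_right cw y).sub cw)

lemma translationForm_sub_mul_self (hu : Continuous u) (cu : HasCompactSupport u)
    (hw : Continuous w) (cw : HasCompactSupport w) (c : ℝ) (y : E) :
    translationForm (fun x => u x - c * w x) (fun x => u x - c * w x) y
      = translationForm u u y - 2 * c * translationForm u w y + c ^ 2 * translationForm w w y := by
  have h := integral_linearComb_three (integrable_translationForm hu hu cu y)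
    (integrable_translationForm hu hw cw y) (integrable_translationForm hw hw cw y)
    1 (-(2 * c)) (c ^ 2)
  unfold translationForm
  rw [sub_eq_add_neg, ← neg_mul, ← one_mul (∫ x, (u (x + y) - u x) * (u (x + y) - u x)), ← h]
  exact integral_congr_ae (.of_forall fun x => by ring)

lemma stronglyMeasurable_translationForm [ProperSpace E] (hu : Continuous u) (hw : Continuous w) :
    StronglyMeasurable (translationForm u w) := by
  have : StronglyMeasurable fun p : E × E =>
      (u (p.2 + p.1) - u p.2) * (w (p.2 + p.1) - w p.2) :=
    Continuous.stronglyMeasurable (by fun_prop)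
  exact this.integral_prod_right' (ν := volume)

variable [(volume : Measure E).IsAddRightInvariant]

/-- Summation by parts: each translate is moved from `u` to `w`. -/
lemma integral_secondDiff_mul (hu : Continuous u) (hw : Continuous w)
    (cw : HasCompactSupport w) (y : E) :
    ∫ x, secondDiff u x y * w x = translationForm u w y := by
  have huw : Integrable fun x => u x * w x := integrable_mul_of_hasCompactSupport hu hw cw
  have hu₁w : Integrable fun x => u (x + y) * w x :=
    integrable_mul_of_hasCompactSupport (u := fun x => u (x + y)) (by fun_prop) hw cw
  have hu₂w : Integrable fun x => u (x - y) * w x :=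
    integrable_mul_of_hasCompactSupport (u := fun x => u (x - y)) (by fun_prop) hw cw
  have huw₁ : Integrable fun x => u x * w (x + y) :=
    integrable_mul_of_hasCompactSupport (w := fun x => w (x + y)) hu (by fun_prop)
      (hasCompactSupport_comp_add_right cw y)
  have hu₁w₁ : Integrable fun x => u (x + y) * w (x + y) := huw.comp_add_right y
  have hshift : ∫ x, u x * w (x + y) = ∫ x, u (x - y) * w x := by
    rw [← integral_add_right_eq_self (fun x => u (x - y) * w x) y]
    simp only [add_sub_cancel_right]
  have hleft : ∫ x, secondDiff u x y * w x
      = 2 * (∫ x, u x * w x) + -1 * (∫ x, u (x + y) * w x) + -1 * ∫ x, u (x - y) * w x := by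
    rw [← integral_linearComb_three huw hu₁w hu₂w]
    exact integral_congr_ae (.of_forall fun x => by simp only [secondDiff]; ring)
  have hright : translationForm u w y = (∫ x, u (x + y) * w (x + y)) + ((∫ x, u x * w x)
      - (∫ x, u (x + y) * w x) - ∫ x, u x * w (x + y)) := by
    have h₁ : Integrable fun x => u x * w x - u (x + y) * w x := huw.sub hu₁w
    have h₂ : Integrable fun x => u x * w x - u (x + y) * w x - u x * w (x + y) := h₁.sub huw₁
    rw [← integral_sub huw hu₁w, ← integral_sub h₁ huw₁, ← integral_add hu₁w₁ h₂]
    exact integral_congr_ae (.of_forall fun x => by ring)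
  rw [hleft, hright, hshift, integral_add_right_eq_self (fun x => u x * w x) y]
  ring

lemma translationForm_self_add_self_le (hw : Continuous w) (cw : HasCompactSupport w) (y : E) :
    translationForm w w (y + y) ≤ 4 * translationForm w w y := by
  have hint := integrable_translationForm hw hw cw y
  have hshift : ∫ x, (w (x + y + y) - w (x + y)) * (w (x + y + y) - w (x + y))
      = translationForm w w y :=
    integral_add_right_eq_self (fun x => (w (x + y) - w x) * (w (x + y) - w x)) y
  calc translationForm w w (y + y)
      ≤ ∫ x, (2 * ((w (x + y + y) - w (x + y)) * (w (x + y + y) - w (x + y)))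
          + 2 * ((w (x + y) - w x) * (w (x + y) - w x))) := by
        refine integral_mono (integrable_translationForm hw hw cw _)
          (((hint.comp_add_right y).const_mul 2).add (hint.const_mul 2)) fun x => ?_
        simp only [← add_assoc]
        nlinarith [sq_nonneg ((w (x + y + y) - w (x + y)) - (w (x + y) - w x))]
    _ = 4 * translationForm w w y := by
        rw [integral_add ((hint.comp_add_right y).const_mul 2) (hint.const_mul 2),
          integral_const_mul, integral_const_mul, hshift, translationForm]
        ring

end AddGroup

lemma translationForm_comp_smul [NormedAddCommGroup E] [NormedSpace ℝ E] [FiniteDimensional ℝ E]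
    [MeasureSpace E] [BorelSpace E] [(volume : Measure E).IsAddHaarMeasure] (u : E → ℝ) {l : ℝ}
    (hl : 0 < l) (y : E) :
    translationForm (fun x => u (l • x)) (fun x => u (l • x)) y
      = (l ^ Module.finrank ℝ E)⁻¹ * translationForm u u (l • y) := by
  have := Measure.integral_comp_smul (volume : Measure E)
    (fun x => (u (x + l • y) - u x) * (u (x + l • y) - u x)) l
  rw [abs_of_pos (by positivity), smul_eq_mul] at this
  simp only [translationForm, ← this, smul_add]

end TranslationForm

section SoftThreshold

/-- Soft thresholding: `t` moved towards `0` by `ε`, and set to `0` where `|t| ≤ ε`. Composed with a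
function vanishing outside an open set, it produces a test function supported inside that set. -/
def softThreshold (ε t : ℝ) : ℝ := t - max (-ε) (min ε t)

variable {ε : ℝ}

@[fun_prop]
lemma continuous_softThreshold (ε : ℝ) : Continuous (softThreshold ε) := by
  unfold softThreshold; fun_prop

lemma softThreshold_eq_zero {t : ℝ} (h : |t| ≤ ε) : softThreshold ε t = 0 := by
  rw [abs_le] at h
  rw [softThreshold, min_eq_right h.2, max_eq_right h.1, sub_self]

lemma softThreshold_zero (hε : 0 ≤ ε) : softThreshold ε 0 = 0 :=
  softThreshold_eq_zero (by rwa [abs_zero])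

lemma abs_softThreshold_sub_self_le (hε : 0 ≤ ε) (t : ℝ) : |softThreshold ε t - t| ≤ ε := by
  rw [softThreshold, sub_sub_cancel_left, abs_neg, abs_le]
  exact ⟨le_max_left _ _, max_le (by linarith) (min_le_left _ _)⟩

lemma softThreshold_sub_sq_le (a b : ℝ) :
    (softThreshold ε a - softThreshold ε b) * (softThreshold ε a - softThreshold ε b)
      ≤ (a - b) * (softThreshold ε a - softThreshold ε b) := by
  have hclamp : Monotone fun t : ℝ => max (-ε) (min ε t) := fun a b h =>
    max_le_max le_rfl (min_le_min le_rfl h)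
  have hsoft : Monotone (softThreshold ε) := fun a b h => by unfold softThreshold; grind
  have hmono : 0 ≤ (max (-ε) (min ε a) - max (-ε) (min ε b))
      * (softThreshold ε a - softThreshold ε b) := by
    rcases le_total a b with h | h
    · exact mul_nonneg_of_nonpos_of_nonpos (sub_nonpos.2 (hclamp h)) (sub_nonpos.2 (hsoft h))
    · exact mul_nonneg (sub_nonneg.2 (hclamp h)) (sub_nonneg.2 (hsoft h))
  unfold softThreshold at *
  linarith

lemma abs_softThreshold_le (hε : 0 ≤ ε) (t : ℝ) : |softThreshold ε t| ≤ |t| := by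
  have h := softThreshold_sub_sq_le (ε := ε) t 0
  rw [softThreshold_zero hε, sub_zero, sub_zero, ← abs_mul_abs_self] at h
  have h' : |softThreshold ε t| * |softThreshold ε t| ≤ |t| * |softThreshold ε t| :=
    h.trans ((le_abs_self _).trans_eq (abs_mul _ _))
  rcases (abs_nonneg (softThreshold ε t)).eq_or_lt with h₀ | h₀
  · exact h₀ ▸ abs_nonneg t
  · exact le_of_mul_le_mul_right h' h₀

lemma tendsto_softThreshold {ι : Type*} {l : Filter ι} {ε : ι → ℝ} (hε : ∀ k, 0 ≤ ε k)
    (h0 : Tendsto ε l (𝓝 0)) (t : ℝ) : Tendsto (fun k => softThreshold (ε k) t) l (𝓝 t) := by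
  rw [tendsto_iff_norm_sub_tendsto_zero]
  exact squeeze_zero (fun _ => norm_nonneg _)
    (fun k => abs_softThreshold_sub_self_le (hε k) t) h0

lemma hasCompactSupport_softThreshold {E : Type*} [TopologicalSpace E] {u : E → ℝ}
    (cu : HasCompactSupport u) (hε : 0 ≤ ε) : HasCompactSupport fun x => softThreshold ε (u x) :=
  cu.comp_left (softThreshold_zero hε)

lemma tsupport_softThreshold_subset {E : Type*} [TopologicalSpace E] {u : E → ℝ} {Ω : Set E}
    (hu : Continuous u) (hz : ∀ x ∉ Ω, u x = 0) (hε : 0 < ε) :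
    tsupport (fun x => softThreshold ε (u x)) ⊆ Ω := by
  have hsub : tsupport (fun x => softThreshold ε (u x)) ⊆ {x | ε ≤ |u x|} :=
    closure_minimal (fun x hx => le_of_not_gt fun h => hx (softThreshold_eq_zero h.le))
      (isClosed_le continuous_const hu.abs)
  intro x hx
  by_contra h
  have hεx : ε ≤ |u x| := hsub hx
  rw [hz x h, abs_zero] at hεx
  exact hεx.not_gt hε

variable {E : Type*} [NormedAddCommGroup E] [MeasureSpace E] [BorelSpace E]
  [IsFiniteMeasureOnCompacts (volume : Measure E)] {u : E → ℝ}

lemma translationForm_softThreshold_le (hu : Continuous u) (cu : HasCompactSupport u)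
    (hε : 0 ≤ ε) (y : E) :
    translationForm (fun x => softThreshold ε (u x)) (fun x => softThreshold ε (u x)) y
      ≤ translationForm u (fun x => softThreshold ε (u x)) y :=
  have hw : Continuous fun x => softThreshold ε (u x) := by fun_prop
  have cw := hasCompactSupport_softThreshold cu hε
  integral_mono (integrable_translationForm hw hw cw y) (integrable_translationForm hu hw cw y)
    fun _ => softThreshold_sub_sq_le _ _

lemma tendsto_translationForm_softThreshold {ι : Type*} {l : Filter ι} [l.IsCountablyGenerated]
    (hu : Continuous u) (cu : HasCompactSupport u) {ε : ι → ℝ} (hε : ∀ k, 0 ≤ ε k)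
    (h0 : Tendsto ε l (𝓝 0)) (y : E) :
    Tendsto (fun k => translationForm (fun x => softThreshold (ε k) (u x))
      (fun x => softThreshold (ε k) (u x)) y) l (𝓝 (translationForm u u y)) := by
  refine tendsto_integral_filter_of_dominated_convergence
    (fun x => (|u (x + y)| + |u x|) * (|u (x + y)| + |u x|)) ?_ ?_ ?_ ?_
  · exact .of_forall fun k => Continuous.aestronglyMeasurable (by fun_prop)
  · refine .of_forall fun k => .of_forall fun x => ?_
    have h : ‖softThreshold (ε k) (u (x + y)) - softThreshold (ε k) (u x)‖
        ≤ |u (x + y)| + |u x| :=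
      (norm_sub_le _ _).trans
        (add_le_add (abs_softThreshold_le (hε k) _) (abs_softThreshold_le (hε k) _))
    rw [norm_mul]
    gcongr
  · exact integrable_mul_of_hasCompactSupport (u := fun x => |u (x + y)| + |u x|)
      (w := fun x => |u (x + y)| + |u x|) (by fun_prop) (by fun_prop)
      ((hasCompactSupport_comp_add_right cu y).abs.add cu.abs)
  · have hlim := tendsto_softThreshold hε h0
    exact .of_forall fun x => ((hlim _).sub (hlim _)).mul ((hlim _).sub (hlim _))

end SoftThreshold

section SecondDifference

lemma abs_secondDiff_le_of_hasDerivAt {f f' : ℝ → ℝ} {C : ℝ}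
    (hf : ∀ t ∈ Icc (-1 : ℝ) 1, HasDerivAt f (f' t) t)
    (hC : ∀ t ∈ Icc (0 : ℝ) 1, |f' t - f' (-t)| ≤ C) : |secondDiff f 0 1| ≤ C := by
  have hd : ∀ t ∈ Icc (0 : ℝ) 1,
      HasDerivWithinAt (fun t => f t + f (-t)) (f' t - f' (-t)) (Icc 0 1) t := fun t ht => by
    have h₁ := hf t ⟨by linarith [ht.1], ht.2⟩
    have h₂ := (hf (-t) ⟨by linarith [ht.2], by linarith [ht.1]⟩).comp t (hasDerivAt_neg t)
    exact (h₁.add h₂).hasDerivWithinAt.congr_deriv (by ring)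
  have h := norm_image_sub_le_of_norm_deriv_le_segment_01' hd
    fun t ht => hC t (Ico_subset_Icc_self ht)
  rw [Real.norm_eq_abs, abs_sub_comm, neg_zero] at h
  rw [secondDiff, zero_add, zero_sub]
  convert h using 2
  ring

lemma tendsto_secondDiff_div_sq_of_hasDerivAt {f f' : ℝ → ℝ} {c : ℝ}
    (hf : ∀ᶠ t in 𝓝 0, HasDerivAt f (f' t) t) (hf' : HasDerivAt f' c 0) :
    Tendsto (fun h => secondDiff f 0 h / h ^ 2) (𝓝[>] 0) (𝓝 (-c)) := by
  have hneg : Tendsto (fun t : ℝ => -t) (𝓝 0) (𝓝 0) := by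
    simpa only [neg_zero] using (continuous_neg.tendsto (0 : ℝ))
  have hdiff : HasDerivAt (fun t => f' (-t) - f' t) (-2 * c) 0 := by
    rw [← neg_zero] at hf'
    have h := hf'.comp (0 : ℝ) (hasDerivAt_neg 0)
    rw [neg_zero] at hf'
    exact (h.sub hf').congr_deriv (by ring)
  have hf₀ (h : ℝ) : secondDiff f 0 h = 2 * f 0 - f h - f (-h) := by
    rw [secondDiff, zero_add, zero_sub]
  refine HasDerivAt.lhopital_zero_nhdsGT (f' := fun t => f' (-t) - f' t) (g' := fun t => 2 * t)
    ?_ (.of_forall fun t => by simpa using hasDerivAt_pow 2 t) ?_ ?_ ?_ ?_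
  · filter_upwards [nhdsWithin_le_nhds hf, nhdsWithin_le_nhds (hneg.eventually hf)] with t h₁ h₂
    have h := (h₁.const_sub (2 * f 0)).sub (h₂.comp t (hasDerivAt_neg t))
    exact (h.congr_deriv (by ring)).congr_of_eventuallyEq (.of_forall fun h => hf₀ h)
  · filter_upwards [self_mem_nhdsWithin] with t (ht : 0 < t)
    positivity
  · have hc := hf.self_of_nhds.continuousAt.tendsto
    have h := (hc.const_sub (2 * f 0)).sub (hc.comp hneg)
    rw [show 2 * f 0 - f 0 - f 0 = 0 by ring] at h
    exact (h.mono_left nhdsWithin_le_nhds).congr fun h => (hf₀ h).symm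
  · have h : Continuous fun h : ℝ => h ^ 2 := by fun_prop
    simpa using (h.tendsto 0).mono_left nhdsWithin_le_nhds
  · have h := hdiff.tendsto_slope_zero_right.const_mul (1 / 2)
    refine (h.congr fun t => ?_).trans_eq ?_
    · simp only [zero_add, neg_zero, sub_self, sub_zero, smul_eq_mul]
      ring
    · ring_nf

variable {E : Type*} [NormedAddCommGroup E] [NormedSpace ℝ E] {Ω K : Set E} {u : E → ℝ}

lemma hasDerivAt_comp_add_smul {u' : E →L[ℝ] ℝ} {x y : E} {t : ℝ}
    (h : HasFDerivAt u u' (x + t • y)) : HasDerivAt (fun t : ℝ => u (x + t • y)) (u' y) t :=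
  h.comp_hasDerivAt t (by simpa using ((hasDerivAt_id t).smul_const y).const_add x)

lemma hasFDerivAt_of_contDiffOn (ho : IsOpen Ω) (hu : ContDiffOn ℝ 2 u Ω) {x : E} (hx : x ∈ Ω) :
    HasFDerivAt u (fderiv ℝ u x) x :=
  ((hu.differentiableOn (by norm_num)).differentiableAt (ho.mem_nhds hx)).hasFDerivAt

lemma contDiffOn_one_fderiv (ho : IsOpen Ω) (hu : ContDiffOn ℝ 2 u Ω) :
    ContDiffOn ℝ 1 (fderiv ℝ u) Ω :=
  hu.fderiv_of_isOpen ho (by norm_num)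

lemma hasFDerivAt_fderiv_of_contDiffOn (ho : IsOpen Ω) (hu : ContDiffOn ℝ 2 u Ω) {x : E}
    (hx : x ∈ Ω) : HasFDerivAt (fderiv ℝ u) (fderiv ℝ (fderiv ℝ u) x) x :=
  (((contDiffOn_one_fderiv ho hu).differentiableOn (by norm_num)).differentiableAt
    (ho.mem_nhds hx)).hasFDerivAt

lemma secondDiff_comp_add_smul (u : E → ℝ) (x y : E) (h : ℝ) :
    secondDiff (fun t : ℝ => u (x + t • y)) 0 h = secondDiff u x (h • y) := by
  simp only [secondDiff, zero_add, zero_sub, zero_smul, add_zero, neg_smul, ← sub_eq_add_neg]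

lemma abs_secondDiff_le_of_fderiv_lipschitz {x y : E} {C : ℝ} (hC₀ : 0 ≤ C)
    (hd : ∀ z ∈ closedBall x ‖y‖, HasFDerivAt u (fderiv ℝ u z) z)
    (hC : ∀ z ∈ closedBall x ‖y‖, ∀ w ∈ closedBall x ‖y‖,
      ‖fderiv ℝ u z - fderiv ℝ u w‖ ≤ C * ‖z - w‖) :
    |secondDiff u x y| ≤ 2 * C * ‖y‖ ^ 2 := by
  have hmem : ∀ t ∈ Icc (-1 : ℝ) 1, x + t • y ∈ closedBall x ‖y‖ := fun t ht => by
    rw [mem_closedBall, dist_eq_norm, add_sub_cancel_left, norm_smul]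
    exact mul_le_of_le_one_left (norm_nonneg y) (abs_le.2 ht)
  have h := secondDiff_comp_add_smul u x y 1
  rw [one_smul] at h
  rw [← h]
  refine abs_secondDiff_le_of_hasDerivAt
    (fun t ht => hasDerivAt_comp_add_smul (hd _ (hmem t ht))) fun t ht => ?_
  have ht₁ : x + t • y ∈ closedBall x ‖y‖ := hmem t ⟨by linarith [ht.1], ht.2⟩
  have ht₂ : x + (-t) • y ∈ closedBall x ‖y‖ :=
    hmem (-t) ⟨by linarith [ht.2], by linarith [ht.1]⟩
  have hnorm : ‖x + t • y - (x + (-t) • y)‖ = 2 * t * ‖y‖ := by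
    rw [add_sub_add_left_eq_sub, ← sub_smul, norm_smul, Real.norm_eq_abs,
      abs_of_nonneg (by linarith [ht.1])]
    ring
  have hC' := hC _ ht₁ _ ht₂
  rw [hnorm] at hC'
  calc |fderiv ℝ u (x + t • y) y - fderiv ℝ u (x + (-t) • y) y|
      = ‖(fderiv ℝ u (x + t • y) - fderiv ℝ u (x + (-t) • y)) y‖ := rfl
    _ ≤ C * (2 * t * ‖y‖) * ‖y‖ := ContinuousLinearMap.le_of_opNorm_le _ hC' y
    _ = t * (2 * C * ‖y‖ ^ 2) := by ring
    _ ≤ 2 * C * ‖y‖ ^ 2 := mul_le_of_le_one_left (by positivity) ht.2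

lemma exists_abs_secondDiff_le [ProperSpace E] (ho : IsOpen Ω) (hu : ContDiffOn ℝ 2 u Ω)
    (hK : IsCompact K) (hKΩ : K ⊆ Ω) :
    ∃ ρ > 0, ∃ C ≥ 0, ∀ x ∈ K, ∀ y, ‖y‖ ≤ ρ → |secondDiff u x y| ≤ C * ‖y‖ ^ 2 := by
  obtain ⟨ρ, hρ, hsub⟩ := hK.exists_cthickening_subset_open ho hKΩ
  have hcont : ContinuousOn (fderiv ℝ (fderiv ℝ u)) Ω :=
    (contDiffOn_one_fderiv ho hu).continuousOn_fderiv_of_isOpen ho (by norm_num)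
  obtain ⟨C, hC⟩ := IsCompact.exists_bound_of_continuousOn
    (f := fderiv ℝ (fderiv ℝ u)) (hK.cthickening (r := ρ)) (hcont.mono hsub)
  refine ⟨ρ, hρ, 2 * |C|, by positivity, fun x hx y hy => ?_⟩
  have hball : closedBall x ‖y‖ ⊆ cthickening ρ K :=
    (closedBall_subset_closedBall hy).trans (closedBall_subset_cthickening hx ρ)
  refine abs_secondDiff_le_of_fderiv_lipschitz (abs_nonneg C)
    (fun z hz => hasFDerivAt_of_contDiffOn ho hu (hsub (hball hz))) fun z hz w hw => ?_
  exact (convex_closedBall x ‖y‖).norm_image_sub_le_of_norm_hasFDerivWithin_le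
    (fun z hz => (hasFDerivAt_fderiv_of_contDiffOn ho hu
      (hsub (hball hz))).hasFDerivWithinAt)
    (fun z hz => (hC z (hball hz)).trans (le_abs_self C)) hw hz

lemma tendsto_secondDiff_div_sq (ho : IsOpen Ω) (hu : ContDiffOn ℝ 2 u Ω) {x : E} (hx : x ∈ Ω)
    (e : E) :
    Tendsto (fun h : ℝ => secondDiff u x (h • e) / h ^ 2) (𝓝[>] 0)
      (𝓝 (-fderiv ℝ (fun y => fderiv ℝ u y e) x e)) := by
  have hline : Tendsto (fun t : ℝ => x + t • e) (𝓝 0) (𝓝 x) := by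
    have h : Continuous fun t : ℝ => x + t • e := by fun_prop
    simpa using h.tendsto 0
  have hd : HasFDerivAt (fun y => fderiv ℝ u y e) (fderiv ℝ (fun y => fderiv ℝ u y e) x)
      (x + (0 : ℝ) • e) := by
    rw [zero_smul, add_zero]
    exact ((hasFDerivAt_fderiv_of_contDiffOn ho hu hx).differentiableAt.clm_apply
      (differentiableAt_const e)).hasFDerivAt
  simp only [← secondDiff_comp_add_smul]
  refine tendsto_secondDiff_div_sq_of_hasDerivAt ?_ (hasDerivAt_comp_add_smul hd)
  filter_upwards [hline (ho.mem_nhds hx)] with t ht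
  exact hasDerivAt_comp_add_smul (hasFDerivAt_of_contDiffOn ho hu ht)

end SecondDifference

section FractionalForm

variable {n : ℕ} {s : ℝ} {Ω : Set (En n)} {u w : En n → ℝ}

/-- The kernel `a (c_{n,s}/2) |y|^{-n-2s}` of the operator `a (-Δ)ˢ`, coefficient included. -/
def fracKernel (n : ℕ) (s a : ℝ) (y : En n) : ℝ := a * (cK n s / 2) * (‖y‖ ^ ((n : ℝ) + 2 * s))⁻¹

/-- The quadratic form of the operator `a (-Δ)ˢ`, as an average of translation forms. -/
def fracForm (n : ℕ) (s a : ℝ) (u w : En n → ℝ) : ℝ :=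
  ∫ y, translationForm u w y * fracKernel n s a y

lemma cK_pos (n : ℕ) (hs : s ∈ Ioo (0 : ℝ) 1) : 0 < cK n s := by
  obtain ⟨hs₀, hs₁⟩ := hs
  have : 0 < Real.Gamma (((n : ℝ) + 2 * s) / 2) := Real.Gamma_pos_of_pos (by positivity)
  have : 0 < Real.Gamma (1 - s) := Real.Gamma_pos_of_pos (by linarith)
  unfold cK
  positivity

lemma fracKernel_nonneg (hs : s ∈ Ioo (0 : ℝ) 1) {a : ℝ} (ha : 0 ≤ a) (y : En n) :
    0 ≤ fracKernel n s a y := by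
  have := cK_pos n hs
  unfold fracKernel
  positivity

lemma measurable_fracKernel (n : ℕ) (s a : ℝ) : Measurable (fracKernel n s a) := by
  unfold fracKernel
  fun_prop

lemma fracForm_self_nonneg (hs : s ∈ Ioo (0 : ℝ) 1) {a : ℝ} (ha : 0 ≤ a) (u : En n → ℝ) :
    0 ≤ fracForm n s a u u :=
  integral_nonneg fun y =>
    mul_nonneg (translationForm_self_nonneg u y) (fracKernel_nonneg hs ha y)

lemma integrableOn_Ioi_pow_mul_min_one_sq_mul_rpow (hn : 0 < n) (hs : s ∈ Ioo (0 : ℝ) 1) :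
    IntegrableOn (fun r : ℝ => r ^ (n - 1) * (min 1 (r ^ 2) * (r ^ ((n : ℝ) + 2 * s))⁻¹))
      (Ioi 0) := by
  obtain ⟨hs₀, hs₁⟩ := hs
  have hpow (r : ℝ) (hr : 0 < r) :
      r ^ (n - 1) * (r ^ ((n : ℝ) + 2 * s))⁻¹ = r ^ (-1 - 2 * s) := by
    rw [← Real.rpow_natCast, ← Real.rpow_neg hr.le, ← Real.rpow_add hr, Nat.cast_sub hn]
    congr 1
    push_cast
    ring
  rw [← Ioc_union_Ioi_eq_Ioi (zero_le_one : (0 : ℝ) ≤ 1)]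
  refine IntegrableOn.union ?_ ?_
  · have h : IntegrableOn (fun r : ℝ => r ^ (1 - 2 * s)) (Ioc 0 1) := by
      rw [← intervalIntegrable_iff_integrableOn_Ioc_of_le zero_le_one]
      exact intervalIntegral.intervalIntegrable_rpow' (by linarith)
    refine h.congr_fun (fun r ⟨hr₀, hr₁⟩ => ?_) measurableSet_Ioc
    simp only
    rw [min_eq_right (by nlinarith), mul_left_comm, hpow r hr₀, ← Real.rpow_natCast,
      ← Real.rpow_add hr₀]
    congr 1
    push_cast
    ring
  · have h : IntegrableOn (fun r : ℝ => r ^ (-1 - 2 * s)) (Ioi 1) :=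
      integrableOn_Ioi_rpow_of_lt (by linarith) one_pos
    refine h.congr_fun (fun r (hr : 1 < r) => ?_) measurableSet_Ioi
    simp only
    rw [min_eq_left (by nlinarith), one_mul, hpow r (by linarith)]

lemma integrable_min_one_sq_mul_fracKernel (hn : 0 < n) (hs : s ∈ Ioo (0 : ℝ) 1) (a : ℝ) :
    Integrable fun y : En n => min 1 (‖y‖ ^ 2) * fracKernel n s a y := by
  have : Nonempty (Fin n) := ⟨⟨0, hn⟩⟩
  have h : Integrable fun y : En n => min 1 (‖y‖ ^ 2) * (‖y‖ ^ ((n : ℝ) + 2 * s))⁻¹ := by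
    rw [integrable_fun_norm_addHaar (volume : Measure (En n))
      (f := fun r => min 1 (r ^ 2) * (r ^ ((n : ℝ) + 2 * s))⁻¹)]
    simp only [finrank_euclideanSpace, Fintype.card_fin, smul_eq_mul]
    exact integrableOn_Ioi_pow_mul_min_one_sq_mul_rpow hn hs
  refine (h.const_mul (a * (cK n s / 2))).congr (.of_forall fun y => ?_)
  simp only [fracKernel]
  ring

lemma exists_abs_secondDiff_le_min_one_sq {E : Type*} [NormedAddCommGroup E] [NormedSpace ℝ E]
    [ProperSpace E] {Ω K : Set E} {u : E → ℝ} (ho : IsOpen Ω) (hu : ContDiffOn ℝ 2 u Ω)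
    (hc : Continuous u) (cu : HasCompactSupport u) (hK : IsCompact K) (hKΩ : K ⊆ Ω) :
    ∃ C ≥ 0, ∀ x ∈ K, ∀ y, |secondDiff u x y| ≤ C * min 1 (‖y‖ ^ 2) := by
  obtain ⟨ρ, hρ, C, hC, hnear⟩ := exists_abs_secondDiff_le ho hu hK hKΩ
  obtain ⟨M, hM⟩ := hc.bounded_above_of_compact_support cu
  have hM₀ : 0 ≤ M := (norm_nonneg _).trans (hM 0)
  have hfar (x y : E) : |secondDiff u x y| ≤ 4 * M := by
    have h₁ := abs_le.1 (hM x)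
    have h₂ := abs_le.1 (hM (x + y))
    have h₃ := abs_le.1 (hM (x - y))
    rw [secondDiff, abs_le]
    constructor <;> linarith
  have hq : 0 ≤ 4 * M / ρ ^ 2 := by positivity
  refine ⟨C + 4 * M + 4 * M / ρ ^ 2, by positivity, fun x hx y => ?_⟩
  rw [mul_min_of_nonneg _ _ (by positivity)]
  refine le_min (by linarith [hfar x y]) ?_
  rcases le_total ‖y‖ ρ with h | h
  · exact (hnear x hx y h).trans (by gcongr; linarith)
  · calc |secondDiff u x y| ≤ 4 * M := hfar x y
      _ ≤ 4 * M / ρ ^ 2 * ‖y‖ ^ 2 := by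
        rw [div_mul_eq_mul_div, le_div_iff₀ (by positivity)]
        gcongr
      _ ≤ (C + 4 * M + 4 * M / ρ ^ 2) * ‖y‖ ^ 2 := by gcongr; linarith

lemma integrable_secondDiff_mul_fracKernel (hn : 0 < n) (hs : s ∈ Ioo (0 : ℝ) 1) (a : ℝ)
    (ho : IsOpen Ω) (hu : ContDiffOn ℝ 2 u Ω) (hc : Continuous u) (cu : HasCompactSupport u)
    (hw : Continuous w) (cw : HasCompactSupport w) (hwΩ : tsupport w ⊆ Ω) :
    Integrable (fun p : En n × En n => secondDiff u p.1 p.2 * w p.1 * fracKernel n s a p.2)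
      (volume.prod volume) := by
  obtain ⟨C, hC, hbound⟩ := exists_abs_secondDiff_le_min_one_sq ho hu hc cu cw.isCompact hwΩ
  have hdom : Integrable (fun p : En n × En n =>
      (C * |w p.1|) * (min 1 (‖p.2‖ ^ 2) * fracKernel n s a p.2)) (volume.prod volume) :=
    Integrable.mul_prod ((hw.integrable_of_hasCompactSupport cw).abs.const_mul C)
      (integrable_min_one_sq_mul_fracKernel hn hs a)
  refine hdom.mono ?_ (.of_forall fun p => ?_)
  · have hm : Measurable fun p : En n × En n => secondDiff u p.1 p.2 * w p.1 := by
      unfold secondDiff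
      exact Continuous.measurable (by fun_prop)
    exact (hm.mul ((measurable_fracKernel n s a).comp measurable_snd)).aestronglyMeasurable
  · simp only [norm_mul, Real.norm_eq_abs, abs_abs]
    by_cases hp : p.1 ∈ tsupport w
    · calc |secondDiff u p.1 p.2| * |w p.1| * |fracKernel n s a p.2|
          ≤ C * min 1 (‖p.2‖ ^ 2) * |w p.1| * |fracKernel n s a p.2| := by
            gcongr
            exact hbound p.1 hp p.2
        _ = |C| * |w p.1| * (|min 1 (‖p.2‖ ^ 2)| * |fracKernel n s a p.2|) := by
            rw [abs_of_nonneg hC, abs_of_nonneg (by positivity : (0 : ℝ) ≤ min 1 (‖p.2‖ ^ 2))]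
            ring
    · simp only [image_eq_zero_of_notMem_tsupport hp, abs_zero, mul_zero, zero_mul, le_refl]

lemma integrable_translationForm_mul_fracKernel (hn : 0 < n) (hs : s ∈ Ioo (0 : ℝ) 1) (a : ℝ)
    (ho : IsOpen Ω) (hu : ContDiffOn ℝ 2 u Ω) (hc : Continuous u) (cu : HasCompactSupport u)
    (hw : Continuous w) (cw : HasCompactSupport w) (hwΩ : tsupport w ⊆ Ω) :
    Integrable fun y => translationForm u w y * fracKernel n s a y := by
  refine (integrable_secondDiff_mul_fracKernel hn hs a ho hu hc cu hw cw hwΩ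
    ).integral_prod_right.congr (.of_forall fun y => ?_)
  simp only
  rw [integral_mul_const, integral_secondDiff_mul hc hw cw]

lemma mul_fracLap_mul_eq_integral (s a : ℝ) (u w : En n → ℝ) (x : En n) :
    a * fracLap n s u x * w x = ∫ y, secondDiff u x y * w x * fracKernel n s a y := by
  rw [fracLap, ← mul_assoc, ← integral_const_mul, ← integral_mul_const]
  refine integral_congr_ae (.of_forall fun y => ?_)
  simp only [secondDiff, fracKernel, div_eq_mul_inv]
  ring

lemma integrable_fracLap_mul (hn : 0 < n) (hs : s ∈ Ioo (0 : ℝ) 1) (a : ℝ)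
    (ho : IsOpen Ω) (hu : ContDiffOn ℝ 2 u Ω) (hc : Continuous u) (cu : HasCompactSupport u)
    (hw : Continuous w) (cw : HasCompactSupport w) (hwΩ : tsupport w ⊆ Ω) :
    Integrable fun x => a * fracLap n s u x * w x := by
  simp only [mul_fracLap_mul_eq_integral]
  exact (integrable_secondDiff_mul_fracKernel hn hs a ho hu hc cu hw cw hwΩ).integral_prod_left

lemma integral_fracLap_mul (hn : 0 < n) (hs : s ∈ Ioo (0 : ℝ) 1) (a : ℝ)
    (ho : IsOpen Ω) (hu : ContDiffOn ℝ 2 u Ω) (hc : Continuous u) (cu : HasCompactSupport u)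
    (hw : Continuous w) (cw : HasCompactSupport w) (hwΩ : tsupport w ⊆ Ω) :
    ∫ x, a * fracLap n s u x * w x = fracForm n s a u w := by
  simp only [mul_fracLap_mul_eq_integral, fracForm]
  rw [integral_integral_swap
    (integrable_secondDiff_mul_fracKernel hn hs a ho hu hc cu hw cw hwΩ)]
  refine integral_congr_ae (.of_forall fun y => ?_)
  simp only
  rw [integral_mul_const, integral_secondDiff_mul hc hw cw]

end FractionalForm

section DiscreteDirichlet

variable {n : ℕ} {Ω : Set (En n)} {u w : En n → ℝ}

/-- The Dirichlet form `∫ ∇u · ∇w` with derivatives replaced by difference quotients of step `h`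
in the coordinate directions. -/
def discreteDirichlet (u w : En n → ℝ) (h : ℝ) : ℝ :=
  (∑ i : Fin n, translationForm u w (h • EuclideanSpace.single i 1)) / h ^ 2

lemma discreteDirichlet_le_half (hw : Continuous w) (cw : HasCompactSupport w) (h : ℝ) :
    discreteDirichlet w w h ≤ discreteDirichlet w w (h / 2) := by
  have hsum : ∑ i : Fin n, translationForm w w (h • EuclideanSpace.single i 1)
      ≤ ∑ i : Fin n, 4 * translationForm w w ((h / 2) • EuclideanSpace.single i 1) := by
    gcongr with i
    have h' := translationForm_self_add_self_le hw cw
      ((h / 2) • (EuclideanSpace.single i 1 : En n))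
    rwa [← add_smul, add_halves] at h'
  rw [← Finset.mul_sum] at hsum
  unfold discreteDirichlet
  refine (div_le_div_of_nonneg_right hsum (sq_nonneg h)).trans_eq ?_
  ring

lemma discreteDirichlet_le_div_two_pow (hw : Continuous w) (cw : HasCompactSupport w) (h : ℝ)
    (k : ℕ) : discreteDirichlet w w h ≤ discreteDirichlet w w (h / 2 ^ k) := by
  induction k with
  | zero => rw [pow_zero, div_one]
  | succ k ih =>
    rw [pow_succ, ← div_div]
    exact ih.trans (discreteDirichlet_le_half hw cw _)

lemma discreteDirichlet_le_of_tendsto (hw : Continuous w) (cw : HasCompactSupport w) {m : ℝ → ℝ}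
    {b h : ℝ} (hh : 0 < h) (hm : ∀ t, 0 < t → discreteDirichlet w w t ≤ m t)
    (hb : Tendsto m (𝓝[>] 0) (𝓝 b)) : discreteDirichlet w w h ≤ b := by
  have hpos (k : ℕ) : 0 < h / 2 ^ k := by positivity
  have hseq : Tendsto (fun k : ℕ => h / 2 ^ k) atTop (𝓝[>] 0) :=
    tendsto_nhdsWithin_iff.2 ⟨tendsto_const_nhds.div_atTop
      (tendsto_pow_atTop_atTop_of_one_lt one_lt_two), .of_forall hpos⟩
  exact ge_of_tendsto' (hb.comp hseq) fun k =>
    (discreteDirichlet_le_div_two_pow hw cw h k).trans (hm _ (hpos k))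

lemma abs_sum_secondDiff_div_sq_le {C h : ℝ} {x : En n} (hh : 0 < h)
    (hC : ∀ y, ‖y‖ ≤ h → |secondDiff u x y| ≤ C * ‖y‖ ^ 2) :
    |∑ i : Fin n, secondDiff u x (h • EuclideanSpace.single i 1) / h ^ 2| ≤ n * C := by
  have hterm (i : Fin n) : |secondDiff u x (h • EuclideanSpace.single i 1) / h ^ 2| ≤ C := by
    have hnorm : ‖h • (EuclideanSpace.single i 1 : En n)‖ = h := by
      rw [norm_smul, PiLp.norm_single, norm_one, mul_one, Real.norm_of_nonneg hh.le]
    have h' := hC _ hnorm.le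
    rw [hnorm] at h'
    rwa [abs_div, abs_of_pos (by positivity : 0 < h ^ 2), div_le_iff₀ (by positivity)]
  refine (Finset.abs_sum_le_sum_abs _ _).trans ((Finset.sum_le_sum fun i _ => hterm i).trans_eq ?_)
  simp only [Finset.sum_const, Finset.card_univ, Fintype.card_fin, nsmul_eq_mul]

lemma discreteDirichlet_eq_integral (hc : Continuous u) (hw : Continuous w)
    (cw : HasCompactSupport w) (h : ℝ) :
    discreteDirichlet u w h
      = ∫ x, (∑ i : Fin n, secondDiff u x (h • EuclideanSpace.single i 1) / h ^ 2) * w x := by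
  have hint (i : Fin n) :
      Integrable fun x => secondDiff u x (h • EuclideanSpace.single i 1) * w x := by
    unfold secondDiff
    exact integrable_mul_of_hasCompactSupport (u := fun x => 2 * u x - u (x + _) - u (x - _))
      (by fun_prop) hw cw
  simp only [discreteDirichlet, ← integral_secondDiff_mul hc hw cw]
  rw [← integral_finsetSum _ fun i _ => hint i, ← integral_div]
  refine integral_congr_ae (.of_forall fun x => ?_)
  simp only [Finset.sum_mul, Finset.sum_div]
  exact Finset.sum_congr rfl fun i _ => by ring

lemma tendsto_discreteDirichlet (ho : IsOpen Ω) (hu : ContDiffOn ℝ 2 u Ω) (hc : Continuous u)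
    (hw : Continuous w) (cw : HasCompactSupport w) (hwΩ : tsupport w ⊆ Ω) :
    Tendsto (discreteDirichlet u w) (𝓝[>] 0) (𝓝 (∫ x, -lap n u x * w x)) := by
  obtain ⟨ρ, hρ, C, -, hbound⟩ := exists_abs_secondDiff_le ho hu cw.isCompact hwΩ
  refine Tendsto.congr (fun h => (discreteDirichlet_eq_integral hc hw cw h).symm) ?_
  refine tendsto_integral_filter_of_dominated_convergence (fun x => (n * C) * |w x|)
    (.of_forall fun h => ?_) ?_ ((hw.integrable_of_hasCompactSupport cw).abs.const_mul _)
    (.of_forall fun x => ?_)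
  · unfold secondDiff
    exact Continuous.aestronglyMeasurable (by fun_prop)
  · filter_upwards [Ioo_mem_nhdsGT hρ] with h hh
    refine .of_forall fun x => ?_
    rw [norm_mul, Real.norm_eq_abs, Real.norm_eq_abs]
    by_cases hx : x ∈ tsupport w
    · gcongr
      exact abs_sum_secondDiff_div_sq_le hh.1 fun y hy => hbound x hx y (hy.trans hh.2.le)
    · simp only [image_eq_zero_of_notMem_tsupport hx, abs_zero, mul_zero, le_refl]
  · by_cases hx : x ∈ tsupport w
    · refine Tendsto.mul_const _ ?_
      rw [lap, ← Finset.sum_neg_distrib]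
      exact tendsto_finsetSum _ fun i _ => tendsto_secondDiff_div_sq ho hu (hwΩ hx) _
    · simp only [image_eq_zero_of_notMem_tsupport hx, mul_zero, tendsto_const_nhds]

end DiscreteDirichlet

section MixedSolution

lemma integrable_and_integral_le_of_tendsto {X : Type*} [MeasurableSpace X] {μ : Measure X}
    {F : ℕ → X → ℝ} {g : X → ℝ} {r : ℕ → ℝ} {R : ℝ} (hF : ∀ k, Integrable (F k) μ)
    (hF₀ : ∀ k, 0 ≤ F k) (hlim : ∀ᵐ x ∂μ, Tendsto (fun k => F k x) atTop (𝓝 (g x)))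
    (hr : ∀ k, ∫ x, F k x ∂μ ≤ r k) (hR : Tendsto r atTop (𝓝 R)) :
    Integrable g μ ∧ ∫ x, g x ∂μ ≤ R := by
  have hg : AEStronglyMeasurable g μ :=
    aestronglyMeasurable_of_tendsto_ae atTop (fun k => (hF k).aestronglyMeasurable) hlim
  have hg₀ : 0 ≤ᵐ[μ] g := hlim.mono fun x hx => ge_of_tendsto' hx fun k => hF₀ k x
  have hR₀ : 0 ≤ R := ge_of_tendsto' hR fun k => (integral_nonneg (hF₀ k)).trans (hr k)
  have hfatou : ∫⁻ x, ENNReal.ofReal (g x) ∂μ ≤ ENNReal.ofReal R := by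
    calc ∫⁻ x, ENNReal.ofReal (g x) ∂μ
      _ = ∫⁻ x, liminf (fun k => ENNReal.ofReal (F k x)) atTop ∂μ :=
        lintegral_congr_ae (hlim.mono fun x hx =>
          ((ENNReal.continuous_ofReal.tendsto _).comp hx).liminf_eq.symm)
      _ ≤ liminf (fun k => ∫⁻ x, ENNReal.ofReal (F k x) ∂μ) atTop :=
        lintegral_liminf_le' fun k => (hF k).aemeasurable.ennreal_ofReal
      _ ≤ liminf (fun k => ENNReal.ofReal (r k)) atTop :=
        liminf_le_liminf (.of_forall fun k => by
          rw [← ofReal_integral_eq_lintegral_ofReal (hF k) (.of_forall (hF₀ k))]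
          exact ENNReal.ofReal_le_ofReal (hr k))
      _ = ENNReal.ofReal R := ((ENNReal.continuous_ofReal.tendsto _).comp hR).liminf_eq
  have hint : Integrable g μ :=
    ⟨hg, (hasFiniteIntegral_iff_ofReal hg₀).2 (hfatou.trans_lt ENNReal.ofReal_lt_top)⟩
  rw [← ofReal_integral_eq_lintegral_ofReal hint hg₀, ENNReal.ofReal_le_ofReal_iff hR₀] at hfatou
  exact ⟨hint, hfatou⟩

lemma tendsto_integral_mul_softThreshold {E : Type*} [TopologicalSpace E] [MeasurableSpace E]
    [OpensMeasurableSpace E] {μ : Measure E} [IsFiniteMeasureOnCompacts μ] {f u : E → ℝ}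
    (hf : Continuous f) (hu : Continuous u) (cu : HasCompactSupport u) {ε : ℕ → ℝ}
    (hε : ∀ k, 0 ≤ ε k) (h0 : Tendsto ε atTop (𝓝 0)) :
    Tendsto (fun k => ∫ x, f x * softThreshold (ε k) (u x) ∂μ) atTop
      (𝓝 (∫ x, f x * u x ∂μ)) := by
  refine tendsto_integral_of_dominated_convergence (fun x => |f x * u x|)
    (fun k => ?_) (integrable_mul_of_hasCompactSupport hf hu cu).abs
    (fun k => .of_forall fun x => ?_)
    (.of_forall fun x => (tendsto_softThreshold hε h0 _).const_mul _)
  · exact (integrable_mul_of_hasCompactSupport hf (by fun_prop)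
      (hasCompactSupport_softThreshold cu (hε k))).aestronglyMeasurable
  · rw [norm_mul, abs_mul]
    exact mul_le_mul_of_nonneg_left (abs_softThreshold_le (hε k) _) (abs_nonneg _)

/-- `u` is a classical solution of `-Δu + a (-Δ)ˢ u = f` in the bounded open set `Ω ⊂ ℝⁿ`, `n ≥ 1`,
extended by zero and continuous across `∂Ω`. -/
structure IsMixedSolution {n : ℕ} (Ω : Set (En n)) (s a : ℝ) (u f : En n → ℝ) : Prop where
  dim_pos : 0 < n
  isOpen : IsOpen Ω
  isBounded : IsBounded Ω
  contDiffOn : ContDiffOn ℝ 2 u Ω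
  continuous : Continuous u
  eq_zero : ∀ x ∉ Ω, u x = 0
  continuous_rhs : Continuous f
  exponent_mem : s ∈ Ioo (0 : ℝ) 1
  coeff_nonneg : 0 ≤ a
  equation : ∀ x ∈ Ω, -lap n u x + a * fracLap n s u x = f x

namespace IsMixedSolution

variable {n : ℕ} {Ω : Set (En n)} {s a : ℝ} {u f w : En n → ℝ}

lemma hasCompactSupport (S : IsMixedSolution Ω s a u f) : HasCompactSupport u :=
  HasCompactSupport.intro S.isBounded.isCompact_closure fun x hx =>
    S.eq_zero x fun h => hx (subset_closure h)

lemma hasFDerivAt (S : IsMixedSolution Ω s a u f) {x : En n} (hx : x ∈ Ω) :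
    HasFDerivAt u (fderiv ℝ u x) x :=
  hasFDerivAt_of_contDiffOn S.isOpen S.contDiffOn hx

lemma fracForm_self_nonneg (S : IsMixedSolution Ω s a u f) (w : En n → ℝ) :
    0 ≤ fracForm n s a w w :=
  _root_.fracForm_self_nonneg S.exponent_mem S.coeff_nonneg w

lemma integrable_translationForm_mul_fracKernel (S : IsMixedSolution Ω s a u f)
    (hw : Continuous w) (cw : HasCompactSupport w) (hwΩ : tsupport w ⊆ Ω) :
    Integrable fun y => translationForm u w y * fracKernel n s a y :=
  _root_.integrable_translationForm_mul_fracKernel S.dim_pos S.exponent_mem a S.isOpen S.contDiffOn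
    S.continuous S.hasCompactSupport hw cw hwΩ

lemma tendsto_discreteDirichlet (S : IsMixedSolution Ω s a u f)
    (hw : Continuous w) (cw : HasCompactSupport w) (hwΩ : tsupport w ⊆ Ω) :
    Tendsto (discreteDirichlet u w) (𝓝[>] 0) (𝓝 ((∫ x, f x * w x) - fracForm n s a u w)) := by
  have hfrac := integrable_fracLap_mul S.dim_pos S.exponent_mem a S.isOpen S.contDiffOn
    S.continuous S.hasCompactSupport hw cw hwΩ
  have hweak : ∫ x, -lap n u x * w x = (∫ x, f x * w x) - fracForm n s a u w := by
    rw [← integral_fracLap_mul S.dim_pos S.exponent_mem a S.isOpen S.contDiffOn S.continuous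
      S.hasCompactSupport hw cw hwΩ,
      ← integral_sub (integrable_mul_of_hasCompactSupport S.continuous_rhs hw cw) hfrac]
    refine integral_congr_ae (.of_forall fun x => ?_)
    simp only
    by_cases hx : x ∈ tsupport w
    · rw [← S.equation x (hwΩ hx)]
      ring
    · simp only [image_eq_zero_of_notMem_tsupport hx, mul_zero, sub_zero]
  exact hweak ▸
    _root_.tendsto_discreteDirichlet S.isOpen S.contDiffOn S.continuous hw cw hwΩ

lemma energy_softThreshold (S : IsMixedSolution Ω s a u f) {ε h : ℝ} (hε : 0 < ε) (hh : 0 < h) :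
    Integrable (fun y => translationForm (fun x => softThreshold ε (u x))
        (fun x => softThreshold ε (u x)) y * fracKernel n s a y) ∧
      discreteDirichlet (fun x => softThreshold ε (u x)) (fun x => softThreshold ε (u x)) h
        + fracForm n s a (fun x => softThreshold ε (u x)) (fun x => softThreshold ε (u x))
      ≤ ∫ x, f x * softThreshold ε (u x) := by
  set w : En n → ℝ := fun x => softThreshold ε (u x)
  have hw : Continuous w := (continuous_softThreshold ε).comp S.continuous
  have cw : HasCompactSupport w := hasCompactSupport_softThreshold S.hasCompactSupport hε.le
  have hwΩ : tsupport w ⊆ Ω := tsupport_softThreshold_subset S.continuous S.eq_zero hε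
  have hle (y : En n) : translationForm w w y ≤ translationForm u w y :=
    translationForm_softThreshold_le S.continuous S.hasCompactSupport hε.le y
  have hker := fracKernel_nonneg (n := n) S.exponent_mem S.coeff_nonneg
  have huw := S.integrable_translationForm_mul_fracKernel hw cw hwΩ
  have hww : Integrable fun y => translationForm w w y * fracKernel n s a y := by
    refine huw.mono' ((stronglyMeasurable_translationForm hw hw).measurable.mul
      (measurable_fracKernel n s a)).aestronglyMeasurable (.of_forall fun y => ?_)
    rw [Real.norm_of_nonneg (mul_nonneg (translationForm_self_nonneg w y) (hker y))]
    exact mul_le_mul_of_nonneg_right (hle y) (hker y)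
  have hfrac : fracForm n s a w w ≤ fracForm n s a u w :=
    integral_mono hww huw fun y => mul_le_mul_of_nonneg_right (hle y) (hker y)
  have hdir := discreteDirichlet_le_of_tendsto hw cw hh
    (fun t _ => div_le_div_of_nonneg_right (Finset.sum_le_sum fun i _ => hle _) (sq_nonneg t))
    (S.tendsto_discreteDirichlet hw cw hwΩ)
  exact ⟨hww, by linarith⟩

lemma energy (S : IsMixedSolution Ω s a u f) {h : ℝ} (hh : 0 < h) :
    Integrable (fun y => translationForm u u y * fracKernel n s a y) ∧
      discreteDirichlet u u h + fracForm n s a u u ≤ ∫ x, f x * u x := by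
  let ε : ℕ → ℝ := fun k => 1 / ((k : ℝ) + 1)
  have hε (k : ℕ) : 0 < ε k := by positivity
  have hε₀ : Tendsto ε atTop (𝓝 0) := tendsto_one_div_add_atTop_nhds_zero_nat
  have hform := tendsto_translationForm_softThreshold S.continuous S.hasCompactSupport
    (fun k => (hε k).le) hε₀
  have hdir : Tendsto (fun k => discreteDirichlet (fun x => softThreshold (ε k) (u x))
      (fun x => softThreshold (ε k) (u x)) h) atTop (𝓝 (discreteDirichlet u u h)) :=
    (tendsto_finsetSum _ fun i _ => hform _).div_const _
  have hrhs := tendsto_integral_mul_softThreshold (μ := volume) S.continuous_rhs S.continuous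
    S.hasCompactSupport (fun k => (hε k).le) hε₀
  obtain ⟨hint, hle⟩ := integrable_and_integral_le_of_tendsto
    (fun k => (S.energy_softThreshold (hε k) hh).1)
    (fun k y => mul_nonneg (translationForm_self_nonneg _ y)
      (fracKernel_nonneg S.exponent_mem S.coeff_nonneg y))
    (.of_forall fun y => (hform y).mul_const _)
    (fun k => le_sub_iff_add_le'.2 (S.energy_softThreshold (hε k) hh).2) (hrhs.sub hdir)
  exact ⟨hint, le_sub_iff_add_le'.1 hle⟩

end IsMixedSolution

end MixedSolution

section Dilation

/-- The part of `Ω` left uncovered by the dilate `l⁻¹ • closure Ω`; for star-shaped `Ω` and `l ↓ 1`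
it shrinks to the boundary. -/
def boundaryLayer {E : Type*} [TopologicalSpace E] [SMul ℝ E] (Ω : Set E) (l : ℝ) : Set E :=
  {x | x ∈ Ω ∧ l • x ∉ closure Ω}

lemma boundaryLayer_subset {E : Type*} [TopologicalSpace E] [SMul ℝ E] (Ω : Set E) (l : ℝ) :
    boundaryLayer Ω l ⊆ Ω :=
  fun _ hx => hx.1

lemma isOpen_boundaryLayer {E : Type*} [TopologicalSpace E] [SMul ℝ E] [ContinuousConstSMul ℝ E]
    {Ω : Set E} (hΩ : IsOpen Ω) (l : ℝ) : IsOpen (boundaryLayer Ω l) :=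
  hΩ.inter (isClosed_closure.isOpen_compl.preimage (continuous_const_smul l))

variable {n : ℕ} {Ω U : Set (En n)} {s a l : ℝ} {u f : En n → ℝ}

lemma norm_sq_eq_sum_sq_apply_single (T : En n →L[ℝ] ℝ) :
    ‖T‖ ^ 2 = ∑ i : Fin n, T (EuclideanSpace.single i 1) ^ 2 := by
  rw [← (InnerProductSpace.toDual ℝ (En n)).symm.norm_map T, EuclideanSpace.norm_sq_eq]
  refine Finset.sum_congr rfl fun i _ => ?_
  rw [Real.norm_eq_abs, sq_abs, ← InnerProductSpace.toDual_symm_apply,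
    EuclideanSpace.inner_single_right]
  simp only [conj_trivial, one_mul]

/-- Fatou's lemma along `h → 0⁺`. -/
lemma integrableOn_norm_fderiv_sq_and_integral_le (hu : Continuous u) (cu : HasCompactSupport u)
    (hU : MeasurableSet U) (hd : ∀ x ∈ U, DifferentiableAt ℝ u x) {m : ℝ → ℝ} {L : ℝ}
    (hm : ∀ h, 0 < h → discreteDirichlet u u h ≤ m h) (hL : Tendsto m (𝓝[>] 0) (𝓝 L)) :
    IntegrableOn (fun x => ‖fderiv ℝ u x‖ ^ 2) U ∧ ∫ x in U, ‖fderiv ℝ u x‖ ^ 2 ≤ L := by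
  let h : ℕ → ℝ := fun k => 1 / ((k : ℝ) + 1)
  have hpos (k : ℕ) : 0 < h k := by positivity
  have hlim : Tendsto h atTop (𝓝[>] 0) :=
    tendsto_nhdsWithin_iff.2 ⟨tendsto_one_div_add_atTop_nhds_zero_nat, .of_forall hpos⟩
  let Q : ℕ → En n → ℝ := fun k x => ∑ i : Fin n,
    (u (x + h k • EuclideanSpace.single i 1) - u x)
      * (u (x + h k • EuclideanSpace.single i 1) - u x) / h k ^ 2
  have hterm (k : ℕ) (i : Fin n) := (integrable_translationForm hu hu cu
    (h k • EuclideanSpace.single i 1)).div_const (h k ^ 2)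
  have hQ (k : ℕ) : Integrable (Q k) := integrable_finsetSum _ fun i _ => hterm k i
  have hQ₀ (k : ℕ) : 0 ≤ Q k := fun x => Finset.sum_nonneg fun i _ =>
    div_nonneg (mul_self_nonneg _) (sq_nonneg _)
  have hQint (k : ℕ) : ∫ x, Q k x = discreteDirichlet u u (h k) := by
    rw [discreteDirichlet, integral_finsetSum _ fun i _ => hterm k i, Finset.sum_div]
    exact Finset.sum_congr rfl fun i _ => integral_div _ _
  refine integrable_and_integral_le_of_tendsto (fun k => (hQ k).integrableOn) hQ₀
    ((ae_restrict_iff' hU).2 (.of_forall fun x hx => ?_)) (fun k => ?_) (hL.comp hlim)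
  · rw [norm_sq_eq_sum_sq_apply_single]
    refine tendsto_finsetSum _ fun i _ => ?_
    have hline := ((hd x hx).hasFDerivAt.hasLineDerivAt
      (EuclideanSpace.single i 1)).tendsto_slope_zero_right
    refine ((hline.comp hlim).pow 2).congr fun k => ?_
    simp only [Function.comp_apply, smul_eq_mul]
    ring
  · exact (setIntegral_le_integral (hQ k) (.of_forall (hQ₀ k))).trans
      ((hQint k).trans_le (hm _ (hpos k)))

lemma discreteDirichlet_comp_smul (u : En n → ℝ) (hl : 0 < l) (h : ℝ) :
    discreteDirichlet (fun x => u (l • x)) (fun x => u (l • x)) h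
      = (l ^ n)⁻¹ * l ^ 2 * discreteDirichlet u u (l * h) := by
  simp only [discreteDirichlet, translationForm_comp_smul u hl, smul_smul, ← Finset.mul_sum,
    finrank_euclideanSpace_fin]
  field_simp

lemma rpow_sub_two_div_two_sq (hl : 0 < l) :
    (l ^ (((n : ℝ) - 2) / 2)) ^ 2 = l ^ n * (l ^ 2)⁻¹ := by
  rw [← rpow_natCast, ← rpow_mul hl.le, Nat.cast_two, div_mul_cancel₀ _ two_ne_zero, rpow_sub hl,
    rpow_natCast, rpow_two, div_eq_mul_inv]

lemma discreteDirichlet_sub_mul_self {w : En n → ℝ} (hu : Continuous u) (cu : HasCompactSupport u)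
    (hw : Continuous w) (cw : HasCompactSupport w) (c h : ℝ) :
    discreteDirichlet (fun x => u x - c * w x) (fun x => u x - c * w x) h
      = discreteDirichlet u u h - 2 * c * discreteDirichlet u w h
        + c ^ 2 * discreteDirichlet w w h := by
  simp only [discreteDirichlet, translationForm_sub_mul_self hu cu hw cw c,
    Finset.sum_add_distrib, Finset.sum_sub_distrib, ← Finset.mul_sum]
  ring

lemma fracKernel_smul (hl : 0 < l) (y : En n) :
    fracKernel n s a y = l ^ ((n : ℝ) + 2 * s) * fracKernel n s a (l • y) := by
  unfold fracKernel
  rw [norm_smul, Real.norm_of_nonneg hl.le, mul_rpow hl.le (norm_nonneg y), mul_inv]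
  have := (Real.rpow_pos_of_pos hl ((n : ℝ) + 2 * s)).ne'
  field_simp

lemma translationForm_comp_smul_mul_fracKernel (u : En n → ℝ) (hl : 0 < l) (y : En n) :
    translationForm (fun x => u (l • x)) (fun x => u (l • x)) y * fracKernel n s a y
      = l ^ (2 * s) * (translationForm u u (l • y) * fracKernel n s a (l • y)) := by
  rw [translationForm_comp_smul u hl, fracKernel_smul hl, finrank_euclideanSpace_fin,
    rpow_add hl, rpow_natCast]
  have : l ^ n ≠ 0 := by positivity
  field_simp

lemma fracForm_comp_smul (u : En n → ℝ) (hl : 0 < l) :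
    fracForm n s a (fun x => u (l • x)) (fun x => u (l • x))
      = (l ^ n)⁻¹ * l ^ (2 * s) * fracForm n s a u u := by
  simp only [fracForm, translationForm_comp_smul_mul_fracKernel u hl]
  rw [integral_const_mul, Measure.integral_comp_smul volume
    (fun y => translationForm u u y * fracKernel n s a y) l, finrank_euclideanSpace_fin,
    abs_of_pos (by positivity), smul_eq_mul]
  ring

namespace IsMixedSolution

lemma integrableOn_norm_fderiv_sq (S : IsMixedSolution Ω s a u f) :
    IntegrableOn (fun x => ‖fderiv ℝ u x‖ ^ 2) Ω :=
  (integrableOn_norm_fderiv_sq_and_integral_le S.continuous S.hasCompactSupport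
    S.isOpen.measurableSet (fun x hx => (S.hasFDerivAt hx).differentiableAt)
    (fun h hh => by linarith [(S.energy hh).2, S.fracForm_self_nonneg u])
    (tendsto_const_nhds (x := ∫ x, f x * u x))).1

lemma two_mul_fracForm_comp_smul_le (S : IsMixedSolution Ω s a u f) (hl : 0 < l)
    (hT : tsupport (fun x => u (l • x)) ⊆ Ω) :
    2 * l ^ (((n : ℝ) - 2) / 2) * fracForm n s a u (fun x => u (l • x))
      ≤ (1 + l ^ (2 * s - 2)) * fracForm n s a u u := by
  set c : ℝ := l ^ (((n : ℝ) - 2) / 2)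
  set w : En n → ℝ := fun x => u (l • x)
  have hw : Continuous w := S.continuous.comp (continuous_const_smul l)
  have cw : HasCompactSupport w :=
    S.hasCompactSupport.comp_homeomorph (Homeomorph.smulOfNeZero l hl.ne')
  have huu := (S.energy one_pos).1
  have huw := S.integrable_translationForm_mul_fracKernel hw cw hT
  have hww : Integrable fun y => translationForm w w y * fracKernel n s a y := by
    simp only [w, translationForm_comp_smul_mul_fracKernel u hl]
    exact (huu.comp_smul hl.ne').const_mul _
  have hscale : c ^ 2 * fracForm n s a w w = l ^ (2 * s - 2) * fracForm n s a u u := by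
    rw [fracForm_comp_smul u hl, rpow_sub_two_div_two_sq hl, rpow_sub hl, rpow_two]
    field_simp
  have hnonneg := S.fracForm_self_nonneg fun x => u x - c * w x
  have hexpand : fracForm n s a (fun x => u x - c * w x) (fun x => u x - c * w x)
      = fracForm n s a u u + -(2 * c) * fracForm n s a u w + c ^ 2 * fracForm n s a w w := by
    rw [← one_mul (fracForm n s a u u)]
    unfold fracForm
    rw [← integral_linearComb_three huu huw hww]
    refine integral_congr_ae (.of_forall fun y => ?_)
    simp only [translationForm_sub_mul_self S.continuous S.hasCompactSupport hw cw c]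
    ring
  linarith

/-- The scaling exponent `(n-2)/2` leaves the Dirichlet form invariant, so expanding the energy of
`u - l^{(n-2)/2} u(l·)` yields twice the energy of `u`, up to the defect `1 - l^{2s-2}` of the
fractional part. On `Ω` minus the shrunken domain the dilate vanishes, which leaves `‖∇u‖²`. -/
lemma integral_layer_add_fracForm_le (S : IsMixedSolution Ω s a u f) (hl : 0 < l)
    (hT : tsupport (fun x => u (l • x)) ⊆ Ω) :
    (∫ x in boundaryLayer Ω l, ‖fderiv ℝ u x‖ ^ 2)
        + (1 - l ^ (2 * s - 2)) * fracForm n s a u u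
      ≤ 2 * ((∫ x, f x * u x) - l ^ (((n : ℝ) - 2) / 2) * ∫ x, f x * u (l • x)) := by
  have hfrac := S.two_mul_fracForm_comp_smul_le hl hT
  set c : ℝ := l ^ (((n : ℝ) - 2) / 2)
  set w : En n → ℝ := fun x => u (l • x)
  let z : En n → ℝ := fun x => u x - c * w x
  have hw : Continuous w := S.continuous.comp (continuous_const_smul l)
  have cw : HasCompactSupport w :=
    S.hasCompactSupport.comp_homeomorph (Homeomorph.smulOfNeZero l hl.ne')
  have hz : Continuous z := S.continuous.sub (continuous_const.mul hw)
  have cz : HasCompactSupport z := S.hasCompactSupport.sub cw.mul_left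
  have hm (h : ℝ) (hh : 0 < h) : discreteDirichlet z z h
      ≤ 2 * ((∫ x, f x * u x) - fracForm n s a u u) - 2 * c * discreteDirichlet u w h := by
    have hscale : c ^ 2 * discreteDirichlet w w h = discreteDirichlet u u (l * h) := by
      rw [discreteDirichlet_comp_smul u hl, rpow_sub_two_div_two_sq hl]
      field_simp
    rw [discreteDirichlet_sub_mul_self S.continuous S.hasCompactSupport hw cw, hscale]
    linarith [(S.energy hh).2, (S.energy (mul_pos hl hh)).2]
  have hU := isOpen_boundaryLayer S.isOpen l
  have hzu (x : En n) (hx : x ∈ boundaryLayer Ω l) : z =ᶠ[𝓝 x] u := by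
    filter_upwards [hU.mem_nhds hx] with y hy
    simp only [z, w, S.eq_zero (l • y) fun h => hy.2 (subset_closure h), mul_zero, sub_zero]
  have hlayer := (integrableOn_norm_fderiv_sq_and_integral_le hz cz hU.measurableSet
    (fun x hx => (S.hasFDerivAt hx.1).differentiableAt.congr_of_eventuallyEq (hzu x hx)) hm
    (((S.tendsto_discreteDirichlet hw cw hT).const_mul _).const_sub _)).2
  rw [setIntegral_congr_fun hU.measurableSet (g := fun x => ‖fderiv ℝ u x‖ ^ 2)
    fun x hx => by simp only [(hzu x hx).fderiv_eq]] at hlayer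
  linarith

end IsMixedSolution

end Dilation

section StarShaped

lemma exists_eq_zero_forall_Ioc_lt_zero {g : ℝ → ℝ} (hg : Continuous g) {a b : ℝ} (hab : a ≤ b)
    (ha : 0 ≤ g a) (hb : g b < 0) : ∃ t ∈ Ico a b, g t = 0 ∧ ∀ r ∈ Ioc t b, g r < 0 := by
  have hK : IsCompact (Icc a b ∩ {t | 0 ≤ g t}) :=
    isCompact_Icc.inter_right (isClosed_le continuous_const hg)
  obtain ⟨t, ⟨ht, htg⟩, hmax⟩ := hK.exists_isGreatest ⟨a, left_mem_Icc.2 hab, ha⟩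
  have htb : t < b := ht.2.lt_of_ne fun h => (h ▸ htg : 0 ≤ g b).not_gt hb
  have hneg (r : ℝ) (hr : r ∈ Ioc t b) : g r < 0 := by
    by_contra! h
    exact hr.1.not_ge (hmax ⟨⟨ht.1.trans hr.1.le, hr.2⟩, h⟩)
  have hle : g t ≤ 0 := by
    refine le_of_tendsto (hg.continuousWithinAt (s := Ioi t)) ?_
    filter_upwards [Ioc_mem_nhdsGT htb] with r hr using (hneg r hr).le
  exact ⟨t, ⟨ht.1, htb⟩, le_antisymm hle htg, hneg⟩

section NormedSpace

variable {E : Type*} [NormedAddCommGroup E] [NormedSpace ℝ E] {Ω : Set E} {κ l : ℝ}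

lemma starConvex_setOf_lt_zero {φ : E → ℝ} (hφ : Differentiable ℝ φ) {p : E}
    (hp : ∀ x ∈ frontier {x | φ x < 0}, 0 < fderiv ℝ φ x (x - p)) :
    StarConvex ℝ p {x | φ x < 0} := by
  refine starConvex_iff_segment_subset.2 fun x hx => ?_
  rw [segment_eq_image_lineMap]
  rintro _ ⟨t₀, ht₀, rfl⟩
  by_contra! hcon
  let γ : ℝ → E := AffineMap.lineMap p x
  have hγ : Continuous γ := AffineMap.lineMap_continuous
  obtain ⟨t, ht, ht_zero, hneg⟩ := exists_eq_zero_forall_Ioc_lt_zero (hφ.continuous.comp hγ)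
    ht₀.2 (not_lt.1 hcon) (by simpa [γ] using hx)
  have hfront : γ t ∈ frontier {x | φ x < 0} := by
    refine ⟨mem_closure_of_tendsto (hγ.continuousWithinAt (s := Ioi t)) ?_,
      fun h => ht_zero.not_lt (interior_subset (s := {x | φ x < 0}) h)⟩
    filter_upwards [Ioc_mem_nhdsGT ht.2] with r hr using hneg r hr
  have hderiv : HasDerivAt (φ ∘ γ) (fderiv ℝ φ (γ t) (x - p)) t :=
    (hφ (γ t)).hasFDerivAt.comp_hasDerivAt t AffineMap.hasDerivAt_lineMap
  have hpos : 0 < fderiv ℝ φ (γ t) (x - p) := by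
    have h := hp _ hfront
    rw [show γ t - p = t • (x - p) by simp [γ, AffineMap.lineMap_apply], map_smul] at h
    exact pos_of_mul_pos_right h (ht₀.1.trans ht.1)
  have hle : fderiv ℝ φ (γ t) (x - p) ≤ 0 := by
    refine le_of_tendsto
      ((hasDerivWithinAt_iff_tendsto_slope' self_notMem_Ioi).1 hderiv.hasDerivWithinAt) ?_
    filter_upwards [Ioc_mem_nhdsGT ht.2] with r hr
    rw [slope_def_field, ht_zero, sub_zero]
    exact div_nonpos_of_nonpos_of_nonneg (hneg r hr).le (sub_nonneg.2 hr.1.le)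
  exact hle.not_gt hpos

/-- `Ω` is a bounded open set which is star-shaped with respect to every point of the open ball of
radius `κ` around the origin. -/
structure IsStarShapedAboutBall (Ω : Set E) (κ : ℝ) : Prop where
  isOpen : IsOpen Ω
  isBounded : IsBounded Ω
  radius_pos : 0 < κ
  starConvex : ∀ z, ‖z‖ < κ → StarConvex ℝ z Ω

namespace IsStarShapedAboutBall

lemma smul_notMem_closure (T : IsStarShapedAboutBall Ω κ) (hl : 1 < l) {x y : E} (hy : y ∉ Ω)
    (hxy : ‖y - x‖ < κ * (1 - l⁻¹)) : l • x ∉ closure Ω := by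
  intro hx
  have hl₀ : 0 < l := one_pos.trans hl
  have hd : 0 < 1 - l⁻¹ := sub_pos.2 (inv_lt_one_of_one_lt₀ hl)
  -- `y` lies on the segment from `Z x'` to `x'`
  let Z : E → E := fun x' => (1 - l⁻¹)⁻¹ • (y - l⁻¹ • x')
  have hZ : Continuous Z := by fun_prop
  have hZx : ‖Z (l • x)‖ < κ := by
    simp only [Z, inv_smul_smul₀ hl₀.ne', norm_smul]
    rwa [Real.norm_of_nonneg (inv_pos.2 hd).le, inv_mul_lt_iff₀ hd, mul_comm]
  obtain ⟨x', hx'Z, hx'Ω⟩ :=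
    mem_closure_iff.1 hx _ (isOpen_lt hZ.norm continuous_const) hZx
  apply hy
  convert T.starConvex (Z x') hx'Z hx'Ω hd.le (inv_pos.2 hl₀).le (sub_add_cancel _ _) using 1
  simp only [Z, smul_inv_smul₀ hd.ne', sub_add_cancel]

lemma mem_of_smul_mem_closure (T : IsStarShapedAboutBall Ω κ) (hl : 1 < l) {x : E}
    (hx : l • x ∈ closure Ω) : x ∈ Ω := by
  by_contra h
  refine T.smul_notMem_closure hl (x := x) h ?_ hx
  rw [sub_self, norm_zero]
  exact mul_pos T.radius_pos (sub_pos.2 (inv_lt_one_of_one_lt₀ hl))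

lemma tsupport_comp_smul_subset {F : Type*} [Zero F] (T : IsStarShapedAboutBall Ω κ) (hl : 1 < l)
    {u : E → F} (hu : ∀ x ∉ Ω, u x = 0) : tsupport (fun x => u (l • x)) ⊆ Ω := by
  have h : tsupport (fun x => u (l • x)) ⊆ {x | l • x ∈ closure Ω} :=
    closure_minimal (fun x hx => subset_closure (by_contra fun h => hx (hu _ h)))
      (isClosed_closure.preimage (continuous_const_smul l))
  exact fun x hx => T.mem_of_smul_mem_closure hl (h hx)

lemma measureReal_boundaryLayer_le [FiniteDimensional ℝ E] [MeasurableSpace E] [BorelSpace E]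
    (μ : Measure E) [μ.IsAddHaarMeasure] (T : IsStarShapedAboutBall Ω κ) (hl : 1 < l) :
    μ.real (boundaryLayer Ω l) ≤ (1 - (l ^ Module.finrank ℝ E)⁻¹) * μ.real Ω := by
  have hl₀ : 0 < l := one_pos.trans hl
  have hsmul (x : E) : l • l⁻¹ • x = x := smul_inv_smul₀ hl₀.ne' x
  have hvol : μ.real (l⁻¹ • Ω) = (l ^ Module.finrank ℝ E)⁻¹ * μ.real Ω := by
    rw [Measure.real, Measure.addHaar_smul, ENNReal.toReal_mul,
      ENNReal.toReal_ofReal (abs_nonneg _), inv_pow, abs_of_pos (by positivity), Measure.real]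
  have hsub : l⁻¹ • Ω ⊆ Ω := by
    rintro _ ⟨x, hx, rfl⟩
    exact T.mem_of_smul_mem_closure hl ((hsmul x).symm ▸ subset_closure hx)
  have hdisj : Disjoint (l⁻¹ • Ω) (boundaryLayer Ω l) := by
    rw [Set.disjoint_left]
    rintro _ ⟨x, hx, rfl⟩ h
    exact h.2 ((hsmul x).symm ▸ subset_closure hx)
  have hfin : μ Ω ≠ ⊤ := T.isBounded.measure_lt_top.ne
  have hsum : μ.real (l⁻¹ • Ω) + μ.real (boundaryLayer Ω l) ≤ μ.real Ω := by
    rw [← measureReal_union hdisj (isOpen_boundaryLayer T.isOpen l).measurableSet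
      (measure_ne_top_of_subset hsub hfin)
      (measure_ne_top_of_subset (boundaryLayer_subset Ω l) hfin)]
    exact measureReal_mono (union_subset hsub (boundaryLayer_subset Ω l)) hfin
  linarith

end IsStarShapedAboutBall

end NormedSpace

namespace C2Domain

variable {n : ℕ}

protected lemma isOpen (D : C2Domain n) : IsOpen D.carrier := by
  rw [D.carrier_eq]
  exact isOpen_lt D.phi_smooth.continuous continuous_const

lemma exists_forall_fderiv_phi_pos (D : C2Domain n) {z₀ : En n} (h : D.StrictlyStarShapedAt z₀) :
    ∃ κ > 0, ∀ z, ‖z‖ < κ → ∀ x ∈ frontier D.carrier, 0 < fderiv ℝ D.phi x (x - (z₀ + z)) := by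
  have hK : IsCompact (frontier D.carrier) :=
    D.bounded.isCompact_closure.of_isClosed_subset isClosed_frontier frontier_subset_closure
  have hcont : Continuous (fderiv ℝ D.phi) := D.phi_smooth.continuous_fderiv two_ne_zero
  have hpos (x : En n) (hx : x ∈ frontier D.carrier) : 0 < fderiv ℝ D.phi x (x - z₀) := by
    have hν := h.2 x hx
    rw [C2Domain.nu, inner_smul_right, real_inner_comm, gradient,
      InnerProductSpace.toDual_symm_apply] at hν
    exact pos_of_mul_pos_right hν (inv_nonneg.2 (norm_nonneg _))
  obtain ⟨m, hm, hmin⟩ := hK.exists_forall_le' (f := fun x => fderiv ℝ D.phi x (x - z₀))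
    (by fun_prop) hpos
  obtain ⟨M, hM⟩ := hK.exists_bound_of_continuousOn hcont.continuousOn
  have hM₀ : 0 < |M| + 1 := by positivity
  refine ⟨m / (|M| + 1), div_pos hm hM₀, fun z hz x hx => ?_⟩
  have hz' : fderiv ℝ D.phi x z ≤ (|M| + 1) * ‖z‖ :=
    (le_abs_self _).trans (((fderiv ℝ D.phi x).le_opNorm z).trans
      (mul_le_mul_of_nonneg_right (by linarith [hM x hx, le_abs_self M]) (norm_nonneg z)))
  rw [lt_div_iff₀ hM₀] at hz
  rw [← sub_sub, map_sub]
  linarith [hmin x hx]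

lemma exists_isStarShapedAboutBall (D : C2Domain n) {z₀ : En n} (h : D.StrictlyStarShapedAt z₀) :
    ∃ κ, IsStarShapedAboutBall {x | x + z₀ ∈ D.carrier} κ := by
  obtain ⟨κ, hκ, hpos⟩ := D.exists_forall_fderiv_phi_pos h
  refine ⟨κ, D.isOpen.preimage (continuous_add_const z₀), ?_, hκ, fun z hz => ?_⟩
  · refine (D.bounded.vadd (-z₀)).subset fun x hx => ⟨x + z₀, hx, ?_⟩
    simp only [vadd_eq_add]
    abel
  · have hstar : StarConvex ℝ (z₀ + z) D.carrier := by
      rw [D.carrier_eq] at hpos ⊢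
      exact starConvex_setOf_lt_zero (D.phi_smooth.differentiable two_ne_zero) (hpos z hz)
    rw [add_comm] at hstar
    exact hstar.preimage_add_left

end C2Domain

end StarShaped

section DilationRate

variable {E : Type*} [NormedAddCommGroup E] [NormedSpace ℝ E] {Ω : Set E} {u : E → ℝ} {l R : ℝ}

lemma exists_exit_time (ho : IsOpen Ω) (hstar : StarConvex ℝ 0 Ω) (hu : ∀ x ∉ Ω, u x = 0)
    (hl : 1 < l) {x : E} (hx : x ∈ Ω) :
    ∃ τ ∈ Ioc 1 l, (∀ t ∈ Ico 1 τ, t • x ∈ Ω) ∧ u (τ • x) = u (l • x) := by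
  by_cases h : ∀ t ∈ Ico 1 l, t • x ∈ Ω
  · exact ⟨l, right_mem_Ioc.2 hl, h, rfl⟩
  push Not at h
  obtain ⟨t₀, ht₀, hexit⟩ := h
  have hK : IsCompact (Icc 1 l ∩ (fun t : ℝ => t • x) ⁻¹' Ωᶜ) :=
    isCompact_Icc.inter_right (ho.isClosed_compl.preimage (by fun_prop))
  obtain ⟨τ, ⟨hτ, hτx⟩, hmin⟩ := hK.exists_isLeast ⟨t₀, Ico_subset_Icc_self ht₀, hexit⟩
  have hτ₁ : 1 < τ := hτ.1.lt_of_ne fun h => hτx (by simpa [← h] using hx)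
  refine ⟨τ, ⟨hτ₁, hτ.2⟩, fun t ht => ?_, ?_⟩
  · by_contra h
    exact ht.2.not_ge (hmin ⟨⟨ht.1, ht.2.le.trans hτ.2⟩, h⟩)
  · rw [hu _ hτx, hu]
    intro hlx
    apply hτx
    have hmem := hstar.smul_mem hlx (div_nonneg (zero_le_one.trans hτ.1) (zero_le_one.trans hl.le))
      ((div_le_one (one_pos.trans hl)).2 hτ.2)
    rwa [smul_smul, div_mul_cancel₀ _ (one_pos.trans hl).ne'] at hmem

lemma enorm_sub_le_lintegral_fderiv_smul (ho : IsOpen Ω) (hu : ContDiffOn ℝ 1 u Ω) {x : E}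
    (hx : ‖x‖ ≤ R) {t : ℝ} (ht : 1 ≤ t) (hin : ∀ r ∈ Icc 1 t, r • x ∈ Ω) :
    ‖u (t • x) - u x‖ₑ ≤
      ENNReal.ofReal R * ∫⁻ r in Icc 1 t, Ω.indicator (fun y => ‖fderiv ℝ u y‖ₑ) (r • x) := by
  have hderiv (r : ℝ) (hr : r ∈ Icc 1 t) :
      HasDerivAt (fun r : ℝ => u (r • x)) (fderiv ℝ u (r • x) x) r := by
    have hline : HasDerivAt (fun r : ℝ => r • x) x r := by
      simpa only [one_smul, id_eq] using (hasDerivAt_id r).smul_const x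
    exact ((hu.differentiableOn one_ne_zero).differentiableAt
      (ho.mem_nhds (hin r hr))).hasFDerivAt.comp_hasDerivAt r hline
  have hcd : ContDiffOn ℝ 1 (fun r : ℝ => u (r • x)) (Icc 1 t) :=
    hu.comp (ContDiff.contDiffOn (by fun_prop)) hin
  have hftc := enorm_sub_le_lintegral_deriv_of_contDiffOn_Icc hcd ht
  rw [one_smul] at hftc
  refine hftc.trans ?_
  rw [← lintegral_const_mul' _ _ ENNReal.ofReal_ne_top]
  refine setLIntegral_mono' measurableSet_Icc fun r hr => ?_
  rw [(hderiv r hr).deriv, indicator_of_mem (hin r hr), mul_comm]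
  refine ((fderiv ℝ u (r • x)).le_opENorm x).trans (mul_le_mul_right ?_ _)
  rw [← ofReal_norm]
  exact ENNReal.ofReal_le_ofReal hx

lemma enorm_comp_smul_sub_le {κ : ℝ} (T : IsStarShapedAboutBall Ω κ) (hu : ContDiffOn ℝ 1 u Ω)
    (hc : Continuous u) (hz : ∀ x ∉ Ω, u x = 0) (hR : ∀ x ∈ Ω, ‖x‖ ≤ R) (hl : 1 < l) (x : E) :
    ‖u (l • x) - u x‖ₑ ≤
      ENNReal.ofReal R * ∫⁻ t in Icc 1 l, Ω.indicator (fun y => ‖fderiv ℝ u y‖ₑ) (t • x) := by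
  by_cases hx : x ∈ Ω
  swap
  · rw [hz x hx, hz _ fun h => hx (T.mem_of_smul_mem_closure hl (subset_closure h))]
    simp only [sub_self, enorm_zero, zero_le]
  obtain ⟨τ, hτ, hin, hval⟩ := exists_exit_time T.isOpen
    (T.starConvex 0 (norm_zero.trans_lt T.radius_pos)) hz hl hx
  have hlim : Tendsto (fun t : ℝ => ‖u (t • x) - u x‖ₑ) (𝓝[<] τ) (𝓝 ‖u (l • x) - u x‖ₑ) := by
    rw [← hval]
    have hcont : Continuous fun t : ℝ => ‖u (t • x) - u x‖ₑ := by fun_prop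
    exact hcont.continuousWithinAt
  refine le_of_tendsto hlim ?_
  filter_upwards [Ioo_mem_nhdsLT hτ.1] with t ht
  refine (enorm_sub_le_lintegral_fderiv_smul T.isOpen hu (hR x hx) ht.1.le
    fun r hr => hin r ⟨hr.1, hr.2.trans_lt ht.2⟩).trans ?_
  gcongr
  exact ht.2.le.trans hτ.2

lemma lintegral_comp_smul_le [FiniteDimensional ℝ E] [MeasurableSpace E] [BorelSpace E]
    (μ : Measure E) [μ.IsAddHaarMeasure] {F : E → ℝ≥0∞} (hF : Measurable F) {t : ℝ} (ht : 1 ≤ t) :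
    ∫⁻ x, F (t • x) ∂μ ≤ ∫⁻ x, F x ∂μ := by
  have ht₀ : 0 < t := one_pos.trans_le ht
  rw [← lintegral_map (g := fun x : E => t • x) hF (by fun_prop),
    Measure.map_addHaar_smul μ ht₀.ne', lintegral_smul_measure, smul_eq_mul]
  refine mul_le_of_le_one_left' ?_
  rw [ENNReal.ofReal_le_one, abs_of_pos (by positivity)]
  exact inv_le_one_of_one_le₀ (one_le_pow₀ ht)

lemma lintegral_enorm_comp_smul_sub_le [FiniteDimensional ℝ E] [MeasurableSpace E] [BorelSpace E]
    (μ : Measure E) [μ.IsAddHaarMeasure] {κ : ℝ} (T : IsStarShapedAboutBall Ω κ)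
    (hu : ContDiffOn ℝ 1 u Ω) (hc : Continuous u) (hz : ∀ x ∉ Ω, u x = 0)
    (hR : ∀ x ∈ Ω, ‖x‖ ≤ R) (hl : 1 < l) :
    ∫⁻ x, ‖u (l • x) - u x‖ₑ ∂μ ≤
      ENNReal.ofReal (l - 1) * (ENNReal.ofReal R * ∫⁻ x in Ω, ‖fderiv ℝ u x‖ₑ ∂μ) := by
  have hmeas : Measurable (Ω.indicator fun y => ‖fderiv ℝ u y‖ₑ) :=
    (measurable_fderiv ℝ u).enorm.indicator T.isOpen.measurableSet
  have hmeas₂ : Measurable fun p : E × ℝ => Ω.indicator (fun y => ‖fderiv ℝ u y‖ₑ) (p.2 • p.1) :=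
    hmeas.comp (by fun_prop)
  rw [← lintegral_indicator T.isOpen.measurableSet]
  calc ∫⁻ x, ‖u (l • x) - u x‖ₑ ∂μ
    _ ≤ ∫⁻ x, ENNReal.ofReal R *
          (∫⁻ t in Icc 1 l, Ω.indicator (fun y => ‖fderiv ℝ u y‖ₑ) (t • x)) ∂μ :=
      lintegral_mono (enorm_comp_smul_sub_le T hu hc hz hR hl)
    _ = ENNReal.ofReal R *
          ∫⁻ t in Icc 1 l, ∫⁻ x, Ω.indicator (fun y => ‖fderiv ℝ u y‖ₑ) (t • x) ∂μ := by
      rw [lintegral_const_mul' _ _ ENNReal.ofReal_ne_top,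
        lintegral_lintegral_swap hmeas₂.aemeasurable]
    _ ≤ ENNReal.ofReal R *
          ∫⁻ _ in Icc 1 l, ∫⁻ x, Ω.indicator (fun y => ‖fderiv ℝ u y‖ₑ) x ∂μ := by
      gcongr 1
      exact setLIntegral_mono' measurableSet_Icc fun t ht => lintegral_comp_smul_le μ hmeas ht.1
    _ = ENNReal.ofReal (l - 1) *
          (ENNReal.ofReal R * ∫⁻ x, Ω.indicator (fun y => ‖fderiv ℝ u y‖ₑ) x ∂μ) := by
      rw [setLIntegral_const, Real.volume_Icc]
      ring

namespace IsMixedSolution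

variable {n : ℕ} {Ω : Set (En n)} {s a κ : ℝ} {u f : En n → ℝ}

lemma integrableOn_fderiv (S : IsMixedSolution Ω s a u f) : IntegrableOn (fderiv ℝ u) Ω := by
  refine ((integrableOn_const (C := (1 : ℝ)) S.isBounded.measure_lt_top.ne).add
    S.integrableOn_norm_fderiv_sq).mono' (measurable_fderiv ℝ u).aestronglyMeasurable
    (.of_forall fun x => ?_)
  simp only [Pi.add_apply]
  nlinarith [sq_nonneg (‖fderiv ℝ u x‖ - 1)]

lemma exists_integral_abs_comp_smul_sub_le (T : IsStarShapedAboutBall Ω κ)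
    (S : IsMixedSolution Ω s a u f) :
    ∃ C, 0 ≤ C ∧ ∀ l, 1 < l → ∫ x, |u (l • x) - u x| ≤ C * (l - 1) := by
  obtain ⟨R, hR⟩ := S.isBounded.exists_norm_le
  have hfin : ENNReal.ofReal R * ∫⁻ x in Ω, ‖fderiv ℝ u x‖ₑ ≠ ⊤ :=
    ENNReal.mul_ne_top ENNReal.ofReal_ne_top S.integrableOn_fderiv.2.ne
  refine ⟨(ENNReal.ofReal R * ∫⁻ x in Ω, ‖fderiv ℝ u x‖ₑ).toReal, ENNReal.toReal_nonneg,
    fun l hl => ?_⟩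
  have hle := ENNReal.toReal_mono (ENNReal.mul_ne_top ENNReal.ofReal_ne_top hfin)
    (lintegral_enorm_comp_smul_sub_le volume T (S.contDiffOn.of_le one_le_two) S.continuous
      S.eq_zero hR hl)
  have hmeas : AEStronglyMeasurable (fun x => u (l • x) - u x) :=
    ((S.continuous.comp (continuous_const_smul l)).sub S.continuous).aestronglyMeasurable
  rwa [ENNReal.toReal_mul, ENNReal.toReal_ofReal (sub_nonneg.2 hl.le), mul_comm,
    ← integral_norm_eq_lintegral_enorm hmeas] at hle

end IsMixedSolution

end DilationRate

section DilationDerivative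

variable {E V : Type*} [NormedAddCommGroup E] [NormedSpace ℝ E] [NormedAddCommGroup V] {w : E → V}

lemma eventually_norm_comp_smul_sub_lt (hw : Continuous w) (cw : HasCompactSupport w) {ρ : ℝ}
    (hρ : 0 < ρ) : ∀ᶠ l in 𝓝[>] (1 : ℝ), ∀ x, ‖w (l • x) - w x‖ < ρ := by
  obtain ⟨R, hR⟩ := cw.isBounded.exists_norm_le
  obtain ⟨d, hd, hh⟩ :=
    Metric.uniformContinuous_iff.1 (cw.uniformContinuous_of_continuous hw) ρ hρ
  have hlim : Tendsto (fun l : ℝ => (l - 1) * R) (𝓝[>] 1) (𝓝 ((1 - 1) * R)) :=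
    (Continuous.tendsto (by fun_prop) _).mono_left nhdsWithin_le_nhds
  rw [sub_self, zero_mul] at hlim
  filter_upwards [hlim.eventually (gt_mem_nhds hd), self_mem_nhdsWithin] with l hl (hl1 : 1 < l) x
  by_cases hx : ‖x‖ ≤ R
  · rw [← dist_eq_norm]
    refine hh ?_
    calc dist (l • x) x
      _ = (l - 1) * ‖x‖ := by
        rw [dist_eq_norm, ← norm_smul_of_nonneg (sub_nonneg.2 hl1.le), sub_smul, one_smul]
      _ ≤ (l - 1) * R := mul_le_mul_of_nonneg_left hx (sub_nonneg.2 hl1.le)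
      _ < d := hl
  · have hlx : ¬ ‖l • x‖ ≤ R := fun h => hx <| le_trans
      (by rw [norm_smul_of_nonneg (by linarith)]; nlinarith [norm_nonneg x]) h
    rwa [image_eq_zero_of_notMem_tsupport fun h => hx (hR x h),
      image_eq_zero_of_notMem_tsupport fun h => hlx (hR _ h), sub_zero, norm_zero]

variable [NormedSpace ℝ V] {F : V → ℝ}

lemma exists_abs_sub_sub_fderiv_le [ProperSpace V] (hF : ContDiff ℝ 1 F) (M : ℝ) {ε : ℝ}
    (hε : 0 < ε) : ∃ ρ > 0, ∀ z z', ‖z‖ ≤ M → ‖z'‖ ≤ M → ‖z' - z‖ < ρ →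
      |F z' - F z - fderiv ℝ F z (z' - z)| ≤ ε * ‖z' - z‖ := by
  have huc := (isCompact_closedBall (0 : V) M).uniformContinuousOn_of_continuous
    (hF.continuous_fderiv one_ne_zero).continuousOn
  obtain ⟨ρ, hρ, hh⟩ := Metric.uniformContinuousOn_iff.1 huc ε hε
  refine ⟨ρ, hρ, fun z z' hz hz' hzz => ?_⟩
  rw [← mem_closedBall_zero_iff] at hz hz'
  refine Convex.norm_image_sub_le_of_norm_fderiv_le' (𝕜 := ℝ) (s := segment ℝ z z')
    (fun y _ => hF.differentiable one_ne_zero y) (fun y hy => ?_) (convex_segment z z')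
    (left_mem_segment ℝ z z') (right_mem_segment ℝ z z')
  rw [← dist_eq_norm]
  refine (hh y ((convex_closedBall 0 M).segment_subset hz hz' hy) z hz ?_).le
  exact (dist_eq_norm y z).trans_lt ((norm_sub_le_of_mem_segment hy).trans_lt hzz)

variable [MeasurableSpace E]

/-- The pairing `∫ DF(w(x)) · w(lx) dx` of the nonlinearity with the dilated field. -/
def dilationPairing (μ : Measure E) (F : V → ℝ) (w : E → V) (l : ℝ) : ℝ :=
  ∫ x, fderiv ℝ F (w x) (w (l • x)) ∂μ

lemma integrable_fderiv_apply {X : Type*} [TopologicalSpace X] [MeasurableSpace X]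
    [OpensMeasurableSpace X] {ν : Measure X} [IsFiniteMeasureOnCompacts ν] {z z' : X → V}
    (hF : ContDiff ℝ 1 F) (hz : Continuous z) (hz' : Continuous z') (cz' : HasCompactSupport z') :
    Integrable (fun x => fderiv ℝ F (z x) (z' x)) ν := by
  have hcont := ((hF.continuous_fderiv one_ne_zero).comp hz).clm_apply hz'
  refine hcont.integrable_of_hasCompactSupport (cz'.mono fun x hx => ?_)
  contrapose! hx
  rw [Function.notMem_support] at hx ⊢
  simp only [hx, map_zero]

variable [BorelSpace E] [FiniteDimensional ℝ E] {μ : Measure E} [μ.IsAddHaarMeasure] {C : ℝ}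

lemma eventually_abs_potential_sub_dilationPairing_le [ProperSpace V] (hF : ContDiff ℝ 1 F)
    (hF0 : F 0 = 0) (hw : Continuous w) (cw : HasCompactSupport w) (hC : 0 ≤ C)
    (hrate : ∀ l, 1 < l → ∫ x, ‖w (l • x) - w x‖ ∂μ ≤ C * (l - 1)) {ε : ℝ} (hε : 0 < ε) :
    ∀ᶠ l in 𝓝[>] (1 : ℝ), |((l ^ Module.finrank ℝ E)⁻¹ - 1) * (∫ x, F (w x) ∂μ) -
      (dilationPairing μ F w l - dilationPairing μ F w 1)| ≤ ε * (l - 1) := by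
  obtain ⟨M, hM⟩ := cw.exists_bound_of_continuous hw
  obtain ⟨ρ, hρ, hh⟩ := exists_abs_sub_sub_fderiv_le hF M (show 0 < ε / (C + 1) by positivity)
  filter_upwards [eventually_norm_comp_smul_sub_lt hw cw hρ, self_mem_nhdsWithin]
    with l hlρ (hl : 1 < l)
  have hl0 : 0 < l := by linarith
  have hwl : Continuous (fun x => w (l • x)) := hw.comp (continuous_const_smul l)
  have cwl : HasCompactSupport (fun x => w (l • x)) :=
    cw.comp_homeomorph (Homeomorph.smulOfNeZero l hl0.ne')
  have hdw : Continuous (fun x => w (l • x) - w x) := hwl.sub hw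
  have cdw : HasCompactSupport (fun x => w (l • x) - w x) := cwl.sub cw
  have hFw : Integrable (fun x => F (w x)) μ :=
    (hF.continuous.comp hw).integrable_of_hasCompactSupport (cw.comp_left hF0)
  have hFwl : Integrable (fun x => F (w (l • x))) μ :=
    (hF.continuous.comp hwl).integrable_of_hasCompactSupport (cwl.comp_left hF0)
  have hscale : ∫ x, F (w (l • x)) ∂μ = (l ^ Module.finrank ℝ E)⁻¹ * ∫ x, F (w x) ∂μ := by
    rw [Measure.integral_comp_smul μ (fun x => F (w x)) l, abs_of_pos (by positivity), smul_eq_mul]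
  have hdiff : Integrable (fun x => F (w (l • x)) - F (w x)) μ := hFwl.sub hFw
  have hrem : ((l ^ Module.finrank ℝ E)⁻¹ - 1) * (∫ x, F (w x) ∂μ) -
      (dilationPairing μ F w l - dilationPairing μ F w 1) =
      ∫ x, (F (w (l • x)) - F (w x) - fderiv ℝ F (w x) (w (l • x) - w x)) ∂μ := by
    rw [integral_sub hdiff (integrable_fderiv_apply hF hw hdw cdw), integral_sub hFwl hFw, hscale,
      sub_one_mul]
    simp only [dilationPairing, one_smul, map_sub]
    rw [integral_sub (integrable_fderiv_apply hF hw hwl cwl)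
      (integrable_fderiv_apply hF hw hw cw)]
  rw [hrem, ← Real.norm_eq_abs]
  calc ‖∫ x, (F (w (l • x)) - F (w x) - fderiv ℝ F (w x) (w (l • x) - w x)) ∂μ‖
    _ ≤ ∫ x, ε / (C + 1) * ‖w (l • x) - w x‖ ∂μ := norm_integral_le_of_norm_le
        ((hdw.integrable_of_hasCompactSupport cdw).norm.const_mul _)
        (Eventually.of_forall fun x => hh _ _ (hM x) (hM _) (hlρ x))
    _ ≤ ε / (C + 1) * (C * (l - 1)) := by
        rw [integral_const_mul]; gcongr; exact hrate l hl
    _ ≤ ε / (C + 1) * ((C + 1) * (l - 1)) := by gcongr; linarith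
    _ = ε * (l - 1) := by field_simp

lemma tendsto_slope_nhdsGT_one {g : ℝ → ℝ} {g' : ℝ} (hg : HasDerivAt g g' 1) :
    Tendsto (fun l => (g l - g 1) / (l - 1)) (𝓝[>] 1) (𝓝 g') := by
  simpa only [slope_fun_def_field] using
    (hasDerivWithinAt_iff_tendsto_slope' self_notMem_Ioi).1 hg.hasDerivWithinAt

lemma tendsto_dilationPairing_slope [ProperSpace V] (hF : ContDiff ℝ 1 F) (hF0 : F 0 = 0)
    (hw : Continuous w) (cw : HasCompactSupport w) (hC : 0 ≤ C)
    (hrate : ∀ l, 1 < l → ∫ x, ‖w (l • x) - w x‖ ∂μ ≤ C * (l - 1)) (c : ℝ) :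
    Tendsto (fun l => (dilationPairing μ F w 1 - l ^ c * dilationPairing μ F w l) / (l - 1))
      (𝓝[>] 1) (𝓝 (Module.finrank ℝ E * (∫ x, F (w x) ∂μ) - c * dilationPairing μ F w 1)) := by
  set d := Module.finrank ℝ E
  have hrem : Tendsto (fun l => (((l ^ d)⁻¹ - 1) * (∫ x, F (w x) ∂μ) -
      (dilationPairing μ F w l - dilationPairing μ F w 1)) / (l - 1)) (𝓝[>] 1) (𝓝 0) := by
    rw [Metric.tendsto_nhds]
    intro ε hε
    filter_upwards [eventually_abs_potential_sub_dilationPairing_le hF hF0 hw cw hC hrate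
      (half_pos hε), self_mem_nhdsWithin] with l h hl
    have hl' : 0 < l - 1 := sub_pos.2 hl
    rw [Real.dist_eq, sub_zero, abs_div, abs_of_pos hl', div_lt_iff₀ hl']
    exact h.trans_lt (mul_lt_mul_of_pos_right (half_lt_self hε) hl')
  have hvol : Tendsto (fun l : ℝ => ((l ^ d)⁻¹ - 1) / (l - 1)) (𝓝[>] 1) (𝓝 (-(d : ℝ))) := by
    simpa using tendsto_slope_nhdsGT_one ((hasDerivAt_pow d (1 : ℝ)).fun_inv (by simp))
  have hrpow := Real.hasDerivAt_rpow_const (x := 1) (p := c) (Or.inl one_ne_zero)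
  have hscale : Tendsto (fun l : ℝ => (l ^ c - 1) / (l - 1)) (𝓝[>] 1) (𝓝 c) := by
    simpa using tendsto_slope_nhdsGT_one hrpow
  have hone : Tendsto (fun l : ℝ => l ^ c) (𝓝[>] 1) (𝓝 1) := by
    simpa using hrpow.continuousAt.tendsto.mono_left nhdsWithin_le_nhds
  refine ((hone.mul (hrem.sub (hvol.mul_const (∫ x, F (w x) ∂μ)))).sub
    (hscale.mul_const (dilationPairing μ F w 1))).congr' ?_ |>.trans_eq (by ring_nf)
  filter_upwards [self_mem_nhdsWithin] with l hl
  have hl' : l - 1 ≠ 0 := (sub_pos.2 hl).ne'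
  field_simp
  ring

end DilationDerivative

section Pohozaev

/-- The Dirichlet energy of `u` in the boundary layer that the dilation by `l` removes from `Ω`. -/
def layerEnergy {n : ℕ} (Ω : Set (En n)) (u : En n → ℝ) (l : ℝ) : ℝ :=
  ∫ x in boundaryLayer Ω l, ‖fderiv ℝ u x‖ ^ 2

lemma layerEnergy_nonneg {n : ℕ} (Ω : Set (En n)) (u : En n → ℝ) (l : ℝ) :
    0 ≤ layerEnergy Ω u l :=
  integral_nonneg fun _ => sq_nonneg _

/-- The amount of energy gained by the dilation `x ↦ l x`: the Dirichlet energy of the boundary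
layer together with the scaling loss of the fractional energy. -/
def dilationEnergy {n : ℕ} (Ω : Set (En n)) (s a : ℝ) (u : En n → ℝ) (l : ℝ) : ℝ :=
  layerEnergy Ω u l + (1 - l ^ (2 * s - 2)) * fracForm n s a u u

namespace IsMixedSolution

variable {n : ℕ} {Ω : Set (En n)} {s a κ : ℝ} {u f : En n → ℝ}

lemma fracForm_dilation_nonneg (S : IsMixedSolution Ω s a u f) {l : ℝ} (hl : 1 < l) :
    0 ≤ (1 - l ^ (2 * s - 2)) * fracForm n s a u u := by
  have hs : 2 * s - 2 ≤ 0 := by linarith [S.exponent_mem.2]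
  exact mul_nonneg (sub_nonneg.2 (rpow_le_one_of_one_le_of_nonpos hl.le hs))
    (S.fracForm_self_nonneg u)

lemma dilationEnergy_nonneg (S : IsMixedSolution Ω s a u f) {l : ℝ} (hl : 1 < l) :
    0 ≤ dilationEnergy Ω s a u l :=
  add_nonneg (layerEnergy_nonneg Ω u l) (S.fracForm_dilation_nonneg hl)

lemma tendsto_layerEnergy_div (S : IsMixedSolution Ω s a u f)
    (h : Tendsto (fun l => dilationEnergy Ω s a u l / (l - 1)) (𝓝[>] 1) (𝓝 0)) :
    Tendsto (fun l => layerEnergy Ω u l / (l - 1)) (𝓝[>] 1) (𝓝 0) := by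
  refine squeeze_zero' ?_ ?_ h <;> filter_upwards [self_mem_nhdsWithin] with l (hl : 1 < l)
  · exact div_nonneg (layerEnergy_nonneg Ω u l) (sub_nonneg.2 hl.le)
  · exact div_le_div_of_nonneg_right (le_add_of_nonneg_right (S.fracForm_dilation_nonneg hl))
      (sub_nonneg.2 hl.le)

lemma fracForm_eq_zero_of_tendsto (S : IsMixedSolution Ω s a u f)
    (h : Tendsto (fun l => dilationEnergy Ω s a u l / (l - 1)) (𝓝[>] 1) (𝓝 0)) :
    fracForm n s a u u = 0 := by
  have hcoef : Tendsto (fun l : ℝ => (1 - l ^ (2 * s - 2)) / (l - 1)) (𝓝[>] 1)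
      (𝓝 (2 - 2 * s)) := by
    have hrpow := Real.hasDerivAt_rpow_const (x := 1) (p := 2 * s - 2) (Or.inl one_ne_zero)
    simpa using tendsto_slope_nhdsGT_one (hrpow.const_sub 1)
  have hle : (2 - 2 * s) * fracForm n s a u u ≤ 0 := by
    refine le_of_tendsto_of_tendsto (hcoef.mul_const _) h ?_
    filter_upwards [self_mem_nhdsWithin] with l (hl : 1 < l)
    rw [div_mul_eq_mul_div]
    exact div_le_div_of_nonneg_right (le_add_of_nonneg_left (layerEnergy_nonneg Ω u l))
      (sub_nonneg.2 hl.le)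
  nlinarith [S.fracForm_self_nonneg u, S.exponent_mem.2]

lemma dilationEnergy_le (S : IsMixedSolution Ω s a u f) (T : IsStarShapedAboutBall Ω κ) {l : ℝ}
    (hl : 1 < l) : dilationEnergy Ω s a u l ≤
      2 * ((∫ x, f x * u x) - l ^ (((n : ℝ) - 2) / 2) * ∫ x, f x * u (l • x)) :=
  S.integral_layer_add_fracForm_le (by linarith) (T.tsupport_comp_smul_subset hl S.eq_zero)

lemma translationForm_ne_zero (S : IsMixedSolution Ω s a u f) {R : ℝ} (hR : ∀ x ∈ Ω, ‖x‖ ≤ R)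
    {x y : En n} (hx : u x ≠ 0) (hy : 2 * R < ‖y‖) : translationForm u u y ≠ 0 := by
  intro hzero
  have hc : Continuous (fun x => (u (x + y) - u x) * (u (x + y) - u x)) := by
    have := S.continuous
    fun_prop
  have hae := (integral_eq_zero_iff_of_nonneg (fun x => mul_self_nonneg _)
    (integrable_translationForm S.continuous S.continuous S.hasCompactSupport y)).1 hzero
  have hxy := congrFun ((hc.ae_eq_iff_eq volume continuous_zero).1 hae) x
  have hxΩ : x ∈ Ω := by_contra fun h => hx (S.eq_zero x h)
  have hxyΩ : x + y ∉ Ω := fun h => by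
    have := norm_sub_le (x + y) x
    rw [add_sub_cancel_left] at this
    linarith [hR x hxΩ, hR _ h]
  exact hx (by simpa [S.eq_zero _ hxyΩ] using hxy)

lemma eq_zero_of_fracForm_eq_zero (S : IsMixedSolution Ω s a u f) (ha : 0 < a)
    (h : fracForm n s a u u = 0) : u = 0 := by
  by_contra hu
  obtain ⟨x, hx⟩ := Function.ne_iff.1 hu
  obtain ⟨R, hR0, hR⟩ := S.isBounded.exists_pos_norm_le
  have hae := (integral_eq_zero_iff_of_nonneg (fun y => mul_nonneg
    (translationForm_self_nonneg u y) (fracKernel_nonneg S.exponent_mem ha.le y))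
    (S.energy one_pos).1).1 h
  have : Nonempty (Fin n) := ⟨⟨0, S.dim_pos⟩⟩
  have hopen : IsOpen {y : En n | 2 * R < ‖y‖} := isOpen_lt continuous_const continuous_norm
  have hne : {y : En n | 2 * R < ‖y‖}.Nonempty := by
    obtain ⟨y, hy⟩ := exists_norm_eq (En n) (by positivity : 0 ≤ 2 * R + 1)
    exact ⟨y, (lt_add_one (2 * R)).trans_eq hy.symm⟩
  refine (hopen.measure_pos volume hne).ne' (measure_mono_null (fun y hy => ?_) (ae_iff.1 hae))
  have hy0 : 0 < ‖y‖ := (by positivity : 0 ≤ 2 * R).trans_lt hy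
  have hk : fracKernel n s a y ≠ 0 := by
    have := cK_pos n S.exponent_mem
    unfold fracKernel
    positivity
  exact mul_ne_zero (S.translationForm_ne_zero hR hx hy) hk

end IsMixedSolution

/-- The pair `(u, v)` solves in `Ω` the mixed local-nonlocal system with right-hand side
`(∂₁F(u, v), ∂₂F(u, v))`, where the potential is normalized by `F(0, 0) = 0`. -/
structure IsGradientSystem {n : ℕ} (Ω : Set (En n)) (s₁ a₁ s₂ a₂ : ℝ) (F : ℝ × ℝ → ℝ)
    (u v : En n → ℝ) : Prop where
  contDiff : ContDiff ℝ 1 F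
  map_zero : F 0 = 0
  fst : IsMixedSolution Ω s₁ a₁ u (fun x => fderiv ℝ F (u x, v x) (1, 0))
  snd : IsMixedSolution Ω s₂ a₂ v (fun x => fderiv ℝ F (u x, v x) (0, 1))

/-- The quantity `n ∫ F(u, v) - (n - 2)/2 ∫ DF(u, v)·(u, v)`, which Pohozaev's identity equates
with a boundary integral. -/
def pohozaevDefect {n : ℕ} (F : ℝ × ℝ → ℝ) (u v : En n → ℝ) : ℝ :=
  n * (∫ x, F (u x, v x)) - ((n : ℝ) - 2) / 2 * ∫ x, fderiv ℝ F (u x, v x) (u x, v x)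

namespace IsGradientSystem

variable {n : ℕ} {Ω : Set (En n)} {s₁ a₁ s₂ a₂ κ : ℝ} {F : ℝ × ℝ → ℝ} {u v : En n → ℝ}

lemma continuous (S : IsGradientSystem Ω s₁ a₁ s₂ a₂ F u v) :
    Continuous fun x => (u x, v x) :=
  S.fst.continuous.prodMk S.snd.continuous

lemma hasCompactSupport (S : IsGradientSystem Ω s₁ a₁ s₂ a₂ F u v) :
    HasCompactSupport fun x => (u x, v x) :=
  HasCompactSupport.intro S.fst.isBounded.isCompact_closure fun x hx => by
    have hxΩ : x ∉ Ω := fun h => hx (subset_closure h)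
    rw [S.fst.eq_zero x hxΩ, S.snd.eq_zero x hxΩ, Prod.mk_zero_zero]

lemma dilationPairing_eq (S : IsGradientSystem Ω s₁ a₁ s₂ a₂ F u v) {l : ℝ} (hl : 1 ≤ l) :
    dilationPairing volume F (fun x => (u x, v x)) l =
      (∫ x, fderiv ℝ F (u x, v x) (1, 0) * u (l • x)) +
        ∫ x, fderiv ℝ F (u x, v x) (0, 1) * v (l • x) := by
  have hl0 : l ≠ 0 := by linarith
  have hint {w g : En n → ℝ} (hg : Continuous g) (hw : Continuous w) (cw : HasCompactSupport w) :
      Integrable (fun x => g x * w (l • x)) :=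
    integrable_mul_of_hasCompactSupport hg (hw.comp (continuous_const_smul l))
      (cw.comp_homeomorph (Homeomorph.smulOfNeZero l hl0))
  rw [← integral_add (hint S.fst.continuous_rhs S.fst.continuous S.fst.hasCompactSupport)
    (hint S.snd.continuous_rhs S.snd.continuous S.snd.hasCompactSupport)]
  refine integral_congr_ae (.of_forall fun x => ?_)
  have hsplit : (u (l • x), v (l • x)) = u (l • x) • ((1 : ℝ), (0 : ℝ)) + v (l • x) • (0, 1) := by
    simp
  simp only [hsplit, map_add, map_smul, smul_eq_mul, mul_comm]

lemma dilationEnergy_add_le (S : IsGradientSystem Ω s₁ a₁ s₂ a₂ F u v)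
    (T : IsStarShapedAboutBall Ω κ) {l : ℝ} (hl : 1 < l) :
    dilationEnergy Ω s₁ a₁ u l + dilationEnergy Ω s₂ a₂ v l ≤
      2 * (dilationPairing volume F (fun x => (u x, v x)) 1 -
        l ^ (((n : ℝ) - 2) / 2) * dilationPairing volume F (fun x => (u x, v x)) l) := by
  have hu := S.fst.dilationEnergy_le T hl
  have hv := S.snd.dilationEnergy_le T hl
  rw [S.dilationPairing_eq hl.le, S.dilationPairing_eq le_rfl]
  simp only [one_smul]
  linarith

lemma exists_integral_norm_comp_smul_sub_le (S : IsGradientSystem Ω s₁ a₁ s₂ a₂ F u v)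
    (T : IsStarShapedAboutBall Ω κ) : ∃ C, 0 ≤ C ∧ ∀ l, 1 < l →
      ∫ x, ‖(u (l • x), v (l • x)) - (u x, v x)‖ ≤ C * (l - 1) := by
  obtain ⟨C₁, hC₁, hu⟩ := S.fst.exists_integral_abs_comp_smul_sub_le T
  obtain ⟨C₂, hC₂, hv⟩ := S.snd.exists_integral_abs_comp_smul_sub_le T
  refine ⟨C₁ + C₂, add_nonneg hC₁ hC₂, fun l hl => ?_⟩
  have hint {w : En n → ℝ} (hw : Continuous w) (cw : HasCompactSupport w) :
      Integrable (fun x => |w (l • x) - w x|) :=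
    (((hw.comp (continuous_const_smul l)).sub hw).integrable_of_hasCompactSupport
      ((cw.comp_homeomorph (Homeomorph.smulOfNeZero l (by linarith))).sub cw)).abs
  have hiu := hint S.fst.continuous S.fst.hasCompactSupport
  have hiv := hint S.snd.continuous S.snd.hasCompactSupport
  calc ∫ x, ‖(u (l • x), v (l • x)) - (u x, v x)‖
    _ ≤ ∫ x, (|u (l • x) - u x| + |v (l • x) - v x|) :=
      integral_mono_of_nonneg (.of_forall fun _ => norm_nonneg _) (hiu.add hiv)
        (.of_forall fun _ => max_le_add_of_nonneg (abs_nonneg _) (abs_nonneg _))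
    _ ≤ (C₁ + C₂) * (l - 1) := by
      rw [integral_add hiu hiv, add_mul]
      exact add_le_add (hu l hl) (hv l hl)

lemma tendsto_dilationPairing (S : IsGradientSystem Ω s₁ a₁ s₂ a₂ F u v)
    (T : IsStarShapedAboutBall Ω κ) :
    Tendsto (fun l => 2 * (dilationPairing volume F (fun x => (u x, v x)) 1 -
        l ^ (((n : ℝ) - 2) / 2) * dilationPairing volume F (fun x => (u x, v x)) l) / (l - 1))
      (𝓝[>] 1) (𝓝 (2 * pohozaevDefect F u v)) := by
  obtain ⟨C, hC, hrate⟩ := S.exists_integral_norm_comp_smul_sub_le T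
  simpa only [mul_div_assoc, finrank_euclideanSpace_fin, pohozaevDefect, dilationPairing, one_smul]
    using (tendsto_dilationPairing_slope S.contDiff S.map_zero S.continuous S.hasCompactSupport
      hC hrate (((n : ℝ) - 2) / 2)).const_mul 2

theorem pohozaevDefect_nonneg (S : IsGradientSystem Ω s₁ a₁ s₂ a₂ F u v)
    (T : IsStarShapedAboutBall Ω κ) : 0 ≤ pohozaevDefect F u v := by
  refine nonneg_of_mul_nonneg_right (ge_of_tendsto (S.tendsto_dilationPairing T) ?_) two_pos
  filter_upwards [self_mem_nhdsWithin] with l (hl : 1 < l)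
  exact div_nonneg ((add_nonneg (S.fst.dilationEnergy_nonneg hl)
    (S.snd.dilationEnergy_nonneg hl)).trans (S.dilationEnergy_add_le T hl)) (sub_nonneg.2 hl.le)

lemma tendsto_dilationEnergy_div (S : IsGradientSystem Ω s₁ a₁ s₂ a₂ F u v)
    (T : IsStarShapedAboutBall Ω κ) (h : pohozaevDefect F u v = 0) :
    Tendsto (fun l => dilationEnergy Ω s₁ a₁ u l / (l - 1)) (𝓝[>] 1) (𝓝 0) ∧
      Tendsto (fun l => dilationEnergy Ω s₂ a₂ v l / (l - 1)) (𝓝[>] 1) (𝓝 0) := by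
  have hlim := S.tendsto_dilationPairing T
  rw [h, mul_zero] at hlim
  constructor <;> refine squeeze_zero' ?_ ?_ hlim <;>
    filter_upwards [self_mem_nhdsWithin] with l (hl : 1 < l)
  · exact div_nonneg (S.fst.dilationEnergy_nonneg hl) (sub_nonneg.2 hl.le)
  · exact div_le_div_of_nonneg_right ((le_add_of_nonneg_right
      (S.snd.dilationEnergy_nonneg hl)).trans (S.dilationEnergy_add_le T hl)) (sub_nonneg.2 hl.le)
  · exact div_nonneg (S.snd.dilationEnergy_nonneg hl) (sub_nonneg.2 hl.le)
  · exact div_le_div_of_nonneg_right ((le_add_of_nonneg_left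
      (S.fst.dilationEnergy_nonneg hl)).trans (S.dilationEnergy_add_le T hl)) (sub_nonneg.2 hl.le)

end IsGradientSystem

end Pohozaev

section BoundaryCutoff
open scoped Manifold ContDiff

section Metric

variable {E : Type*} [MetricSpace E] {Ω : Set E} {r : ℝ} {x : E}

/-- The Lipschitz cutoff which vanishes where the distance to the complement of `Ω` is at most
`r / 4` and equals `1` where it is at least `r / 2`. -/
def boundaryCutoff (Ω : Set E) (r : ℝ) (x : E) : ℝ :=
  min 1 (max 0 (4 / r * infDist x Ωᶜ - 1))

lemma boundaryCutoff_nonneg (Ω : Set E) (r : ℝ) (x : E) : 0 ≤ boundaryCutoff Ω r x :=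
  le_min zero_le_one (le_max_left _ _)

lemma boundaryCutoff_le_one (Ω : Set E) (r : ℝ) (x : E) : boundaryCutoff Ω r x ≤ 1 :=
  min_le_left _ _

lemma lipschitzWith_boundaryCutoff (Ω : Set E) (hr : 0 < r) :
    LipschitzWith (4 / r).toNNReal (boundaryCutoff Ω r) := by
  have h : LipschitzWith (4 / r).toNNReal fun x => 4 / r * infDist x Ωᶜ - 1 := by
    refine LipschitzWith.of_dist_le_mul fun x y => ?_
    have hxy := (lipschitz_infDist_pt Ωᶜ).dist_le_mul x y
    rw [NNReal.coe_one, one_mul, Real.dist_eq] at hxy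
    rw [Real.coe_toNNReal _ (by positivity), Real.dist_eq, sub_sub_sub_cancel_right, ← mul_sub,
      abs_mul, abs_of_pos (by positivity)]
    gcongr
  exact (h.const_max 0).const_min 1

lemma boundaryCutoff_eq_zero (hr : 0 < r) (h : infDist x Ωᶜ ≤ r / 4) :
    boundaryCutoff Ω r x = 0 := by
  have hle : 4 / r * infDist x Ωᶜ ≤ 1 := by
    rw [div_mul_eq_mul_div, div_le_one hr]
    linarith
  rw [boundaryCutoff, max_eq_left (sub_nonpos.2 hle), min_eq_right zero_le_one]

lemma boundaryCutoff_eq_one (hr : 0 < r) (h : r / 2 ≤ infDist x Ωᶜ) :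
    boundaryCutoff Ω r x = 1 := by
  have hle : 2 ≤ 4 / r * infDist x Ωᶜ := by
    rw [div_mul_eq_mul_div, le_div_iff₀ hr]
    linarith
  exact min_eq_left (le_max_of_le_right (by linarith))

lemma mem_of_infDist_compl_pos (h : 0 < infDist x Ωᶜ) : x ∈ Ω := by
  by_contra hx
  exact h.ne' (infDist_zero_of_mem hx)

lemma setOf_le_infDist_compl_subset (hr : 0 < r) : {x | r / 4 ≤ infDist x Ωᶜ} ⊆ Ω :=
  fun _ hx => mem_of_infDist_compl_pos ((by positivity : 0 < r / 4).trans_le hx)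

lemma isCompact_setOf_le_infDist_compl [ProperSpace E] (hΩ : IsBounded Ω) (hr : 0 < r) :
    IsCompact {x | r / 4 ≤ infDist x Ωᶜ} :=
  Metric.isCompact_of_isClosed_isBounded (isClosed_le continuous_const (continuous_infDist_pt _))
    (hΩ.subset (setOf_le_infDist_compl_subset hr))

lemma boundaryCutoff_eq_zero_of_notMem (hr : 0 < r) (hx : x ∉ {x | r / 4 ≤ infDist x Ωᶜ}) :
    boundaryCutoff Ω r x = 0 :=
  boundaryCutoff_eq_zero hr (not_le.1 hx).le

lemma integrable_boundaryCutoff_mul [ProperSpace E] [MeasurableSpace E] [BorelSpace E]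
    (μ : Measure E) [IsFiniteMeasureOnCompacts μ] (hΩ : IsBounded Ω) (hr : 0 < r) {h : E → ℝ}
    (hh : ContinuousOn h Ω) : Integrable (fun x => boundaryCutoff Ω r x * h x) μ := by
  have hK : IntegrableOn (fun x => boundaryCutoff Ω r x * h x) {x | r / 4 ≤ infDist x Ωᶜ} μ :=
    ((lipschitzWith_boundaryCutoff Ω hr).continuous.continuousOn.mul
      (hh.mono (setOf_le_infDist_compl_subset hr))).integrableOn_compact
      (isCompact_setOf_le_infDist_compl hΩ hr)
  refine hK.integrable_of_forall_notMem_eq_zero fun x hx => ?_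
  rw [boundaryCutoff_eq_zero_of_notMem hr hx, zero_mul]

end Metric

variable {E : Type*} [NormedAddCommGroup E] [NormedSpace ℝ E] {Ω : Set E} {κ l : ℝ} {x : E}

lemma exists_contDiff_cutoff [FiniteDimensional ℝ E] {K : Set E} (hΩ : IsOpen Ω) (hK : IsCompact K)
    (hKΩ : K ⊆ Ω) : ∃ χ : E → ℝ, ContDiff ℝ 1 χ ∧ HasCompactSupport χ ∧ tsupport χ ⊆ Ω ∧
      ∀ x ∈ K, χ =ᶠ[𝓝 x] 1 := by
  have : ProperSpace E := FiniteDimensional.proper ℝ E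
  obtain ⟨K', hK', hKK', hK'Ω⟩ := exists_compact_between hK hΩ hKΩ
  obtain ⟨χ, hχ_one, hχ_zero, -⟩ := exists_contMDiffMap_one_nhds_of_subset_interior (n := 1)
    (𝓘(ℝ, E)) hK.isClosed hKK'
  have hχK' : tsupport χ ⊆ K' := by
    refine closure_minimal (fun x hx => ?_) hK'.isClosed
    by_contra h
    exact hx (hχ_zero x h)
  exact ⟨χ, χ.contMDiff.contDiff, hK'.of_isClosed_subset (isClosed_tsupport _) hχK',
    hχK'.trans hK'Ω, eventually_nhdsSet_iff_forall.1 hχ_one⟩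

lemma lineDeriv_eq_zero_of_eventuallyEq_const {φ : E → ℝ} {c : ℝ} (h : φ =ᶠ[𝓝 x] fun _ => c)
    (e : E) : lineDeriv ℝ φ x e = 0 := by
  rw [h.lineDeriv_eq, lineDeriv, deriv_const]

lemma exists_lipschitzWith_cutoff_mul [FiniteDimensional ℝ E] {K : Set E} (hΩ : IsOpen Ω)
    (hK : IsCompact K) (hKΩ : K ⊆ Ω) {g : E → ℝ} (hg : ContDiffOn ℝ 1 g Ω) :
    ∃ (D : ℝ≥0) (G : E → ℝ), LipschitzWith D G ∧ ∀ x ∈ K, G =ᶠ[𝓝 x] g := by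
  obtain ⟨χ, hχ, cχ, hχΩ, hχ_one⟩ := exists_contDiff_cutoff hΩ hK hKΩ
  have hsub : tsupport (fun x => χ x * g x) ⊆ tsupport χ :=
    closure_mono (Function.support_mul_subset_left χ g)
  have hcont : ContDiff ℝ 1 fun x => χ x * g x := by
    refine contMDiff_iff_contDiff.1 (contMDiff_of_tsupport fun x hx => ContDiffAt.contMDiffAt ?_)
    exact hχ.contDiffAt.mul (hg.contDiffAt (hΩ.mem_nhds (hχΩ (hsub hx))))
  obtain ⟨D, hD⟩ := ContDiff.lipschitzWith_of_hasCompactSupport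
    (cχ.of_isClosed_subset (isClosed_tsupport _) hsub) hcont one_ne_zero
  refine ⟨D, _, hD, fun x hx => ?_⟩
  filter_upwards [hχ_one x hx] with y hy
  rw [hy, Pi.one_apply, one_mul]

lemma integral_mul_fderiv_eq [FiniteDimensional ℝ E] [MeasurableSpace E] [BorelSpace E]
    (μ : Measure E) [μ.IsAddHaarMeasure] {K : Set E} (hΩ : IsOpen Ω) (hK : IsCompact K)
    (hKΩ : K ⊆ Ω) {g φ : E → ℝ} (hg : ContDiffOn ℝ 1 g Ω) {C : ℝ≥0} (hφ : LipschitzWith C φ)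
    (hφK : ∀ x ∉ K, φ x = 0) (e : E) :
    ∫ x, φ x * fderiv ℝ g x e ∂μ = ∫ x, lineDeriv ℝ φ x (-e) * g x ∂μ := by
  obtain ⟨D, G, hG, hGg⟩ := exists_lipschitzWith_cutoff_mul hΩ hK hKΩ hg
  have hφ_ev (x : E) (hx : x ∉ K) : φ =ᶠ[𝓝 x] fun _ => 0 := by
    filter_upwards [hK.isClosed.isOpen_compl.mem_nhds hx] using hφK
  calc ∫ x, φ x * fderiv ℝ g x e ∂μ
    _ = ∫ x, lineDeriv ℝ G x e * φ x ∂μ := by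
        congr with x
        by_cases hx : x ∈ K
        · have hdiff : DifferentiableAt ℝ g x :=
            (hg.contDiffAt (hΩ.mem_nhds (hKΩ hx))).differentiableAt one_ne_zero
          rw [(hGg x hx).lineDeriv_eq, hdiff.lineDeriv_eq_fderiv, mul_comm]
        · rw [hφK x hx, zero_mul, mul_zero]
    _ = ∫ x, lineDeriv ℝ φ x (-e) * G x ∂μ :=
        hG.integral_lineDeriv_mul_eq hφ (HasCompactSupport.intro hK hφK) e
    _ = ∫ x, lineDeriv ℝ φ x (-e) * g x ∂μ := by
        congr with x
        by_cases hx : x ∈ K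
        · rw [(hGg x hx).self_of_nhds]
        · rw [lineDeriv_eq_zero_of_eventuallyEq_const (hφ_ev x hx), zero_mul, zero_mul]

namespace IsStarShapedAboutBall

lemma mul_one_sub_inv_pos (T : IsStarShapedAboutBall Ω κ) (hl : 1 < l) : 0 < κ * (1 - l⁻¹) :=
  mul_pos T.radius_pos (sub_pos.2 (inv_lt_one_of_one_lt₀ hl))

lemma lineDeriv_boundaryCutoff_eq_zero (T : IsStarShapedAboutBall Ω κ) (hl : 1 < l) (e : E)
    (hx : x ∉ boundaryLayer Ω l) : lineDeriv ℝ (boundaryCutoff Ω (κ * (1 - l⁻¹))) x e = 0 := by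
  have hr := T.mul_one_sub_inv_pos hl
  set r := κ * (1 - l⁻¹)
  have hcont : Continuous fun y : E => infDist y Ωᶜ := continuous_infDist_pt _
  rcases lt_or_ge (infDist x Ωᶜ) (r / 4) with hlt | hge
  · refine lineDeriv_eq_zero_of_eventuallyEq_const (c := 0) ?_ e
    filter_upwards [hcont.continuousAt.eventually_lt continuousAt_const hlt] with y hy
    exact boundaryCutoff_eq_zero hr hy.le
  rcases lt_or_ge (r / 2) (infDist x Ωᶜ) with hgt | hle
  · refine lineDeriv_eq_zero_of_eventuallyEq_const (c := 1) ?_ e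
    filter_upwards [continuousAt_const.eventually_lt hcont.continuousAt hgt] with y hy
    exact boundaryCutoff_eq_one hr hy.le
  have hpos : 0 < infDist x Ωᶜ := by linarith
  have hne : Ωᶜ.Nonempty := by
    by_contra! hne
    rw [hne, infDist_empty] at hpos
    exact hpos.false
  obtain ⟨y, hy, hxy⟩ := (infDist_lt_iff hne).1 (show infDist x Ωᶜ < r by linarith)
  rw [dist_comm, dist_eq_norm] at hxy
  exact absurd ⟨mem_of_infDist_compl_pos hpos, T.smul_notMem_closure hl hy hxy⟩ hx

lemma eventually_boundaryCutoff_eq_one [Nontrivial E] (T : IsStarShapedAboutBall Ω κ)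
    (hx : x ∈ Ω) : ∀ᶠ l in 𝓝[>] (1 : ℝ), boundaryCutoff Ω (κ * (1 - l⁻¹)) x = 1 := by
  have hne : Ωᶜ.Nonempty := by
    rw [nonempty_compl]
    rintro rfl
    exact NormedSpace.unbounded_univ ℝ E T.isBounded
  have hpos : 0 < infDist x Ωᶜ :=
    (T.isOpen.isClosed_compl.notMem_iff_infDist_pos hne).1 (not_not.2 hx)
  have hlim : Tendsto (fun l : ℝ => κ * (1 - l⁻¹)) (𝓝[>] 1) (𝓝 (κ * (1 - 1⁻¹))) :=
    ((tendsto_nhdsWithin_of_tendsto_nhds tendsto_id).inv₀ one_ne_zero).const_sub 1 |>.const_mul κ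
  rw [inv_one, sub_self, mul_zero] at hlim
  filter_upwards [hlim.eventually (gt_mem_nhds (mul_pos two_pos hpos)), self_mem_nhdsWithin]
    with l hlt (hl : 1 < l)
  exact boundaryCutoff_eq_one (T.mul_one_sub_inv_pos hl) (by linarith)

lemma tendsto_setIntegral_boundaryCutoff_mul [Nontrivial E] [MeasurableSpace E] [BorelSpace E]
    {μ : Measure E} {h : E → ℝ} (T : IsStarShapedAboutBall Ω κ) (hh : IntegrableOn h Ω μ) :
    Tendsto (fun l : ℝ => ∫ x in Ω, boundaryCutoff Ω (κ * (1 - l⁻¹)) x * h x ∂μ) (𝓝[>] 1)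
      (𝓝 (∫ x in Ω, h x ∂μ)) := by
  refine tendsto_integral_filter_of_dominated_convergence (fun x => ‖h x‖) ?_ ?_ hh.norm ?_
  · filter_upwards [self_mem_nhdsWithin] with l hl
    exact (lipschitzWith_boundaryCutoff Ω
      (T.mul_one_sub_inv_pos hl)).continuous.aestronglyMeasurable.mul hh.aestronglyMeasurable
  · refine .of_forall fun l => .of_forall fun x => ?_
    rw [norm_mul, Real.norm_of_nonneg (boundaryCutoff_nonneg Ω _ x)]
    exact mul_le_of_le_one_left (norm_nonneg _) (boundaryCutoff_le_one Ω _ x)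
  · rw [ae_restrict_iff' T.isOpen.measurableSet]
    refine .of_forall fun x hx => tendsto_const_nhds.congr' ?_
    filter_upwards [T.eventually_boundaryCutoff_eq_one hx] with l hl
    rw [hl, one_mul]

section Measure

variable [FiniteDimensional ℝ E] [MeasurableSpace E] [BorelSpace E] {μ : Measure E}
  [μ.IsAddHaarMeasure] {h : E → ℝ}

lemma abs_integral_boundaryCutoff_mul_fderiv_le (T : IsStarShapedAboutBall Ω κ) {g : E → ℝ}
    (hg : ContDiffOn ℝ 1 g Ω) (hgh : ∀ x ∈ Ω, |g x| ≤ h x) (hh : IntegrableOn h Ω μ) (e : E)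
    (hl : 1 < l) : |∫ x, boundaryCutoff Ω (κ * (1 - l⁻¹)) x * fderiv ℝ g x e ∂μ| ≤
      4 * l * ‖e‖ / κ * ((∫ x in boundaryLayer Ω l, h x ∂μ) / (l - 1)) := by
  have : ProperSpace E := FiniteDimensional.proper ℝ E
  have hr := T.mul_one_sub_inv_pos hl
  have hκ := T.radius_pos
  have hrl : 4 / (κ * (1 - l⁻¹)) * ‖e‖ = 4 * l * ‖e‖ / κ / (l - 1) := by
    have : l - 1 ≠ 0 := (sub_pos.2 hl).ne'
    have : l ≠ 0 := (one_pos.trans hl).ne'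
    field_simp
  set r := κ * (1 - l⁻¹)
  have hbound : ∀ x ∈ boundaryLayer Ω l,
      ‖lineDeriv ℝ (boundaryCutoff Ω r) x (-e) * g x‖ ≤ 4 / r * ‖e‖ * h x := fun x hx => by
    have hlip := norm_lineDeriv_le_of_lipschitz ℝ (x₀ := x) (v := -e)
      (lipschitzWith_boundaryCutoff Ω hr)
    rw [Real.coe_toNNReal _ (by positivity), norm_neg] at hlip
    rw [norm_mul]
    exact mul_le_mul hlip (hgh x hx.1) (norm_nonneg _) (by positivity)
  rw [integral_mul_fderiv_eq μ T.isOpen (isCompact_setOf_le_infDist_compl T.isBounded hr)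
      (setOf_le_infDist_compl_subset hr) hg (lipschitzWith_boundaryCutoff Ω hr)
      (fun x hx => boundaryCutoff_eq_zero_of_notMem hr hx) e, ← Real.norm_eq_abs,
    ← setIntegral_eq_integral_of_forall_compl_eq_zero fun x hx => by
      rw [T.lineDeriv_boundaryCutoff_eq_zero hl _ hx, zero_mul]]
  calc ‖∫ x in boundaryLayer Ω l, lineDeriv ℝ (boundaryCutoff Ω r) x (-e) * g x ∂μ‖
    _ ≤ ∫ x in boundaryLayer Ω l, 4 / r * ‖e‖ * h x ∂μ :=
        norm_integral_le_of_norm_le ((hh.mono_set (boundaryLayer_subset Ω l)).const_mul _)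
          ((ae_restrict_iff' (isOpen_boundaryLayer T.isOpen l).measurableSet).2 (.of_forall hbound))
    _ = 4 * l * ‖e‖ / κ * ((∫ x in boundaryLayer Ω l, h x ∂μ) / (l - 1)) := by
        rw [integral_const_mul, hrl, div_mul_eq_mul_div, mul_div_assoc]

lemma tendsto_integral_boundaryCutoff_mul_fderiv (T : IsStarShapedAboutBall Ω κ) {g : E → ℝ}
    (hg : ContDiffOn ℝ 1 g Ω) (hgh : ∀ x ∈ Ω, |g x| ≤ h x) (hh : IntegrableOn h Ω μ)
    (hlayer : Tendsto (fun l => (∫ x in boundaryLayer Ω l, h x ∂μ) / (l - 1)) (𝓝[>] 1) (𝓝 0))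
    (e : E) : Tendsto (fun l : ℝ =>
      ∫ x, boundaryCutoff Ω (κ * (1 - l⁻¹)) x * fderiv ℝ g x e ∂μ) (𝓝[>] 1) (𝓝 0) := by
  have hcoeff : Tendsto (fun l : ℝ => 4 * l * ‖e‖ / κ) (𝓝[>] 1) (𝓝 (4 * 1 * ‖e‖ / κ)) :=
    (Continuous.tendsto (by fun_prop) _).mono_left nhdsWithin_le_nhds
  have hlim := hcoeff.mul hlayer
  rw [mul_zero] at hlim
  refine squeeze_zero_norm' ?_ hlim
  filter_upwards [self_mem_nhdsWithin] with l hl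
  exact T.abs_integral_boundaryCutoff_mul_fderiv_le hg hgh hh e hl

lemma setIntegral_nonpos_of_le_sum_fderiv [Nontrivial E] (T : IsStarShapedAboutBall Ω κ)
    {ι : Type*} [Fintype ι] {g : ι → E → ℝ} {e : ι → E} {k : E → ℝ}
    (hg : ∀ i, ContDiffOn ℝ 1 (g i) Ω) (hgh : ∀ i, ∀ x ∈ Ω, |g i x| ≤ h x)
    (hh : IntegrableOn h Ω μ)
    (hlayer : Tendsto (fun l => (∫ x in boundaryLayer Ω l, h x ∂μ) / (l - 1)) (𝓝[>] 1) (𝓝 0))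
    (hk : IntegrableOn k Ω μ) (hkg : ∀ x ∈ Ω, k x ≤ ∑ i, fderiv ℝ (g i) x (e i)) :
    ∫ x in Ω, k x ∂μ ≤ 0 := by
  have : ProperSpace E := FiniteDimensional.proper ℝ E
  have hlim := tendsto_finsetSum Finset.univ fun i _ =>
    T.tendsto_integral_boundaryCutoff_mul_fderiv (hg i) (hgh i) hh hlayer (e i)
  rw [Finset.sum_const_zero] at hlim
  refine le_of_tendsto_of_tendsto (T.tendsto_setIntegral_boundaryCutoff_mul hk) hlim ?_
  filter_upwards [self_mem_nhdsWithin] with l hl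
  have hr := T.mul_one_sub_inv_pos hl
  set φ := boundaryCutoff Ω (κ * (1 - l⁻¹))
  have hint (i : ι) : Integrable (fun x => φ x * fderiv ℝ (g i) x (e i)) μ :=
    integrable_boundaryCutoff_mul μ T.isBounded hr
      (((hg i).continuousOn_fderiv_of_isOpen T.isOpen le_rfl).clm_apply continuousOn_const)
  have hφΩ (x : E) (hx : x ∉ Ω) : φ x = 0 :=
    boundaryCutoff_eq_zero hr (by rw [infDist_zero_of_mem hx]; positivity)
  have hφk : IntegrableOn (fun x => φ x * k x) Ω μ :=
    hk.bdd_mul (lipschitzWith_boundaryCutoff Ω hr).continuous.aestronglyMeasurable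
      (.of_forall fun x => by
        rw [Real.norm_of_nonneg (boundaryCutoff_nonneg Ω _ x)]
        exact boundaryCutoff_le_one Ω _ x)
  calc ∫ x in Ω, φ x * k x ∂μ
    _ ≤ ∫ x in Ω, ∑ i, φ x * fderiv ℝ (g i) x (e i) ∂μ := by
        refine setIntegral_mono_on hφk (integrable_finsetSum _ fun i _ => hint i).integrableOn
          T.isOpen.measurableSet fun x hx => ?_
        rw [← Finset.mul_sum]
        exact mul_le_mul_of_nonneg_left (hkg x hx) (boundaryCutoff_nonneg Ω _ x)
    _ = ∫ x, ∑ i, φ x * fderiv ℝ (g i) x (e i) ∂μ :=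
        setIntegral_eq_integral_of_forall_compl_eq_zero fun x hx =>
          Finset.sum_eq_zero fun i _ => by rw [hφΩ x hx, zero_mul]
    _ = ∑ i, ∫ x, φ x * fderiv ℝ (g i) x (e i) ∂μ := integral_finsetSum _ fun i _ => hint i

lemma measureReal_boundaryLayer_le_mul_sub_one (T : IsStarShapedAboutBall Ω κ) (hl : 1 < l) :
    μ.real (boundaryLayer Ω l) ≤ Module.finrank ℝ E * (l - 1) * μ.real Ω := by
  refine (T.measureReal_boundaryLayer_le μ hl).trans ?_
  have hl₀ : 0 < l := one_pos.trans hl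
  have hbernoulli := one_add_mul_le_pow (a := l⁻¹ - 1) (by linarith [inv_pos.2 hl₀])
    (Module.finrank ℝ E)
  rw [add_sub_cancel, inv_pow] at hbernoulli
  have hinv : 1 - l⁻¹ ≤ l - 1 := by
    calc 1 - l⁻¹
      _ = (l - 1) / l := by rw [sub_div, div_self hl₀.ne', one_div]
      _ ≤ l - 1 := div_le_self (sub_nonneg.2 hl.le) hl.le
  have hmul := mul_le_mul_of_nonneg_left hinv (Nat.cast_nonneg (α := ℝ) (Module.finrank ℝ E))
  gcongr
  linarith

lemma tendsto_integral_boundaryLayer_sq_div (T : IsStarShapedAboutBall Ω κ) {u : E → ℝ}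
    (hu : Continuous u) (hΩ : ∀ x ∉ Ω, u x = 0) :
    Tendsto (fun l => (∫ x in boundaryLayer Ω l, u x ^ 2 ∂μ) / (l - 1)) (𝓝[>] 1) (𝓝 0) := by
  have : ProperSpace E := FiniteDimensional.proper ℝ E
  have cu : HasCompactSupport u := HasCompactSupport.intro T.isBounded.isCompact_closure
    fun x hx => hΩ x fun h => hx (subset_closure h)
  rw [Metric.tendsto_nhds]
  intro ε hε
  set M := Module.finrank ℝ E * μ.real Ω
  have : 0 ≤ M := by positivity
  have hρ : 0 < √(ε / (M + 1)) := Real.sqrt_pos.2 (by positivity)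
  filter_upwards [eventually_norm_comp_smul_sub_lt hu cu hρ, self_mem_nhdsWithin]
    with l hlρ (hl : 1 < l)
  have hl' : 0 < l - 1 := sub_pos.2 hl
  have hpt : ∀ x ∈ boundaryLayer Ω l, ‖u x ^ 2‖ ≤ ε / (M + 1) := fun x hx => by
    have h := hlρ x
    rw [hΩ _ fun h => hx.2 (subset_closure h), zero_sub, norm_neg] at h
    rw [norm_pow, ← Real.sq_sqrt (by positivity : 0 ≤ ε / (M + 1))]
    exact pow_le_pow_left₀ (norm_nonneg _) h.le 2
  have hfin : μ (boundaryLayer Ω l) < ⊤ :=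
    (measure_mono (boundaryLayer_subset Ω l)).trans_lt T.isBounded.measure_lt_top
  rw [dist_zero_right, norm_div, Real.norm_of_nonneg hl'.le, div_lt_iff₀ hl']
  calc ‖∫ x in boundaryLayer Ω l, u x ^ 2 ∂μ‖
    _ ≤ ε / (M + 1) * μ.real (boundaryLayer Ω l) := norm_setIntegral_le_of_norm_le_const hfin hpt
    _ ≤ ε / (M + 1) * (Module.finrank ℝ E * (l - 1) * μ.real Ω) := by
        gcongr
        exact T.measureReal_boundaryLayer_le_mul_sub_one hl
    _ = ε * (l - 1) * (M / (M + 1)) := by ring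
    _ < ε * (l - 1) := mul_lt_of_lt_one_right (by positivity) ((div_lt_one (by positivity)).2
        (lt_add_one M))

end Measure

end IsStarShapedAboutBall

end BoundaryCutoff

section Carleman

variable {n : ℕ} {Ω : Set (En n)} {i i₀ : Fin n} {τ c R : ℝ} {u w : En n → ℝ} {x : En n}

/-- The partial derivative of `w` in the direction of the `i`-th basis vector. -/
def pderiv (i : Fin n) (w : En n → ℝ) (x : En n) : ℝ :=
  fderiv ℝ w x (EuclideanSpace.single i 1)

lemma contDiffOn_pderiv (hΩ : IsOpen Ω) (hw : ContDiffOn ℝ 2 w Ω) (i : Fin n) :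
    ContDiffOn ℝ 1 (pderiv i w) Ω :=
  (contDiffOn_one_fderiv hΩ hw).clm_apply contDiffOn_const

lemma hasFDerivAt_pderiv (hΩ : IsOpen Ω) (hw : ContDiffOn ℝ 2 w Ω) (hx : x ∈ Ω) (i : Fin n) :
    HasFDerivAt (pderiv i w) (fderiv ℝ (pderiv i w) x) x :=
  (((contDiffOn_pderiv hΩ hw i).differentiableOn one_ne_zero).differentiableAt
    (hΩ.mem_nhds hx)).hasFDerivAt

lemma pderiv_comm (hΩ : IsOpen Ω) (hw : ContDiffOn ℝ 2 w Ω) (hx : x ∈ Ω) (i j : Fin n) :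
    pderiv i (pderiv j w) x = pderiv j (pderiv i w) x := by
  have hsecond (i j : Fin n) : pderiv i (pderiv j w) x =
      fderiv ℝ (fderiv ℝ w) x (EuclideanSpace.single i 1) (EuclideanSpace.single j 1) := by
    have h : HasFDerivAt (pderiv j w) _ x := (hasFDerivAt_fderiv_of_contDiffOn hΩ hw hx).clm_apply
      (hasFDerivAt_const (EuclideanSpace.single j (1 : ℝ)) x)
    rw [pderiv, h.fderiv]
    simp only [add_apply, ContinuousLinearMap.comp_apply, ContinuousLinearMap.flip_apply,
      zero_apply, map_zero, zero_add]
  rw [hsecond, hsecond]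
  exact ((hw.contDiffAt (hΩ.mem_nhds hx)).isSymmSndFDerivAt (by simp)).eq _ _

lemma pderiv_sq_le (w : En n → ℝ) (x : En n) (i : Fin n) :
    pderiv i w x ^ 2 ≤ ‖fderiv ℝ w x‖ ^ 2 := by
  rw [norm_sq_eq_sum_sq_apply_single]
  exact Finset.single_le_sum (f := fun i => pderiv i w x ^ 2) (fun _ _ => sq_nonneg _)
    (Finset.mem_univ i)

/-- The density whose derivative in the direction `i₀` enters the divergence of `carlemanFlux`. -/
def carlemanDensity (i₀ : Fin n) (τ c : ℝ) (w : En n → ℝ) (x : En n) : ℝ :=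
  2 * (x i₀ * w x ^ 2) + c * (τ ^ 2 / 2 * w x ^ 2 - 1 / 2 * ∑ i, pderiv i w x ^ 2)

/-- The vector field whose divergence controls `w²` in the Carleman inequality with the weight
`exp (τ x_{i₀})`. -/
def carlemanFlux (i₀ : Fin n) (τ c : ℝ) (w : En n → ℝ) (i : Fin n) (x : En n) : ℝ :=
  c * (pderiv i w x * pderiv i₀ w x) + if i = i₀ then carlemanDensity i₀ τ c w x else 0

lemma contDiffOn_carlemanDensity (hΩ : IsOpen Ω) (hw : ContDiffOn ℝ 2 w Ω) :
    ContDiffOn ℝ 1 (carlemanDensity i₀ τ c w) Ω := by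
  have hw₁ : ContDiffOn ℝ 1 w Ω := hw.of_le one_le_two
  have hcoord : ContDiffOn ℝ 1 (fun x : En n => x i₀) Ω :=
    (EuclideanSpace.proj (𝕜 := ℝ) i₀).contDiff.contDiffOn
  exact (contDiffOn_const.mul (hcoord.mul (hw₁.pow 2))).add (contDiffOn_const.mul
    ((contDiffOn_const.mul (hw₁.pow 2)).sub (contDiffOn_const.mul
      (ContDiffOn.sum fun i _ => (contDiffOn_pderiv hΩ hw i).pow 2))))

lemma contDiffOn_carlemanFlux (hΩ : IsOpen Ω) (hw : ContDiffOn ℝ 2 w Ω) (i : Fin n) :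
    ContDiffOn ℝ 1 (carlemanFlux i₀ τ c w i) Ω := by
  refine (contDiffOn_const.mul ((contDiffOn_pderiv hΩ hw i).mul
    (contDiffOn_pderiv hΩ hw i₀))).add ?_
  split_ifs
  · exact contDiffOn_carlemanDensity hΩ hw
  · exact contDiffOn_const

lemma pderiv_carlemanDensity (hΩ : IsOpen Ω) (hw : ContDiffOn ℝ 2 w Ω) (hx : x ∈ Ω) :
    pderiv i₀ (carlemanDensity i₀ τ c w) x =
      2 * (w x ^ 2 + x i₀ * (2 * w x * pderiv i₀ w x)) +
      c * (τ ^ 2 * w x * pderiv i₀ w x - ∑ i, pderiv i w x * pderiv i₀ (pderiv i w) x) := by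
  have hw₁ := hasFDerivAt_of_contDiffOn hΩ hw hx
  have hcoord : HasFDerivAt (fun x : En n => x i₀) (EuclideanSpace.proj i₀ : En n →L[ℝ] ℝ) x :=
    (EuclideanSpace.proj i₀ : En n →L[ℝ] ℝ).hasFDerivAt
  have h : HasFDerivAt (carlemanDensity i₀ τ c w) _ x :=
    ((hcoord.mul (hw₁.pow 2)).const_mul 2).add ((((hw₁.pow 2).const_mul (τ ^ 2 / 2)).sub
      ((HasFDerivAt.fun_sum (u := Finset.univ)
        fun i _ => (hasFDerivAt_pderiv hΩ hw hx i).pow 2).const_mul (1 / 2))).const_mul c)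
  rw [pderiv, h.fderiv]
  simp only [Nat.add_one_sub_one, pow_one, nsmul_eq_mul, Nat.cast_ofNat, smul_add, one_div,
    add_apply, smul_apply, ← pderiv.eq_def, smul_eq_mul, PiLp.proj_apply, PiLp.single_eq_same,
    mul_one, sub_apply, sum_apply, Finset.mul_sum]
  ring_nf

lemma pderiv_carlemanFlux (hΩ : IsOpen Ω) (hw : ContDiffOn ℝ 2 w Ω) (hx : x ∈ Ω) (i : Fin n) :
    pderiv i (carlemanFlux i₀ τ c w i) x =
      c * (pderiv i (pderiv i w) x * pderiv i₀ w x + pderiv i w x * pderiv i₀ (pderiv i w) x) +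
        if i = i₀ then pderiv i₀ (carlemanDensity i₀ τ c w) x else 0 := by
  have hflux : HasFDerivAt
      (fun y => c * (pderiv i w y * pderiv i₀ w y)) _ x :=
    ((hasFDerivAt_pderiv hΩ hw hx i).mul (hasFDerivAt_pderiv hΩ hw hx i₀)).const_mul c
  have hdens : HasFDerivAt
      (fun y => if i = i₀ then carlemanDensity i₀ τ c w y else 0)
      (if i = i₀ then fderiv ℝ (carlemanDensity i₀ τ c w) x else 0) x := by
    split_ifs
    · exact (((contDiffOn_carlemanDensity hΩ hw).differentiableOn one_ne_zero).differentiableAt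
        (hΩ.mem_nhds hx)).hasFDerivAt
    · exact hasFDerivAt_const _ _
  have h : HasFDerivAt (carlemanFlux i₀ τ c w i) _ x := hflux.add hdens
  rw [pderiv_comm hΩ hw hx i₀ i, pderiv, h.fderiv]
  split_ifs with hi
  · simp only [smul_add, add_apply, smul_apply, ← pderiv.eq_def, smul_eq_mul, hi]
    ring
  · simp only [smul_add, add_zero, add_apply, smul_apply, ← pderiv.eq_def, smul_eq_mul]
    ring

/-- The Laplacian conjugated by the weight `exp (τ x_{i₀})`. -/
def conjugatedLap (i₀ : Fin n) (τ : ℝ) (w : En n → ℝ) (x : En n) : ℝ :=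
  lap n w x - 2 * τ * pderiv i₀ w x + τ ^ 2 * w x

lemma sum_pderiv_carlemanFlux (hΩ : IsOpen Ω) (hw : ContDiffOn ℝ 2 w Ω) (hx : x ∈ Ω) :
    ∑ i, pderiv i (carlemanFlux i₀ τ c w i) x =
      2 * (w x ^ 2 + x i₀ * (2 * w x * pderiv i₀ w x)) +
        c * (conjugatedLap i₀ τ w x * pderiv i₀ w x + 2 * τ * pderiv i₀ w x ^ 2) := by
  simp only [pderiv_carlemanFlux hΩ hw hx, Finset.sum_add_distrib, Finset.sum_ite_eq',
    Finset.mem_univ, if_true, ← Finset.mul_sum, ← Finset.sum_mul]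
  rw [pderiv_carlemanDensity hΩ hw hx, conjugatedLap,
    show lap n w x = ∑ i, pderiv i (pderiv i w) x from rfl]
  ring

lemma sq_le_sum_pderiv_carlemanFlux (hΩ : IsOpen Ω) (hw : ContDiffOn ℝ 2 w Ω) (hx : x ∈ Ω)
    (hτ : 0 < τ) (hR : ‖x‖ ≤ R) :
    w x ^ 2 ≤ ∑ i, pderiv i (carlemanFlux i₀ τ (4 * R ^ 2 / τ) w i) x +
      R ^ 2 / τ ^ 2 * conjugatedLap i₀ τ w x ^ 2 := by
  rw [sum_pderiv_carlemanFlux hΩ hw hx]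
  set p := pderiv i₀ w x
  set L := conjugatedLap i₀ τ w x
  have hxR : x i₀ ^ 2 ≤ R ^ 2 :=
    sq_le_sq' (neg_le_of_abs_le ((PiLp.norm_apply_le x i₀).trans hR))
      (le_of_abs_le ((PiLp.norm_apply_le x i₀).trans hR))
  have hsq : 2 * (w x ^ 2 + x i₀ * (2 * w x * p)) + 4 * R ^ 2 / τ * (L * p + 2 * τ * p ^ 2) +
      R ^ 2 / τ ^ 2 * L ^ 2 = w x ^ 2 + (w x + 2 * x i₀ * p) ^ 2 + 4 * (R ^ 2 - x i₀ ^ 2) * p ^ 2 +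
        R ^ 2 * (2 * p + L / τ) ^ 2 := by
    field_simp
    ring
  rw [hsq]
  have := mul_nonneg (sub_nonneg.2 hxR) (sq_nonneg p)
  nlinarith [sq_nonneg (w x + 2 * x i₀ * p), mul_nonneg (sq_nonneg R) (sq_nonneg (2 * p + L / τ))]

lemma abs_carlemanFlux_le (hc : 0 ≤ c) (hR : ‖x‖ ≤ R) (i : Fin n) :
    |carlemanFlux i₀ τ c w i x| ≤ (2 * R + c * (τ ^ 2 + 2)) * (‖fderiv ℝ w x‖ ^ 2 + w x ^ 2) := by
  have hpderiv (j : Fin n) : |pderiv j w x| ≤ ‖fderiv ℝ w x‖ :=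
    abs_le_of_sq_le_sq (pderiv_sq_le w x j) (norm_nonneg _)
  have hR₀ : 0 ≤ R := (norm_nonneg x).trans hR
  have hcoord : |x i₀| ≤ R := (PiLp.norm_apply_le x i₀).trans hR
  have hmain : |c * (pderiv i w x * pderiv i₀ w x)| ≤ c * ‖fderiv ℝ w x‖ ^ 2 := by
    rw [abs_mul, abs_of_nonneg hc, abs_mul, sq]
    gcongr <;> exact hpderiv _
  have hdens : |carlemanDensity i₀ τ c w x| ≤
      2 * R * w x ^ 2 + c * (τ ^ 2 / 2 * w x ^ 2 + 1 / 2 * ‖fderiv ℝ w x‖ ^ 2) := by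
    rw [norm_sq_eq_sum_sq_apply_single]
    refine (abs_add_le _ _).trans (add_le_add ?_ ?_)
    · rw [abs_mul, abs_mul, abs_two, abs_of_nonneg (sq_nonneg (w x)), mul_assoc]
      gcongr
    · rw [abs_mul, abs_of_nonneg hc]
      gcongr
      refine (abs_sub _ _).trans_eq ?_
      rw [abs_of_nonneg (by positivity), abs_of_nonneg (by positivity)]
      rfl
  have hflux : |carlemanFlux i₀ τ c w i x| ≤ c * ‖fderiv ℝ w x‖ ^ 2 + (2 * R * w x ^ 2 +
      c * (τ ^ 2 / 2 * w x ^ 2 + 1 / 2 * ‖fderiv ℝ w x‖ ^ 2)) := by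
    refine (abs_add_le _ _).trans (add_le_add hmain ?_)
    split_ifs
    · exact hdens
    · rw [abs_zero]
      positivity
  refine hflux.trans ?_
  have := mul_nonneg hR₀ (sq_nonneg ‖fderiv ℝ w x‖)
  have := mul_nonneg hc (sq_nonneg ‖fderiv ℝ w x‖)
  have := mul_nonneg hc (sq_nonneg (w x))
  have := mul_nonneg (mul_nonneg hc (sq_nonneg τ)) (sq_nonneg (w x))
  have := mul_nonneg (mul_nonneg hc (sq_nonneg τ)) (sq_nonneg ‖fderiv ℝ w x‖)
  linarith

/-- The function `u` weighted by `exp (τ x_{i₀})`. -/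
def expWeighted (i₀ : Fin n) (τ : ℝ) (u : En n → ℝ) (x : En n) : ℝ :=
  Real.exp (τ * x i₀) * u x

lemma continuous_expWeighted (hu : Continuous u) : Continuous (expWeighted i₀ τ u) :=
  (Real.continuous_exp.comp (by fun_prop)).mul hu

lemma contDiffOn_expWeighted (hu : ContDiffOn ℝ 2 u Ω) :
    ContDiffOn ℝ 2 (expWeighted i₀ τ u) Ω :=
  (contDiff_exp.comp (contDiff_const.mul
    (EuclideanSpace.proj i₀ : En n →L[ℝ] ℝ).contDiff)).contDiffOn.mul hu

lemma hasFDerivAt_expWeighted {u' : En n →L[ℝ] ℝ} (hu : HasFDerivAt u u' x) :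
    HasFDerivAt (expWeighted i₀ τ u)
      (Real.exp (τ * x i₀) • (u' + (τ * u x) • (EuclideanSpace.proj i₀ : En n →L[ℝ] ℝ))) x := by
  have hexp : HasFDerivAt (fun y : En n => Real.exp (τ * y i₀))
      (Real.exp (τ * x i₀) • τ • (EuclideanSpace.proj i₀ : En n →L[ℝ] ℝ)) x :=
    ((EuclideanSpace.proj i₀ : En n →L[ℝ] ℝ).hasFDerivAt.const_mul τ).exp
  refine (hexp.mul hu).congr_fderiv ?_
  module

lemma pderiv_expWeighted (hu : DifferentiableAt ℝ u x) (i : Fin n) :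
    pderiv i (expWeighted i₀ τ u) x =
      expWeighted i₀ τ (fun y => pderiv i u y + (if i = i₀ then τ else 0) * u y) x := by
  rw [pderiv, (hasFDerivAt_expWeighted hu.hasFDerivAt).fderiv, expWeighted]
  rcases eq_or_ne i i₀ with rfl | hi
  · simp only [pderiv, smul_apply, add_apply, smul_eq_mul, PiLp.proj_apply,
      PiLp.single_eq_same, mul_one, if_true]
  · simp only [pderiv, smul_apply, add_apply, smul_eq_mul, PiLp.proj_apply,
      PiLp.single_eq_of_ne' 2 hi, mul_zero, add_zero, if_neg hi, zero_mul]

lemma pderiv_pderiv_expWeighted (hΩ : IsOpen Ω) (hu : ContDiffOn ℝ 2 u Ω) (hx : x ∈ Ω)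
    (i : Fin n) : pderiv i (pderiv i (expWeighted i₀ τ u)) x = Real.exp (τ * x i₀) *
      (pderiv i (pderiv i u) x + if i = i₀ then 2 * τ * pderiv i u x + τ ^ 2 * u x else 0) := by
  have hd (y : En n) (hy : y ∈ Ω) : DifferentiableAt ℝ u y :=
    (hasFDerivAt_of_contDiffOn hΩ hu hy).differentiableAt
  have hcongr : pderiv i (expWeighted i₀ τ u) =ᶠ[𝓝 x]
      expWeighted i₀ τ fun y => pderiv i u y + (if i = i₀ then τ else 0) * u y := by
    filter_upwards [hΩ.mem_nhds hx] with y hy using pderiv_expWeighted (hd y hy) i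
  have hinner : HasFDerivAt (fun y => pderiv i u y + (if i = i₀ then τ else 0) * u y) _ x :=
    (hasFDerivAt_pderiv hΩ hu hx i).add
      ((hd x hx).hasFDerivAt.const_mul (if i = i₀ then τ else 0))
  rw [pderiv, hcongr.fderiv_eq, ← pderiv.eq_def, pderiv_expWeighted hinner.differentiableAt,
    expWeighted, pderiv, hinner.fderiv]
  simp only [add_apply, smul_apply, smul_eq_mul, ← pderiv.eq_def]
  split_ifs <;> ring

lemma conjugatedLap_expWeighted (hΩ : IsOpen Ω) (hu : ContDiffOn ℝ 2 u Ω) (hx : x ∈ Ω) :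
    conjugatedLap i₀ τ (expWeighted i₀ τ u) x = expWeighted i₀ τ (lap n u) x := by
  have hd := (hasFDerivAt_of_contDiffOn hΩ hu hx).differentiableAt
  have hlap (w : En n → ℝ) : lap n w x = ∑ i, pderiv i (pderiv i w) x := rfl
  simp only [conjugatedLap, hlap, pderiv_pderiv_expWeighted hΩ hu hx, pderiv_expWeighted hd,
    expWeighted, if_true, ← Finset.mul_sum, Finset.sum_add_distrib, Finset.sum_ite_eq',
    Finset.mem_univ]
  ring

lemma norm_fderiv_expWeighted_sq_add_sq_le (hu : DifferentiableAt ℝ u x) (hτ : 0 ≤ τ)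
    (hR : ‖x‖ ≤ R) :
    ‖fderiv ℝ (expWeighted i₀ τ u) x‖ ^ 2 + expWeighted i₀ τ u x ^ 2 ≤
      Real.exp (τ * R) ^ 2 * (2 + 2 * τ ^ 2 + 1) * (‖fderiv ℝ u x‖ ^ 2 + u x ^ 2) := by
  have hexp : Real.exp (τ * x i₀) ≤ Real.exp (τ * R) := by
    gcongr
    exact (le_abs_self _).trans ((PiLp.norm_apply_le x i₀).trans hR)
  have hproj : ‖(EuclideanSpace.proj i₀ : En n →L[ℝ] ℝ)‖ ≤ 1 :=
    ContinuousLinearMap.opNorm_le_bound _ zero_le_one fun y => by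
      rw [one_mul]
      exact PiLp.norm_apply_le y i₀
  have hnorm : ‖fderiv ℝ u x + (τ * u x) • (EuclideanSpace.proj i₀ : En n →L[ℝ] ℝ)‖ ≤
      ‖fderiv ℝ u x‖ + τ * |u x| := by
    refine (norm_add_le _ _).trans ?_
    rw [norm_smul, norm_mul, Real.norm_of_nonneg hτ]
    exact add_le_add_right (mul_le_of_le_one_right (by positivity) hproj) _
  rw [(hasFDerivAt_expWeighted hu.hasFDerivAt).fderiv, norm_smul,
    Real.norm_of_nonneg (exp_nonneg _), expWeighted, mul_pow, mul_pow, ← mul_add, mul_assoc]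
  gcongr
  calc ‖fderiv ℝ u x + (τ * u x) • (EuclideanSpace.proj i₀ : En n →L[ℝ] ℝ)‖ ^ 2 + u x ^ 2
    _ ≤ (‖fderiv ℝ u x‖ + τ * |u x|) ^ 2 + u x ^ 2 := by gcongr
    _ ≤ 2 * (‖fderiv ℝ u x‖ ^ 2 + (τ * |u x|) ^ 2) + u x ^ 2 := by gcongr; exact add_sq_le
    _ ≤ (2 + 2 * τ ^ 2 + 1) * (‖fderiv ℝ u x‖ ^ 2 + u x ^ 2) := by
        rw [mul_pow, sq_abs]
        nlinarith [sq_nonneg (u x), mul_nonneg (sq_nonneg τ) (sq_nonneg ‖fderiv ℝ u x‖)]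

lemma integrableOn_expWeighted_sq (hΩ : IsBounded Ω) (hu : Continuous u) :
    IntegrableOn (fun x => expWeighted i₀ τ u x ^ 2) Ω :=
  (((continuous_expWeighted hu).pow 2).continuousOn.integrableOn_compact
    hΩ.isCompact_closure).mono_set subset_closure

namespace IsMixedSolution

variable {s a κ K : ℝ} {f : En n → ℝ}

lemma integrableOn_sq (S : IsMixedSolution Ω s a u f) : IntegrableOn (fun x => u x ^ 2) Ω :=
  ((S.continuous.pow 2).continuousOn.integrableOn_compact
    S.isBounded.isCompact_closure).mono_set subset_closure

lemma tendsto_setIntegral_boundaryLayer_div (S : IsMixedSolution Ω s a u f)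
    (T : IsStarShapedAboutBall Ω κ)
    (h : Tendsto (fun l => layerEnergy Ω u l / (l - 1)) (𝓝[>] 1) (𝓝 0)) (C : ℝ) :
    Tendsto (fun l => (∫ x in boundaryLayer Ω l, C * (‖fderiv ℝ u x‖ ^ 2 + u x ^ 2)) / (l - 1))
      (𝓝[>] 1) (𝓝 0) := by
  have hlim := (h.add (T.tendsto_integral_boundaryLayer_sq_div (μ := volume) S.continuous
    S.eq_zero)).const_mul C
  rw [add_zero, mul_zero] at hlim
  refine hlim.congr fun l => ?_
  rw [integral_const_mul, integral_add
    (S.integrableOn_norm_fderiv_sq.mono_set (boundaryLayer_subset Ω l))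
    (S.integrableOn_sq.mono_set (boundaryLayer_subset Ω l)), ← add_div, mul_div_assoc]
  rfl

theorem carleman (S : IsMixedSolution Ω s 0 u f) (T : IsStarShapedAboutBall Ω κ)
    (h : Tendsto (fun l => layerEnergy Ω u l / (l - 1)) (𝓝[>] 1) (𝓝 0)) (i₀ : Fin n)
    (hτ : 0 < τ) (hR : ∀ x ∈ Ω, ‖x‖ ≤ R) :
    ∫ x in Ω, expWeighted i₀ τ u x ^ 2 ≤
      R ^ 2 / τ ^ 2 * ∫ x in Ω, expWeighted i₀ τ f x ^ 2 := by
  have : Nonempty (Fin n) := ⟨i₀⟩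
  set w := expWeighted i₀ τ u
  have hw : ContDiffOn ℝ 2 w Ω := contDiffOn_expWeighted S.contDiffOn
  have hlap : ∀ x ∈ Ω, conjugatedLap i₀ τ w x ^ 2 = expWeighted i₀ τ f x ^ 2 := fun x hx => by
    have hf := S.equation x hx
    rw [zero_mul, add_zero, neg_eq_iff_eq_neg] at hf
    rw [conjugatedLap_expWeighted S.isOpen S.contDiffOn hx, expWeighted, expWeighted, hf, mul_neg,
      neg_sq]
  have hflux : ∀ i, ∀ x ∈ Ω, |carlemanFlux i₀ τ (4 * R ^ 2 / τ) w i x| ≤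
      (2 * R + 4 * R ^ 2 / τ * (τ ^ 2 + 2)) * (Real.exp (τ * R) ^ 2 * (2 + 2 * τ ^ 2 + 1)) *
        (‖fderiv ℝ u x‖ ^ 2 + u x ^ 2) := fun i x hx => by
    have hR₀ : 0 ≤ R := (norm_nonneg x).trans (hR x hx)
    refine (abs_carlemanFlux_le (by positivity) (hR x hx) i).trans ?_
    rw [mul_assoc]
    gcongr
    exact norm_fderiv_expWeighted_sq_add_sq_le (S.hasFDerivAt hx).differentiableAt hτ.le (hR x hx)
  have hwint : IntegrableOn (fun x => w x ^ 2) Ω :=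
    integrableOn_expWeighted_sq S.isBounded S.continuous
  have hfint : IntegrableOn (fun x => R ^ 2 / τ ^ 2 * expWeighted i₀ τ f x ^ 2) Ω :=
    (integrableOn_expWeighted_sq S.isBounded S.continuous_rhs).const_mul _
  have hnonpos := T.setIntegral_nonpos_of_le_sum_fderiv (contDiffOn_carlemanFlux S.isOpen hw) hflux
    ((S.integrableOn_norm_fderiv_sq.add S.integrableOn_sq).const_mul _)
    (S.tendsto_setIntegral_boundaryLayer_div T h _) (hwint.sub hfint) fun x hx =>
      sub_le_iff_le_add.2 (hlap x hx ▸ sq_le_sum_pderiv_carlemanFlux S.isOpen hw hx hτ (hR x hx))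
  have hsub := integral_sub hwint hfint
  rw [integral_const_mul] at hsub
  exact sub_nonpos.1 (hsub ▸ hnonpos)

end IsMixedSolution

end Carleman

section UniqueContinuation

namespace IsMixedSolution

variable {n : ℕ} {Ω : Set (En n)} {s a s₁ s₂ κ K : ℝ} {u v f g : En n → ℝ}

lemma setIntegral_expWeighted_sq_add_le (S₁ : IsMixedSolution Ω s₁ a u f)
    (S₂ : IsMixedSolution Ω s₂ a v g)
    (h : ∀ x ∈ Ω, f x ^ 2 + g x ^ 2 ≤ K * (u x ^ 2 + v x ^ 2)) (i₀ : Fin n) (τ : ℝ) :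
    (∫ x in Ω, expWeighted i₀ τ f x ^ 2) + ∫ x in Ω, expWeighted i₀ τ g x ^ 2 ≤
      K * ((∫ x in Ω, expWeighted i₀ τ u x ^ 2) + ∫ x in Ω, expWeighted i₀ τ v x ^ 2) := by
  have hint {w : En n → ℝ} (hw : Continuous w) :
      IntegrableOn (fun x => expWeighted i₀ τ w x ^ 2) Ω :=
    integrableOn_expWeighted_sq S₁.isBounded hw
  rw [← integral_add (hint S₁.continuous_rhs) (hint S₂.continuous_rhs),
    ← integral_add (hint S₁.continuous) (hint S₂.continuous), ← integral_const_mul]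
  refine setIntegral_mono_on ((hint S₁.continuous_rhs).add (hint S₂.continuous_rhs))
    (((hint S₁.continuous).add (hint S₂.continuous)).const_mul K) S₁.isOpen.measurableSet
    fun x hx => ?_
  simp only [expWeighted, mul_pow, ← mul_add]
  rw [mul_left_comm]
  exact mul_le_mul_of_nonneg_left (h x hx) (sq_nonneg _)

theorem eqOn_zero_of_sq_add_sq_le (S₁ : IsMixedSolution Ω s₁ 0 u f)
    (S₂ : IsMixedSolution Ω s₂ 0 v g) (T : IsStarShapedAboutBall Ω κ)
    (hu : Tendsto (fun l => layerEnergy Ω u l / (l - 1)) (𝓝[>] 1) (𝓝 0))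
    (hv : Tendsto (fun l => layerEnergy Ω v l / (l - 1)) (𝓝[>] 1) (𝓝 0)) (hK : 0 ≤ K)
    (h : ∀ x ∈ Ω, f x ^ 2 + g x ^ 2 ≤ K * (u x ^ 2 + v x ^ 2)) : EqOn u 0 Ω := by
  obtain ⟨R, hR₀, hR⟩ := T.isBounded.exists_pos_norm_le
  let i₀ : Fin n := ⟨0, S₁.dim_pos⟩
  set τ := 2 * R ^ 2 * K + 1
  have hτ : 1 ≤ τ := le_add_of_nonneg_left (by positivity)
  have hnonneg (w : En n → ℝ) : 0 ≤ ∫ x in Ω, expWeighted i₀ τ w x ^ 2 :=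
    integral_nonneg fun x => sq_nonneg _
  have hhalf : R ^ 2 / τ ^ 2 * K ≤ 1 / 2 := by
    rw [div_mul_eq_mul_div, div_le_iff₀ (by positivity)]
    linarith [le_self_pow₀ hτ two_ne_zero]
  have hzero : ∫ x in Ω, expWeighted i₀ τ u x ^ 2 = 0 := by
    have hcarleman := add_le_add (S₁.carleman T hu i₀ (zero_lt_one.trans_le hτ) hR)
      (S₂.carleman T hv i₀ (zero_lt_one.trans_le hτ) hR)
    have hrhs := mul_le_mul_of_nonneg_left (S₁.setIntegral_expWeighted_sq_add_le S₂ h i₀ τ)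
      (by positivity : 0 ≤ R ^ 2 / τ ^ 2)
    have habsorb := mul_le_mul_of_nonneg_right hhalf (add_nonneg (hnonneg u) (hnonneg v))
    linarith [hnonneg u, hnonneg v]
  rw [setIntegral_eq_zero_iff_of_nonneg_ae (Eventually.of_forall fun x => sq_nonneg _)
    (integrableOn_expWeighted_sq S₁.isBounded S₁.continuous)] at hzero
  intro x hx
  have hsq := Measure.eqOn_open_of_ae_eq hzero S₁.isOpen
    ((continuous_expWeighted S₁.continuous).pow 2).continuousOn continuousOn_const hx
  exact (mul_eq_zero.1 (pow_eq_zero_iff two_ne_zero |>.1 hsq)).resolve_left (Real.exp_pos _).ne'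

end IsMixedSolution

end UniqueContinuation

section Translation

variable {n : ℕ} {Ω : Set (En n)} {s a : ℝ} {u f : En n → ℝ}

lemma lap_comp_add_right (u : En n → ℝ) (z x : En n) :
    lap n (fun y => u (y + z)) x = lap n u (x + z) := by
  simp only [lap, fderiv_comp_add_right]
  exact Finset.sum_congr rfl fun i _ => by
    rw [fderiv_comp_add_right (f := fun y => fderiv ℝ u y (EuclideanSpace.single i 1))]

lemma fracLap_comp_add_right (u : En n → ℝ) (z x : En n) :
    fracLap n s (fun y => u (y + z)) x = fracLap n s u (x + z) := by
  simp only [fracLap, add_right_comm x, sub_add_eq_add_sub]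

lemma IsMixedSolution.comp_add_right (S : IsMixedSolution Ω s a u f) (z : En n) :
    IsMixedSolution {x | x + z ∈ Ω} s a (fun x => u (x + z)) (fun x => f (x + z)) where
  dim_pos := S.dim_pos
  isOpen := S.isOpen.preimage (continuous_add_const z)
  isBounded := (isometry_add_right z).antilipschitz.isBounded_preimage S.isBounded
  contDiffOn := S.contDiffOn.comp (contDiff_id.add contDiff_const).contDiffOn fun x hx => hx
  continuous := S.continuous.comp (continuous_add_const z)
  eq_zero x hx := S.eq_zero _ hx
  continuous_rhs := S.continuous_rhs.comp (continuous_add_const z)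
  exponent_mem := S.exponent_mem
  coeff_nonneg := S.coeff_nonneg
  equation x hx := by
    rw [lap_comp_add_right, fracLap_comp_add_right]
    exact S.equation _ hx

end Translation

section PowerSystem

variable {p q α β l l₁ l₂ δ : ℝ}

/-- The critical Sobolev exponent `2* = 2n/(n - 2)`. -/
def sobolevExponent (n : ℕ) : ℝ := 2 * n / ((n : ℝ) - 2)

lemma two_lt_sobolevExponent {n : ℕ} (hn : 3 ≤ n) : 2 < sobolevExponent n := by
  have : (3 : ℝ) ≤ n := by exact_mod_cast hn
  rw [sobolevExponent, lt_div_iff₀ (by linarith)]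
  linarith

/-- The nonlinearity `l|a|^{p-2}a + δα|a|^{α-2}a|b|^β` of one equation of the system. -/
def powerReaction (p α β l δ a b : ℝ) : ℝ :=
  l * |a| ^ (p - 2) * a + δ * α * |a| ^ (α - 2) * a * |b| ^ β

/-- The potential whose partial derivatives are the two nonlinearities of the system. -/
def powerPotential (p q α β l₁ l₂ δ : ℝ) (z : ℝ × ℝ) : ℝ :=
  l₁ / p * |z.1| ^ p + l₂ / q * |z.2| ^ q + δ * (|z.1| ^ α * |z.2| ^ β)

lemma contDiff_powerPotential (hp : 1 < p) (hq : 1 < q) (hα : 1 < α) (hβ : 1 < β) :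
    ContDiff ℝ 1 (powerPotential p q α β l₁ l₂ δ) := by
  have hfst {r : ℝ} (hr : 1 < r) : ContDiff ℝ 1 fun z : ℝ × ℝ => |z.1| ^ r :=
    (contDiff_norm_rpow (E := ℝ) hr).comp contDiff_fst
  have hsnd {r : ℝ} (hr : 1 < r) : ContDiff ℝ 1 fun z : ℝ × ℝ => |z.2| ^ r :=
    (contDiff_norm_rpow (E := ℝ) hr).comp contDiff_snd
  exact ((contDiff_const.mul (hfst hp)).add (contDiff_const.mul (hsnd hq))).add
    (contDiff_const.mul ((hfst hα).mul (hsnd hβ)))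

lemma fderiv_powerPotential (hp : 1 < p) (hq : 1 < q) (hα : 1 < α) (hβ : 1 < β)
    (a b : ℝ) (h : ℝ × ℝ) : fderiv ℝ (powerPotential p q α β l₁ l₂ δ) (a, b) h =
      powerReaction p α β l₁ δ a b * h.1 + powerReaction q β α l₂ δ b a * h.2 := by
  have hfst {r : ℝ} (hr : 1 < r) : HasFDerivAt (fun z : ℝ × ℝ => |z.1| ^ r)
      ((r * |a| ^ (r - 2) * a) • ContinuousLinearMap.fst ℝ ℝ ℝ) (a, b) :=
    (hasDerivAt_abs_rpow a hr).comp_hasFDerivAt (f := Prod.fst) (a, b) hasFDerivAt_fst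
  have hsnd {r : ℝ} (hr : 1 < r) : HasFDerivAt (fun z : ℝ × ℝ => |z.2| ^ r)
      ((r * |b| ^ (r - 2) * b) • ContinuousLinearMap.snd ℝ ℝ ℝ) (a, b) :=
    (hasDerivAt_abs_rpow b hr).comp_hasFDerivAt (f := Prod.snd) (a, b) hasFDerivAt_snd
  have hF : HasFDerivAt (powerPotential p q α β l₁ l₂ δ) _ (a, b) :=
    (((hfst hp).const_mul (l₁ / p)).add ((hsnd hq).const_mul (l₂ / q))).add
      (((hfst hα).mul (hsnd hβ)).const_mul δ)
  have hp₀ : p ≠ 0 := by positivity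
  have hq₀ : q ≠ 0 := by positivity
  rw [hF.fderiv]
  simp only [powerReaction, add_apply, smul_apply, smul_eq_mul,
    ContinuousLinearMap.coe_fst', ContinuousLinearMap.coe_snd']
  field_simp
  ring

lemma continuous_powerReaction (hp : 1 < p) (hα : 1 < α) (hβ : 1 < β) :
    Continuous fun z : ℝ × ℝ => powerReaction p α β l δ z.1 z.2 := by
  have h := ((contDiff_powerPotential (l₁ := l) (l₂ := 0) (δ := δ) hp hp hα hβ).continuous_fderiv
    one_ne_zero).clm_apply (continuous_const (y := ((1 : ℝ), (0 : ℝ))))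
  exact h.congr fun z => by rw [fderiv_powerPotential hp hp hα hβ, mul_one, mul_zero, add_zero]

lemma abs_rpow_sub_two_mul_mul_self (hp : 1 < p) (t : ℝ) : |t| ^ (p - 2) * t * t = |t| ^ p := by
  rcases eq_or_ne t 0 with rfl | ht
  · rw [mul_zero, abs_zero, Real.zero_rpow (by positivity)]
  · rw [mul_assoc, ← sq, ← sq_abs, ← Real.rpow_natCast, ← Real.rpow_add (abs_pos.2 ht),
      Nat.cast_ofNat, sub_add_cancel]

lemma fderiv_powerPotential_self (hp : 1 < p) (hq : 1 < q) (hα : 1 < α) (hβ : 1 < β) (a b : ℝ) :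
    fderiv ℝ (powerPotential p q α β l₁ l₂ δ) (a, b) (a, b) =
      l₁ * |a| ^ p + l₂ * |b| ^ q + δ * (α + β) * (|a| ^ α * |b| ^ β) := by
  rw [fderiv_powerPotential hp hq hα hβ, ← abs_rpow_sub_two_mul_mul_self hp a,
    ← abs_rpow_sub_two_mul_mul_self hq b, powerReaction, powerReaction]
  linear_combination δ * α * |b| ^ β * abs_rpow_sub_two_mul_mul_self hα a +
    δ * β * |a| ^ α * abs_rpow_sub_two_mul_mul_self hβ b

lemma rpow_le_rpow_sub_one_mul {t m B : ℝ} (ht : 1 ≤ t) (hm : 0 ≤ m) (hmB : m ≤ B) :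
    m ^ t ≤ B ^ (t - 1) * m := by
  rcases hm.eq_or_lt with rfl | hm
  · rw [mul_zero, Real.zero_rpow (by positivity)]
  · calc m ^ t
      _ = m ^ (t - 1) * m := by rw [← Real.rpow_add_one hm.ne', sub_add_cancel]
      _ ≤ B ^ (t - 1) * m := by gcongr

lemma abs_abs_rpow_sub_two_mul (hp : 1 < p) (t : ℝ) : |(|t| ^ (p - 2) * t)| = |t| ^ (p - 1) := by
  rw [abs_mul, abs_of_nonneg (by positivity)]
  rcases eq_or_ne t 0 with rfl | ht
  · rw [abs_zero, mul_zero, Real.zero_rpow (sub_pos.2 hp).ne']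
  · rw [← Real.rpow_add_one (abs_ne_zero.2 ht)]
    congr 1
    ring

lemma powerReaction_zero_right (hβ : 1 < β) (a : ℝ) :
    powerReaction p α β l δ a 0 = l * |a| ^ (p - 2) * a := by
  rw [powerReaction, abs_zero, Real.zero_rpow (by positivity), mul_zero, add_zero]

lemma abs_powerReaction_le {a b m B : ℝ} (hp : 1 < p) (hα : 1 < α) (hβ : 1 < β)
    (hl : l = 0 ∨ 2 ≤ p) (hδ : δ = 0 ∨ 2 ≤ α + β) (ha : |a| ≤ m) (hb : |b| ≤ m) (hB : m ≤ B) :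
    |powerReaction p α β l δ a b| ≤
      (|l| * B ^ (p - 1 - 1) + |δ * α| * B ^ (α - 1 + β - 1)) * m := by
  have hm : 0 ≤ m := (abs_nonneg a).trans ha
  have hpure : |l| * |(|a| ^ (p - 2) * a)| ≤ |l| * (B ^ (p - 1 - 1) * m) := by
    rcases hl with rfl | hl
    · rw [abs_zero, zero_mul, zero_mul]
    · rw [abs_abs_rpow_sub_two_mul hp]
      gcongr
      calc |a| ^ (p - 1)
        _ ≤ m ^ (p - 1) := Real.rpow_le_rpow (abs_nonneg a) ha (by linarith)
        _ ≤ B ^ (p - 1 - 1) * m := rpow_le_rpow_sub_one_mul (by linarith) hm hB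
  have hmixed : |δ * α| * (|(|a| ^ (α - 2) * a)| * |b| ^ β) ≤
      |δ * α| * (B ^ (α - 1 + β - 1) * m) := by
    rcases hδ with rfl | hδ
    · rw [zero_mul, abs_zero, zero_mul, zero_mul]
    · rw [abs_abs_rpow_sub_two_mul hα]
      refine mul_le_mul_of_nonneg_left ?_ (abs_nonneg _)
      calc |a| ^ (α - 1) * |b| ^ β
        _ ≤ m ^ (α - 1) * m ^ β := by gcongr
        _ = m ^ (α - 1 + β) := by rw [Real.rpow_add_of_nonneg hm (by linarith) (by linarith)]
        _ ≤ B ^ (α - 1 + β - 1) * m := rpow_le_rpow_sub_one_mul (by linarith [hδ]) hm hB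
  calc |powerReaction p α β l δ a b|
    _ = |l * (|a| ^ (p - 2) * a) + δ * α * (|a| ^ (α - 2) * a * |b| ^ β)| := by
        rw [powerReaction]
        ring_nf
    _ ≤ |l| * |(|a| ^ (p - 2) * a)| + |δ * α| * (|(|a| ^ (α - 2) * a)| * |b| ^ β) := by
        refine (abs_add_le _ _).trans_eq ?_
        rw [abs_mul l, abs_mul (δ * α), abs_mul _ (|b| ^ β),
          abs_of_nonneg (by positivity : 0 ≤ |b| ^ β)]
    _ ≤ _ := by linarith

lemma exists_powerReaction_sq_le (hp : 1 < p) (hα : 1 < α) (hβ : 1 < β) (hl : l = 0 ∨ 2 ≤ p)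
    (hδ : δ = 0 ∨ 2 ≤ α + β) (B : ℝ) : ∃ C, 0 ≤ C ∧ ∀ a b, |a| ≤ B → |b| ≤ B →
      powerReaction p α β l δ a b ^ 2 ≤ C * (a ^ 2 + b ^ 2) := by
  refine ⟨_, sq_nonneg (|l| * B ^ (p - 1 - 1) + |δ * α| * B ^ (α - 1 + β - 1)),
    fun a b ha hb => ?_⟩
  have hmax : max |a| |b| ^ 2 ≤ a ^ 2 + b ^ 2 := by
    rcases max_choice |a| |b| with h | h <;> rw [h, sq_abs]
    · exact le_add_of_nonneg_right (sq_nonneg b)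
    · exact le_add_of_nonneg_left (sq_nonneg a)
  have h := abs_powerReaction_le hp hα hβ hl hδ (le_max_left |a| |b|) (le_max_right |a| |b|)
    (max_le ha hb)
  rw [← sq_abs (powerReaction _ _ _ _ _ _ _)]
  refine (pow_le_pow_left₀ (abs_nonneg _) h 2).trans ?_
  rw [mul_pow]
  exact mul_le_mul_of_nonneg_left hmax (sq_nonneg _)

end PowerSystem

section System

/-- The pair `(u, v)` solves the coupled system with power nonlinearities in `Ω ⊆ ℝⁿ`, under the
non-strict sign conditions relating the coefficients to the critical exponent. -/
structure IsPowerSystem {n : ℕ} (Ω : Set (En n)) (s₁ a₁ s₂ a₂ p q α β l₁ l₂ δ : ℝ)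
    (u v : En n → ℝ) : Prop where
  three_le : 3 ≤ n
  one_lt_p : 1 < p
  one_lt_q : 1 < q
  one_lt_α : 1 < α
  one_lt_β : 1 < β
  fst : IsMixedSolution Ω s₁ a₁ u (fun x => powerReaction p α β l₁ δ (u x) (v x))
  snd : IsMixedSolution Ω s₂ a₂ v (fun x => powerReaction q β α l₂ δ (v x) (u x))
  fst_nonneg : 0 ≤ l₁ * (p - sobolevExponent n)
  snd_nonneg : 0 ≤ l₂ * (q - sobolevExponent n)
  coupling_nonneg : 0 ≤ δ * (α + β - sobolevExponent n)

lemma eq_zero_of_integral_eq_zero {X : Type*} [TopologicalSpace X] [MeasurableSpace X]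
    [OpensMeasurableSpace X] {μ : Measure X} [IsFiniteMeasureOnCompacts μ] [μ.IsOpenPosMeasure]
    {h : X → ℝ} (hc : Continuous h) (hs : HasCompactSupport h) (h₀ : 0 ≤ h)
    (hi : ∫ x, h x ∂μ = 0) (x : X) : h x = 0 := by
  by_contra hx
  exact (hc.integral_pos_of_hasCompactSupport_nonneg_nonzero hs h₀ hx).ne' hi

lemma eq_zero_or_two_le_of_mul_sub_eq_zero {c r t : ℝ} (ht : 2 < t) (h : c * (r - t) = 0) :
    c = 0 ∨ 2 ≤ r :=
  (mul_eq_zero.1 h).imp_right fun h => ht.le.trans_eq (sub_eq_zero.1 h).symm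

namespace IsPowerSystem

variable {n : ℕ} {Ω : Set (En n)} {s₁ a₁ s₂ a₂ p q α β l₁ l₂ δ κ : ℝ} {u v : En n → ℝ}

lemma swap (S : IsPowerSystem Ω s₁ a₁ s₂ a₂ p q α β l₁ l₂ δ u v) :
    IsPowerSystem Ω s₂ a₂ s₁ a₁ q p β α l₂ l₁ δ v u where
  three_le := S.three_le
  one_lt_p := S.one_lt_q
  one_lt_q := S.one_lt_p
  one_lt_α := S.one_lt_β
  one_lt_β := S.one_lt_α
  fst := S.snd
  snd := S.fst
  fst_nonneg := S.snd_nonneg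
  snd_nonneg := S.fst_nonneg
  coupling_nonneg := add_comm α β ▸ S.coupling_nonneg

lemma comp_add_right (S : IsPowerSystem Ω s₁ a₁ s₂ a₂ p q α β l₁ l₂ δ u v) (z : En n) :
    IsPowerSystem {x | x + z ∈ Ω} s₁ a₁ s₂ a₂ p q α β l₁ l₂ δ (fun x => u (x + z))
      (fun x => v (x + z)) :=
  { S with
    fst := S.fst.comp_add_right z
    snd := S.snd.comp_add_right z }

lemma isGradientSystem (S : IsPowerSystem Ω s₁ a₁ s₂ a₂ p q α β l₁ l₂ δ u v) :
    IsGradientSystem Ω s₁ a₁ s₂ a₂ (powerPotential p q α β l₁ l₂ δ) u v where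
  contDiff := contDiff_powerPotential S.one_lt_p S.one_lt_q S.one_lt_α S.one_lt_β
  map_zero := by
    have hp := S.one_lt_p
    have hq := S.one_lt_q
    have hα := S.one_lt_α
    simp only [powerPotential, Prod.fst_zero, Prod.snd_zero, abs_zero,
      Real.zero_rpow (by positivity : p ≠ 0), Real.zero_rpow (by positivity : q ≠ 0),
      Real.zero_rpow (by positivity : α ≠ 0), mul_zero, zero_mul, add_zero]
  fst := by
    simpa only [fderiv_powerPotential S.one_lt_p S.one_lt_q S.one_lt_α S.one_lt_β, mul_one,
      mul_zero, add_zero] using S.fst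
  snd := by
    simpa only [fderiv_powerPotential S.one_lt_p S.one_lt_q S.one_lt_α S.one_lt_β, mul_one,
      mul_zero, zero_add] using S.snd

lemma hasCompactSupport_abs_rpow (S : IsPowerSystem Ω s₁ a₁ s₂ a₂ p q α β l₁ l₂ δ u v) {r : ℝ}
    (hr : 1 < r) : HasCompactSupport fun x => |u x| ^ r :=
  S.fst.hasCompactSupport.comp_left (g := fun t : ℝ => |t| ^ r) <| by
    rw [abs_zero, Real.zero_rpow (by positivity)]

lemma continuous_abs_rpow (S : IsPowerSystem Ω s₁ a₁ s₂ a₂ p q α β l₁ l₂ δ u v) {r : ℝ}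
    (hr : 1 < r) : Continuous fun x => |u x| ^ r :=
  S.fst.continuous.abs.rpow_const fun _ => Or.inr (by positivity)

lemma pohozaevDefect_eq (S : IsPowerSystem Ω s₁ a₁ s₂ a₂ p q α β l₁ l₂ δ u v) :
    pohozaevDefect (powerPotential p q α β l₁ l₂ δ) u v = -(((n : ℝ) - 2) / 2 *
      (1 / p * (l₁ * (p - sobolevExponent n) * ∫ x, |u x| ^ p) +
        1 / q * (l₂ * (q - sobolevExponent n) * ∫ x, |v x| ^ q) +
        δ * (α + β - sobolevExponent n) * ∫ x, |u x| ^ α * |v x| ^ β)) := by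
  have hp := S.one_lt_p
  have hq := S.one_lt_q
  have hα := S.one_lt_α
  have hβ := S.one_lt_β
  have hu : Integrable fun x => |u x| ^ p :=
    (S.continuous_abs_rpow hp).integrable_of_hasCompactSupport (S.hasCompactSupport_abs_rpow hp)
  have hv : Integrable fun x => |v x| ^ q :=
    (S.swap.continuous_abs_rpow hq).integrable_of_hasCompactSupport
      (S.swap.hasCompactSupport_abs_rpow hq)
  have huv : Integrable fun x => |u x| ^ α * |v x| ^ β :=
    ((S.continuous_abs_rpow hα).mul (S.swap.continuous_abs_rpow hβ)).integrable_of_hasCompactSupport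
      (S.hasCompactSupport_abs_rpow hα).mul_right
  have hsum (c₁ c₂ c₃ : ℝ) :
      ∫ x, (c₁ * |u x| ^ p + c₂ * |v x| ^ q + c₃ * (|u x| ^ α * |v x| ^ β)) =
        c₁ * (∫ x, |u x| ^ p) + c₂ * (∫ x, |v x| ^ q) + c₃ * ∫ x, |u x| ^ α * |v x| ^ β := by
    have h₁₂ : Integrable fun x => c₁ * |u x| ^ p + c₂ * |v x| ^ q :=
      (hu.const_mul c₁).add (hv.const_mul c₂)
    rw [integral_add h₁₂ (huv.const_mul c₃), integral_add (hu.const_mul c₁) (hv.const_mul c₂),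
      integral_const_mul, integral_const_mul, integral_const_mul]
  have hn : (n : ℝ) - 2 ≠ 0 := by
    have : (3 : ℝ) ≤ n := by exact_mod_cast S.three_le
    linarith
  have hp₀ : p ≠ 0 := by positivity
  have hq₀ : q ≠ 0 := by positivity
  simp only [pohozaevDefect, fderiv_powerPotential_self hp hq hα hβ, powerPotential, hsum,
    sobolevExponent]
  field_simp
  ring

/-- Each term of `pohozaevDefect_eq` is nonpositive, while Pohozaev's inequality makes their sum
nonnegative. -/
lemma integral_terms_eq_zero (S : IsPowerSystem Ω s₁ a₁ s₂ a₂ p q α β l₁ l₂ δ u v)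
    (T : IsStarShapedAboutBall Ω κ) :
    l₁ * (p - sobolevExponent n) * (∫ x, |u x| ^ p) = 0 ∧
      l₂ * (q - sobolevExponent n) * (∫ x, |v x| ^ q) = 0 ∧
      δ * (α + β - sobolevExponent n) * (∫ x, |u x| ^ α * |v x| ^ β) = 0 := by
  have hp := S.one_lt_p
  have hq := S.one_lt_q
  have hn : 0 < ((n : ℝ) - 2) / 2 := by
    have : (3 : ℝ) ≤ n := by exact_mod_cast S.three_le
    linarith
  have hU : 0 ≤ l₁ * (p - sobolevExponent n) * ∫ x, |u x| ^ p :=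
    mul_nonneg S.fst_nonneg (integral_nonneg fun x => by positivity)
  have hV : 0 ≤ l₂ * (q - sobolevExponent n) * ∫ x, |v x| ^ q :=
    mul_nonneg S.snd_nonneg (integral_nonneg fun x => by positivity)
  have hM : 0 ≤ δ * (α + β - sobolevExponent n) * ∫ x, |u x| ^ α * |v x| ^ β :=
    mul_nonneg S.coupling_nonneg (integral_nonneg fun x => by positivity)
  have hUp := mul_nonneg (one_div_pos.2 (one_pos.trans hp)).le hU
  have hVq := mul_nonneg (one_div_pos.2 (one_pos.trans hq)).le hV
  have hsum := S.pohozaevDefect_eq ▸ S.isGradientSystem.pohozaevDefect_nonneg T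
  have hle := nonpos_of_mul_nonpos_right (neg_nonneg.1 hsum) hn
  refine ⟨(mul_eq_zero.1 (?_ : 1 / p * _ = 0)).resolve_left (by positivity),
    (mul_eq_zero.1 (?_ : 1 / q * _ = 0)).resolve_left (by positivity), ?_⟩ <;> linarith

lemma pohozaevDefect_eq_zero (S : IsPowerSystem Ω s₁ a₁ s₂ a₂ p q α β l₁ l₂ δ u v)
    (T : IsStarShapedAboutBall Ω κ) :
    pohozaevDefect (powerPotential p q α β l₁ l₂ δ) u v = 0 := by
  obtain ⟨hu, hv, huv⟩ := S.integral_terms_eq_zero T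
  rw [S.pohozaevDefect_eq, hu, hv, huv, mul_zero, mul_zero, add_zero, add_zero, mul_zero, neg_zero]

lemma fst_critical_or_eq_zero (S : IsPowerSystem Ω s₁ a₁ s₂ a₂ p q α β l₁ l₂ δ u v)
    (T : IsStarShapedAboutBall Ω κ) : l₁ * (p - sobolevExponent n) = 0 ∨ u = 0 := by
  refine (mul_eq_zero.1 (S.integral_terms_eq_zero T).1).imp_right fun h => funext fun x => ?_
  have hx := eq_zero_of_integral_eq_zero (S.continuous_abs_rpow S.one_lt_p)
    (S.hasCompactSupport_abs_rpow S.one_lt_p) (fun x => Real.rpow_nonneg (abs_nonneg _) p) h x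
  exact abs_eq_zero.1 ((Real.rpow_eq_zero_iff_of_nonneg (abs_nonneg _)).1 hx).1

lemma coupling_critical_or_eq_zero (S : IsPowerSystem Ω s₁ a₁ s₂ a₂ p q α β l₁ l₂ δ u v)
    (T : IsStarShapedAboutBall Ω κ) (hu : ∀ x ∈ Ω, 0 < u x) :
    δ * (α + β - sobolevExponent n) = 0 ∨ v = 0 := by
  refine (mul_eq_zero.1 (S.integral_terms_eq_zero T).2.2).imp_right fun h => funext fun x => ?_
  by_cases hx : x ∈ Ω
  · have hprod := eq_zero_of_integral_eq_zero
      ((S.continuous_abs_rpow S.one_lt_α).mul (S.swap.continuous_abs_rpow S.one_lt_β))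
      (S.hasCompactSupport_abs_rpow S.one_lt_α).mul_right
      (fun x => mul_nonneg (Real.rpow_nonneg (abs_nonneg _) α) (Real.rpow_nonneg (abs_nonneg _) β))
      h x
    have hux : |u x| ^ α ≠ 0 := (Real.rpow_pos_of_pos (abs_pos.2 (hu x hx).ne') α).ne'
    exact abs_eq_zero.1 ((Real.rpow_eq_zero_iff_of_nonneg (abs_nonneg _)).1
      ((mul_eq_zero.1 hprod).resolve_left hux)).1
  · exact S.snd.eq_zero x hx

lemma fst_coeff_eq_zero (S : IsPowerSystem Ω s₁ a₁ s₂ a₂ p q α β l₁ l₂ δ u v)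
    (T : IsStarShapedAboutBall Ω κ) (hu : u ≠ 0) : a₁ = 0 := by
  refine S.fst.coeff_nonneg.eq_or_lt.elim Eq.symm fun ha => ?_
  have hlim := (S.isGradientSystem.tendsto_dilationEnergy_div T (S.pohozaevDefect_eq_zero T)).1
  exact absurd (S.fst.eq_zero_of_fracForm_eq_zero ha (S.fst.fracForm_eq_zero_of_tendsto hlim)) hu

lemma tendsto_layerEnergy_fst (S : IsPowerSystem Ω s₁ a₁ s₂ a₂ p q α β l₁ l₂ δ u v)
    (T : IsStarShapedAboutBall Ω κ) :
    Tendsto (fun l => layerEnergy Ω u l / (l - 1)) (𝓝[>] 1) (𝓝 0) :=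
  S.fst.tendsto_layerEnergy_div
    (S.isGradientSystem.tendsto_dilationEnergy_div T (S.pohozaevDefect_eq_zero T)).1

lemma exists_rhs_sq_le (S : IsPowerSystem Ω s₁ a₁ s₂ a₂ p q α β l₁ l₂ δ u v)
    (T : IsStarShapedAboutBall Ω κ) (hu : u ≠ 0)
    (hδ : δ * (α + β - sobolevExponent n) = 0 ∨ v = 0) :
    ∃ C, 0 ≤ C ∧ ∀ x, powerReaction p α β l₁ δ (u x) (v x) ^ 2 ≤ C * (u x ^ 2 + v x ^ 2) := by
  have hcrit := two_lt_sobolevExponent S.three_le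
  have hl := eq_zero_or_two_le_of_mul_sub_eq_zero hcrit
    ((S.fst_critical_or_eq_zero T).resolve_right hu)
  obtain ⟨B₁, hB₁⟩ := S.fst.hasCompactSupport.exists_bound_of_continuous S.fst.continuous
  obtain ⟨B₂, hB₂⟩ := S.snd.hasCompactSupport.exists_bound_of_continuous S.snd.continuous
  have hbound (ε : ℝ) (hε : ε = 0 ∨ 2 ≤ α + β) : ∃ C, 0 ≤ C ∧ ∀ x,
      powerReaction p α β l₁ ε (u x) (v x) ^ 2 ≤ C * (u x ^ 2 + v x ^ 2) := by
    obtain ⟨C, hC, h⟩ := exists_powerReaction_sq_le S.one_lt_p S.one_lt_α S.one_lt_β hl hε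
      (max B₁ B₂)
    exact ⟨C, hC, fun x =>
      h _ _ ((hB₁ x).trans (le_max_left _ _)) ((hB₂ x).trans (le_max_right _ _))⟩
  rcases hδ with hδ | rfl
  · exact hbound δ (eq_zero_or_two_le_of_mul_sub_eq_zero hcrit hδ)
  · simpa only [Pi.zero_apply, powerReaction_zero_right S.one_lt_β] using hbound 0 (Or.inl rfl)

theorem not_forall_pos (S : IsPowerSystem Ω s₁ a₁ s₂ a₂ p q α β l₁ l₂ δ u v)
    (T : IsStarShapedAboutBall Ω κ) (hΩ : Ω.Nonempty) : ¬ ∀ x ∈ Ω, 0 < u x := by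
  intro hpos
  obtain ⟨x₀, hx₀⟩ := hΩ
  suffices h : EqOn u 0 Ω from (hpos x₀ hx₀).ne' (h hx₀)
  have hu : u ≠ 0 := fun h => (hpos x₀ hx₀).ne' (congrFun h x₀)
  obtain rfl := S.fst_coeff_eq_zero T hu
  have hδ := S.coupling_critical_or_eq_zero T hpos
  have hlayer := S.tendsto_layerEnergy_fst T
  obtain ⟨C₁, hC₁, h₁⟩ := S.exists_rhs_sq_le T hu hδ
  by_cases hv : v = 0
  · refine S.fst.eqOn_zero_of_sq_add_sq_le S.fst T hlayer hlayer hC₁ fun x _ => ?_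
    have hx := h₁ x
    rw [hv, Pi.zero_apply, zero_pow two_ne_zero, add_zero] at hx
    rw [hv, Pi.zero_apply, mul_add]
    exact add_le_add hx hx
  · obtain rfl := S.swap.fst_coeff_eq_zero T hv
    obtain ⟨C₂, hC₂, h₂⟩ := S.swap.exists_rhs_sq_le T hv
      (Or.inl (add_comm α β ▸ hδ.resolve_right hv))
    refine S.fst.eqOn_zero_of_sq_add_sq_le S.snd T hlayer (S.swap.tendsto_layerEnergy_fst T)
      (add_nonneg hC₁ hC₂) fun x _ => ?_
    linarith [h₁ x, h₂ x]

end IsPowerSystem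

end System

theorem nonexistence_system_starshaped_general {n : ℕ} {Ω : Set (En n)}
    {s₁ a₁ s₂ a₂ p q α β l₁ l₂ δ κ : ℝ} {u v : En n → ℝ} {z : En n}
    (S : IsPowerSystem Ω s₁ a₁ s₂ a₂ p q α β l₁ l₂ δ u v) (hΩ : Ω.Nonempty)
    (T : IsStarShapedAboutBall {x | x + z ∈ Ω} κ) :
    (0 < l₁ * (p - sobolevExponent n) → ∀ x, u x = 0) ∧
      (0 < l₂ * (q - sobolevExponent n) → ∀ x, v x = 0) ∧
      ¬ (∀ x ∈ Ω, 0 < u x) ∧ ¬ ∀ x ∈ Ω, 0 < v x := by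
  have Sz := S.comp_add_right z
  have hne : {x | x + z ∈ Ω}.Nonempty := hΩ.preimage (add_right_surjective z)
  refine ⟨fun h x => ?_, fun h x => ?_, fun hpos => ?_, fun hpos => ?_⟩
  · simpa using congrFun ((Sz.fst_critical_or_eq_zero T).resolve_left h.ne') (x - z)
  · simpa using congrFun ((Sz.swap.fst_critical_or_eq_zero T).resolve_left h.ne') (x - z)
  · exact Sz.not_forall_pos T hne fun x hx => hpos _ hx
  · exact Sz.swap.not_forall_pos T hne fun x hx => hpos _ hx

/-- Corollary 1.4, nonexistence for systems in star-shaped domains: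
for the coupled system with power nonlinearities in a bounded strictly star-shaped C²
domain, under the sign conditions `δ[(α+β)-2*] ≥ 0`, `λ₁(p-2*) ≥ 0`, `λ₂(q-2*) ≥ 0`:
if the last two are strict then `u ≡ 0 ≡ v` in `ℝⁿ`; moreover neither `u` nor `v` can
be strictly positive in `Ω`. -/
theorem nonexistence_system_starshaped (n : ℕ) (hn : 3 ≤ n) (s₁ s₂ a₁ a₂ : ℝ)
    (hs₁ : s₁ ∈ Set.Ioo (0:ℝ) 1) (hs₂ : s₂ ∈ Set.Ioo (0:ℝ) 1)
    (ha₁ : 0 ≤ a₁) (ha₂ : 0 ≤ a₂)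
    (D : C2Domain n) (hD : D.StrictlyStarShaped)
    (α β p q lam₁ lam₂ δ : ℝ)
    (hα : 1 < α) (hβ : 1 < β) (hp : 1 < p) (hq : 1 < q)
    (u v : En n → ℝ)
    (hu2 : ContDiffOn ℝ 2 u D.carrier) (huc : Continuous u)
    (hv2 : ContDiffOn ℝ 2 v D.carrier) (hvc : Continuous v)
    (hequ : ∀ x ∈ D.carrier, -lap n u x + a₁ * fracLap n s₁ u x
      = lam₁ * |u x| ^ (p - 2) * u x + δ * α * |u x| ^ (α - 2) * u x * |v x| ^ β)
    (heqv : ∀ x ∈ D.carrier, -lap n v x + a₂ * fracLap n s₂ v x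
      = lam₂ * |v x| ^ (q - 2) * v x + δ * β * |u x| ^ α * |v x| ^ (β - 2) * v x)
    (hzu : ∀ x ∉ D.carrier, u x = 0) (hzv : ∀ x ∉ D.carrier, v x = 0)
    (h1 : 0 ≤ δ * ((α + β) - 2 * n / ((n : ℝ) - 2)))
    (h2 : 0 ≤ lam₁ * (p - 2 * n / ((n : ℝ) - 2)))
    (h3 : 0 ≤ lam₂ * (q - 2 * n / ((n : ℝ) - 2))) :
    (0 < lam₁ * (p - 2 * n / ((n : ℝ) - 2)) →
      0 < lam₂ * (q - 2 * n / ((n : ℝ) - 2)) →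
      (∀ x, u x = 0) ∧ (∀ x, v x = 0)) ∧
    ¬ (∀ x ∈ D.carrier, 0 < u x) ∧ ¬ (∀ x ∈ D.carrier, 0 < v x) := by
  obtain ⟨z, hz⟩ := hD
  obtain ⟨κ, T⟩ := D.exists_isStarShapedAboutBall hz
  have S : IsPowerSystem D.carrier s₁ a₁ s₂ a₂ p q α β lam₁ lam₂ δ u v :=
    { three_le := hn, one_lt_p := hp, one_lt_q := hq, one_lt_α := hα, one_lt_β := hβ
      fst := ⟨by lia, D.isOpen, D.bounded, hu2, huc, hzu,
        (continuous_powerReaction hp hα hβ).comp (huc.prodMk hvc), hs₁, ha₁, hequ⟩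
      snd := ⟨by lia, D.isOpen, D.bounded, hv2, hvc, hzv,
        (continuous_powerReaction hq hβ hα).comp (hvc.prodMk huc), hs₂, ha₂, fun x hx =>
          (heqv x hx).trans (by rw [powerReaction]; ring)⟩
      fst_nonneg := h2, snd_nonneg := h3, coupling_nonneg := h1 }
  obtain ⟨hu, hv, hpos⟩ := nonexistence_system_starshaped_general S ⟨z, hz.1⟩ T
  exact ⟨fun h2' h3' => ⟨hu h2', hv h3'⟩, hpos⟩
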